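/- Weak computability implies online computability: every partial function f :⊆ ℝⁿ → ℝᵐ that belongs to AWP also belongs to AOP. -/

import Mathlib

noncomputable section

/-- Evaluation of a vector of multivariate polynomials at a point. -/
def pEval {d e : ℕ} (p : Fin e → MvPolynomial (Fin d) ℝ) (x : Fin d → ℝ) : Fin e → ℝ :=
  fun i => MvPolynomial.eval x (p i)

/-- Length of the solution curve of the PIVP `y' = p(y)` on `[0, t]`
(the sup norm of the derivative is integrated). -/
def pLen {d : ℕ} (p : Fin d → MvPolynomial (Fin d) ℝ) (y : ℝ → Fin d → ℝ) (t : ℝ) : ℝ :=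
  ∫ s in (0:ℝ)..t, ‖pEval p (y s)‖

/-- `Ω : ℝ₊² → ℝ₊` is a polynomial function. -/
def IsPolyFun2 (Ω : ℝ → ℝ → ℝ) : Prop :=
  (∃ P : MvPolynomial (Fin 2) ℝ, ∀ a b : ℝ, Ω a b = MvPolynomial.eval ![a, b] P) ∧
  ∀ a b : ℝ, 0 ≤ a → 0 ≤ b → 0 ≤ Ω a b

/-- The class `AP` of polynomial-length computable partial functions `f :⊆ ℝⁿ → ℝᵐ`
(`dom` is the domain of `f`). -/
def AP {n m : ℕ} (dom : Set (Fin n → ℝ)) (f : (Fin n → ℝ) → (Fin m → ℝ)) : Prop :=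
  ∃ (d : ℕ) (hd : m ≤ d) (p : Fin d → MvPolynomial (Fin d) ℝ)
    (q : Fin d → MvPolynomial (Fin n) ℝ) (Ω : ℝ → ℝ → ℝ),
    IsPolyFun2 Ω ∧
    ∀ x ∈ dom, ∃ y : ℝ → Fin d → ℝ,
      (y 0 = fun i => MvPolynomial.eval x (q i)) ∧
      (∀ t : ℝ, 0 ≤ t → HasDerivAt y (pEval p (y t)) t) ∧
      (∀ t : ℝ, 0 ≤ t → ∀ μ : ℝ, 0 ≤ μ → Ω ‖x‖ μ ≤ pLen p y t →
        ‖(fun i : Fin m => y t (Fin.castLE hd i)) - f x‖ ≤ Real.exp (-μ)) ∧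
      (∀ t : ℝ, 0 ≤ t → t ≤ pLen p y t)

/-- `Υ : ℝ₊³ → ℝ₊` is a polynomial function. -/
def IsPolyFun3 (Υ : ℝ → ℝ → ℝ → ℝ) : Prop :=
  (∃ P : MvPolynomial (Fin 3) ℝ, ∀ a b c : ℝ, Υ a b c = MvPolynomial.eval ![a, b, c] P) ∧
  ∀ a b c : ℝ, 0 ≤ a → 0 ≤ b → 0 ≤ c → 0 ≤ Υ a b c

/-- The class `AWP` of weakly computable partial functions `f :⊆ ℝⁿ → ℝᵐ`. -/
def AWP {n m : ℕ} (dom : Set (Fin n → ℝ)) (f : (Fin n → ℝ) → (Fin m → ℝ)) : Prop :=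
  ∃ (Ω : ℝ → ℝ → ℝ) (Υ : ℝ → ℝ → ℝ → ℝ), IsPolyFun2 Ω ∧ IsPolyFun3 Υ ∧
  ∃ (d : ℕ) (hd : m ≤ d) (p : Fin d → MvPolynomial (Fin d) ℝ)
    (q : Fin d → MvPolynomial (Fin (n + 1)) ℝ),
    ∀ x ∈ dom, ∀ μ : ℝ, 0 ≤ μ → ∃ y : ℝ → Fin d → ℝ,
      (y 0 = fun i => MvPolynomial.eval (Fin.snoc x μ) (q i)) ∧
      (∀ t : ℝ, 0 ≤ t → HasDerivAt y (pEval p (y t)) t) ∧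
      (∀ t : ℝ, 0 ≤ t → Ω ‖x‖ μ ≤ t →
        ‖(fun i : Fin m => y t (Fin.castLE hd i)) - f x‖ ≤ Real.exp (-μ)) ∧
      (∀ t : ℝ, 0 ≤ t → ‖y t‖ ≤ Υ ‖x‖ μ t)

/-- The class `AOP` of online computable partial functions `f :⊆ ℝⁿ → ℝᵐ`. -/
def AOP {n m : ℕ} (dom : Set (Fin n → ℝ)) (f : (Fin n → ℝ) → (Fin m → ℝ)) : Prop :=
  ∃ (Υ Ω Λ : ℝ → ℝ → ℝ), IsPolyFun2 Υ ∧ IsPolyFun2 Ω ∧ IsPolyFun2 Λ ∧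
  ∃ (δ : ℝ) (hδ : 0 ≤ δ) (d : ℕ) (hd : m ≤ d)
    (p : Fin d → MvPolynomial (Fin (d + n)) ℝ) (y₀ : Fin d → ℝ),
    ∀ x : ℝ → Fin n → ℝ, ContinuousOn x (Set.Ici (0 : ℝ)) →
      ∃ y : ℝ → Fin d → ℝ,
        (y 0 = y₀) ∧
        (∀ t : ℝ, 0 ≤ t →
          HasDerivAt y (fun i => MvPolynomial.eval (Fin.append (y t) (x t)) (p i)) t) ∧
        (∀ t : ℝ, 0 ≤ t →
          ‖y t‖ ≤ Υ (sSup ((fun u => ‖x u‖) '' Set.Icc (max 0 (t - δ)) t)) t) ∧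
        (∀ a b : ℝ, 0 ≤ a → a ≤ b → ∀ xbar ∈ dom, ∀ μbar : ℝ, 0 ≤ μbar →
          (∀ t ∈ Set.Icc a b, ‖x t - xbar‖ ≤ Real.exp (-(Λ ‖xbar‖ μbar))) →
          ∀ u : ℝ, a + Ω ‖xbar‖ μbar ≤ u → u ≤ b →
            ‖(fun i : Fin m => y u (Fin.castLE hd i)) - f xbar‖ ≤ Real.exp (-μbar))

/-!
The online system works in cycles of constant length in `t ^ 2`. In each cycle it resets, then
simulates the weak computation on the current (smoothed) input and precision, sped up by a
polynomial bound on the time needed, and finally compares the result with a memory. A bistable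
variable records the sign of the memory error, and the memory moves in this direction by an amount
proportional to the target accuracy `u(t) = 1 / (1 + exp L(t))`.

The sign of `L` alternates within each time unit. While `L ≤ 0`, `u` is at least `1 / 2` and the
memory travels to the new value if the input has changed; there are enough cycles for this because
their number per time unit grows like `t`. Then `u` drops geometrically from cycle to cycle and
drags the memory error along. Eventually the requested precision exceeds what the accuracy of the
input supports and the simulations become meaningless, but by then the memory can only move by a
multiple of `u`, so it stays accurate until the output samples it.

All switches are analytic, hence never fully closed, but their leaks are of order `exp (-t ^ 2)`.
The simulated state is stored as an offset from its initial value, so that every state variable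
starts at `0`, and its speed vanishes on a sphere of radius about `t`. The state thus grows at
most linearly whatever the input does.
-/

open Set Filter Topology

namespace OnlineSimulation

section Calculus

variable {E : Type*} [NormedAddCommGroup E] [NormedSpace ℝ E]

/-- `y` is a primitive of `y'` on `[a, b]`: continuous on the closed interval, with derivative `y'`
on the open one. Solutions of differential equations are recorded in this form, with `y'` the
right-hand side along the solution. -/
structure IsPrimitiveOn (y y' : ℝ → E) (a b : ℝ) : Prop where
  continuousOn : ContinuousOn y (Icc a b)
  hasDerivAt : ∀ t ∈ Ioo a b, HasDerivAt y (y' t) t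

namespace IsPrimitiveOn

variable {y y' z z' : ℝ → E} {a b : ℝ}

lemma of_hasDerivAt (hy : ∀ t ∈ Icc a b, HasDerivAt y (y' t) t) : IsPrimitiveOn y y' a b where
  continuousOn t ht := (hy t ht).continuousAt.continuousWithinAt
  hasDerivAt t ht := hy t (Ioo_subset_Icc_self ht)

lemma mono (hy : IsPrimitiveOn y y' a b) {c d : ℝ} (hac : a ≤ c) (hdb : d ≤ b) :
    IsPrimitiveOn y y' c d where
  continuousOn := hy.continuousOn.mono (Icc_subset_Icc hac hdb)
  hasDerivAt t ht := hy.hasDerivAt t (Ioo_subset_Ioo hac hdb ht)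

lemma congr_deriv (hy : IsPrimitiveOn y y' a b) (h : ∀ t ∈ Ioo a b, y' t = z' t) :
    IsPrimitiveOn y z' a b where
  continuousOn := hy.continuousOn
  hasDerivAt t ht := h t ht ▸ hy.hasDerivAt t ht

lemma const (c : E) : IsPrimitiveOn (fun _ ↦ c) (fun _ ↦ 0) a b :=
  of_hasDerivAt fun t _ ↦ hasDerivAt_const t c

lemma neg (hy : IsPrimitiveOn y y' a b) : IsPrimitiveOn (fun t ↦ -y t) (fun t ↦ -y' t) a b where
  continuousOn := hy.continuousOn.neg
  hasDerivAt t ht := (hy.hasDerivAt t ht).neg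

lemma add (hy : IsPrimitiveOn y y' a b) (hz : IsPrimitiveOn z z' a b) :
    IsPrimitiveOn (fun t ↦ y t + z t) (fun t ↦ y' t + z' t) a b where
  continuousOn := hy.continuousOn.add hz.continuousOn
  hasDerivAt t ht := (hy.hasDerivAt t ht).add (hz.hasDerivAt t ht)

lemma sub (hy : IsPrimitiveOn y y' a b) (hz : IsPrimitiveOn z z' a b) :
    IsPrimitiveOn (fun t ↦ y t - z t) (fun t ↦ y' t - z' t) a b where
  continuousOn := hy.continuousOn.sub hz.continuousOn
  hasDerivAt t ht := (hy.hasDerivAt t ht).sub (hz.hasDerivAt t ht)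

lemma sum {ι : Type*} [Fintype ι] {y y' : ι → ℝ → E} (hy : ∀ i, IsPrimitiveOn (y i) (y' i) a b) :
    IsPrimitiveOn (fun t ↦ ∑ i, y i t) (fun t ↦ ∑ i, y' i t) a b where
  continuousOn := continuousOn_finsetSum _ fun i _ ↦ (hy i).continuousOn
  hasDerivAt t ht := HasDerivAt.fun_sum fun i _ ↦ (hy i).hasDerivAt t ht

lemma const_add (hy : IsPrimitiveOn y y' a b) (c : E) :
    IsPrimitiveOn (fun t ↦ c + y t) y' a b where
  continuousOn := hy.continuousOn.const_add c
  hasDerivAt t ht := (hy.hasDerivAt t ht).const_add c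

lemma apply {ι : Type*} [Fintype ι] {y y' : ℝ → ι → ℝ} (hy : IsPrimitiveOn y y' a b) (i : ι) :
    IsPrimitiveOn (fun t ↦ y t i) (fun t ↦ y' t i) a b where
  continuousOn := (continuous_apply i).comp_continuousOn hy.continuousOn
  hasDerivAt t ht := hasDerivAt_pi.1 (hy.hasDerivAt t ht) i

lemma pi {ι : Type*} [Fintype ι] {y y' : ℝ → ι → ℝ}
    (hy : ∀ i, IsPrimitiveOn (fun t ↦ y t i) (fun t ↦ y' t i) a b) : IsPrimitiveOn y y' a b where
  continuousOn := continuousOn_pi.2 fun i ↦ (hy i).continuousOn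
  hasDerivAt t ht := hasDerivAt_pi.2 fun i ↦ (hy i).hasDerivAt t ht

end IsPrimitiveOn

lemma isPrimitiveOn_integral [CompleteSpace E] {a b : ℝ} (hab : a ≤ b) {h : ℝ → E}
    (hh : ContinuousOn h (Icc a b)) : IsPrimitiveOn (fun t ↦ ∫ s in a..t, h s) h a b where
  continuousOn := by
    have hI := (hh.mono (uIcc_of_le hab).subset).intervalIntegrable (μ := MeasureTheory.volume)
    simpa only [uIcc_of_le hab] using
      intervalIntegral.continuousOn_primitive_interval' hI left_mem_uIcc
  hasDerivAt t ht := by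
    refine intervalIntegral.integral_hasDerivAt_right ?_ ?_
      (hh.continuousAt (Icc_mem_nhds ht.1 ht.2))
    · exact (hh.mono (by rw [uIcc_of_le ht.1.le]; exact Icc_subset_Icc_right ht.2.le)
        ).intervalIntegrable
    · exact (hh.mono Ioo_subset_Icc_self).stronglyMeasurableAtFilter isOpen_Ioo t ht

namespace IsPrimitiveOn

variable {y y' z z' h P : ℝ → ℝ} {a b : ℝ}

lemma mul (hy : IsPrimitiveOn y y' a b) (hz : IsPrimitiveOn z z' a b) :
    IsPrimitiveOn (fun t ↦ y t * z t) (fun t ↦ y' t * z t + y t * z' t) a b where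
  continuousOn := hy.continuousOn.mul hz.continuousOn
  hasDerivAt t ht := (hy.hasDerivAt t ht).mul (hz.hasDerivAt t ht)

lemma exp (hy : IsPrimitiveOn y y' a b) :
    IsPrimitiveOn (fun t ↦ Real.exp (y t)) (fun t ↦ Real.exp (y t) * y' t) a b where
  continuousOn := hy.continuousOn.rexp
  hasDerivAt t ht := (hy.hasDerivAt t ht).exp

lemma sub_le_sub (hab : a ≤ b) (hy : IsPrimitiveOn y y' a b) (hz : IsPrimitiveOn z z' a b)
    (hle : ∀ t ∈ Ioo a b, y' t ≤ z' t) : y b - y a ≤ z b - z a := by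
  have hmono : MonotoneOn (fun t ↦ z t - y t) (Icc a b) := by
    refine monotoneOn_of_hasDerivWithinAt_nonneg (f' := fun t ↦ z' t - y' t) (convex_Icc a b)
      (hz.sub hy).continuousOn (fun t ht ↦ ?_) fun t ht ↦ ?_ <;> rw [interior_Icc] at ht
    · exact ((hz.sub hy).hasDerivAt t ht).hasDerivWithinAt
    · exact sub_nonneg.2 (hle t ht)
  have := hmono (left_mem_Icc.2 hab) (right_mem_Icc.2 hab) hab
  simp only at this
  linarith

lemma sub_le_mul_sub (hab : a ≤ b) (hy : IsPrimitiveOn y y' a b) {c : ℝ}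
    (hle : ∀ t ∈ Ioo a b, y' t ≤ c) : y b - y a ≤ c * (b - a) := by
  have hlin : IsPrimitiveOn (fun t ↦ c * t) (fun _ ↦ c) a b :=
    of_hasDerivAt fun t _ ↦ by simpa using (hasDerivAt_id t).const_mul c
  linarith [hy.sub_le_sub hab hlin hle]

lemma mul_sub_le_sub (hab : a ≤ b) (hy : IsPrimitiveOn y y' a b) {c : ℝ}
    (hle : ∀ t ∈ Ioo a b, c ≤ y' t) : c * (b - a) ≤ y b - y a := by
  linarith [hy.neg.sub_le_mul_sub hab (c := -c) fun t ht ↦ neg_le_neg (hle t ht)]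

lemma abs_sub_le_mul_sub (hab : a ≤ b) (hy : IsPrimitiveOn y y' a b) {c : ℝ}
    (hle : ∀ t ∈ Ioo a b, |y' t| ≤ c) : |y b - y a| ≤ c * (b - a) := by
  rw [abs_le]
  constructor
  · linarith [hy.mul_sub_le_sub hab fun t ht ↦ (abs_le.1 (hle t ht)).1]
  · exact hy.sub_le_mul_sub hab fun t ht ↦ (abs_le.1 (hle t ht)).2

lemma nonneg_of_deriv_nonneg_of_neg (hab : a ≤ b) (hy : IsPrimitiveOn y y' a b) (ha : 0 ≤ y a)
    (hle : ∀ t ∈ Ioo a b, y t < 0 → 0 ≤ y' t) : 0 ≤ y b := by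
  by_contra! hb
  have hcompact : IsCompact (Icc a b ∩ y ⁻¹' Ici 0) :=
    isCompact_Icc.of_isClosed_subset
      (hy.continuousOn.preimage_isClosed_of_isClosed isClosed_Icc isClosed_Ici) inter_subset_left
  obtain ⟨r, ⟨hr, hyr⟩, hgreatest⟩ := hcompact.exists_isGreatest ⟨a, left_mem_Icc.2 hab, ha⟩
  have hneg : ∀ t ∈ Ioo r b, y t < 0 := fun t ht ↦ by
    by_contra! hyt
    exact (hgreatest ⟨⟨hr.1.trans ht.1.le, ht.2.le⟩, hyt⟩).not_gt ht.1
  have hsub := (hy.mono hr.1 le_rfl).mul_sub_le_sub hr.2 (c := 0) fun t ht ↦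
    hle t ⟨hr.1.trans_lt ht.1, ht.2⟩ (hneg t ht)
  have hyr' : 0 ≤ y r := hyr
  linarith

lemma le_mul_exp (hab : a ≤ b) (hy : IsPrimitiveOn y y' a b) (hP : IsPrimitiveOn P h a b)
    (hle : ∀ t ∈ Ioo a b, y' t ≤ h t * y t) : y b ≤ y a * Real.exp (P b - P a) := by
  have hdecr : y b * Real.exp (-P b) ≤ y a * Real.exp (-P a) := by
    have := (hy.mul hP.neg.exp).sub_le_mul_sub hab (c := 0) fun t ht ↦ by
      nlinarith [hle t ht, Real.exp_pos (-P t)]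
    linarith
  calc y b = y b * Real.exp (-P b) * Real.exp (P b) := by rw [mul_assoc, ← Real.exp_add]; simp
    _ ≤ y a * Real.exp (-P a) * Real.exp (P b) := by gcongr
    _ = y a * Real.exp (P b - P a) := by rw [mul_assoc, ← Real.exp_add]; ring_nf

lemma mul_exp_le (hab : a ≤ b) (hy : IsPrimitiveOn y y' a b) (hP : IsPrimitiveOn P h a b)
    (hle : ∀ t ∈ Ioo a b, h t * y t ≤ y' t) : y a * Real.exp (P b - P a) ≤ y b := by
  have := hy.neg.le_mul_exp hab hP fun t ht ↦ by linarith [hle t ht]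
  linarith

lemma nonneg_of_mul_le (hab : a ≤ b) (hy : IsPrimitiveOn y y' a b) (hh : ContinuousOn h (Icc a b))
    (hle : ∀ t ∈ Ioo a b, h t * y t ≤ y' t) (ha : 0 ≤ y a) : 0 ≤ y b :=
  (mul_nonneg ha (Real.exp_pos _).le).trans
    (hy.mul_exp_le hab (isPrimitiveOn_integral hab hh) hle)

lemma le_mul_exp_add (hab : a ≤ b) {k : ℝ → ℝ} {l : ℝ} (hy : IsPrimitiveOn y y' a b)
    (hP : IsPrimitiveOn P k a b) (hk : ∀ t ∈ Ioo a b, 0 ≤ k t) (hl : 0 ≤ l)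
    (hle : ∀ t ∈ Ioo a b, y' t + k t * y t ≤ l) :
    y b ≤ y a * Real.exp (-(P b - P a)) + l * (b - a) := by
  have hlin : IsPrimitiveOn (fun t ↦ l * (t - a)) (fun _ ↦ l) a b := of_hasDerivAt fun t _ ↦ by
    simpa using ((hasDerivAt_id t).sub_const a).const_mul l
  have := (hy.sub hlin).le_mul_exp hab hP.neg fun t ht ↦ by
    have := mul_nonneg (hk t ht) (mul_nonneg hl (sub_nonneg.2 ht.1.le))
    linarith [hle t ht]
  rw [sub_self, mul_zero, sub_zero, neg_sub_neg, ← neg_sub (P b)] at this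
  linarith

lemma abs_le_mul_exp_add (hab : a ≤ b) {k : ℝ → ℝ} {l : ℝ} (hy : IsPrimitiveOn y y' a b)
    (hP : IsPrimitiveOn P k a b) (hk : ∀ t ∈ Ioo a b, 0 ≤ k t) (hl : 0 ≤ l)
    (hle : ∀ t ∈ Ioo a b, |y' t + k t * y t| ≤ l) :
    |y b| ≤ |y a| * Real.exp (-(P b - P a)) + l * (b - a) := by
  have hexp := (Real.exp_pos (-(P b - P a))).le
  have hupper := hy.le_mul_exp_add hab hP hk hl fun t ht ↦ (le_abs_self _).trans (hle t ht)
  have hlower := hy.neg.le_mul_exp_add hab hP hk hl fun t ht ↦ by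
    linarith [neg_le_abs (y' t + k t * y t), hle t ht]
  have h1 := mul_le_mul_of_nonneg_right (le_abs_self (y a)) hexp
  have h2 := mul_le_mul_of_nonneg_right (neg_le_abs (y a)) hexp
  exact abs_le'.2 ⟨by linarith, by linarith⟩

end IsPrimitiveOn

lemma forall_lt_of_forall_Ico_lt {a b c : ℝ} {V : ℝ → ℝ} (hV : ContinuousOn V (Icc a b))
    (h : ∀ s ∈ Icc a b, (∀ r ∈ Ico a s, V r < c) → V s < c) : ∀ s ∈ Icc a b, V s < c := by
  by_contra! hcon
  have hcompact : IsCompact (Icc a b ∩ V ⁻¹' Ici c) :=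
    isCompact_Icc.of_isClosed_subset (hV.preimage_isClosed_of_isClosed isClosed_Icc isClosed_Ici)
      inter_subset_left
  obtain ⟨s, ⟨hs, hcs⟩, hleast⟩ := hcompact.exists_isLeast hcon
  refine (h s hs fun r hr ↦ ?_).not_ge hcs
  by_contra! hcr
  exact (hleast ⟨⟨hr.1, hr.2.le.trans hs.2⟩, hcr⟩).not_gt hr.2

end Calculus

section Clock

/-- The logarithmic scale `L(t)` of the accuracy: nonpositive on the second half of each time unit,
growing like `t ^ 2` during the first three eighths of the next one. -/
def scale (t : ℝ) : ℝ := 1 / 10000 * t * Real.sin (2 * Real.pi * t)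

/-- The derivative of `scale`. -/
def scaleDeriv (t : ℝ) : ℝ :=
  1 / 10000 * (Real.sin (2 * Real.pi * t) + 2 * Real.pi * t * Real.cos (2 * Real.pi * t))

/-- The accuracy `u(t) = 1 / (1 + exp L(t))` requested from the simulations. -/
def accuracy (t : ℝ) : ℝ := Real.sigmoid (-scale t)

/-- The precision parameter `M(t) = -log u(t)` handed to the simulated system. -/
def precision (t : ℝ) : ℝ := -Real.log (accuracy t)

/-- An analytic switch with phase `θ`: it is at least `1 / 2` for `θ` within `1 / 16` of an integer
and at most `exp (-t ^ 2)` for `θ` at distance at least `1 / 8` from the integers. -/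
def gate (θ t : ℝ) : ℝ := Real.sigmoid (16 * t ^ 2 * (Real.cos (2 * Real.pi * θ) - 4 / 5))

/-- The switch of the reset phase of a cycle. -/
def resetGate (t : ℝ) : ℝ := gate (t ^ 2) t

/-- The switch of the simulation phase of a cycle. -/
def simGate (t : ℝ) : ℝ := gate (t ^ 2 - 1 / 4) t

/-- The switch of the comparison phase of a cycle. -/
def ampGate (t : ℝ) : ℝ := gate (t ^ 2 - 1 / 2) t

/-- The switch that copies the memory to the output once in each time unit. -/
def sampleGate (t : ℝ) : ℝ := gate (t - 1 / 4) t

/-- The rate constant of the gated relaxations. -/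
def gain (t : ℝ) : ℝ := 6400 * (1 + t) ^ 2

lemma gain_nonneg (t : ℝ) : 0 ≤ gain t := by unfold gain; positivity

lemma gate_pos (θ t : ℝ) : 0 < gate θ t := Real.sigmoid_pos _

lemma gate_le_one (θ t : ℝ) : gate θ t ≤ 1 := Real.sigmoid_le_one _

lemma cos_two_pi_mul_sub_int (θ : ℝ) (n : ℤ) :
    Real.cos (2 * Real.pi * (θ - n)) = Real.cos (2 * Real.pi * θ) := by
  rw [← Real.cos_sub_int_mul_two_pi (2 * Real.pi * θ) n]; ring_nf

lemma sin_two_pi_mul_sub_int (θ : ℝ) (n : ℤ) :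
    Real.sin (2 * Real.pi * (θ - n)) = Real.sin (2 * Real.pi * θ) := by
  rw [← Real.sin_sub_int_mul_two_pi (2 * Real.pi * θ) n]; ring_nf

lemma cos_two_pi_mul_le {θ : ℝ} (n : ℤ) (h1 : n + 1 / 8 ≤ θ) (h2 : θ ≤ n + 7 / 8) :
    Real.cos (2 * Real.pi * θ) ≤ 18 / 25 := by
  have hpi := Real.pi_pos
  have hhalf : ∀ w : ℝ, 1 / 8 ≤ w → w ≤ 1 / 2 → Real.cos (2 * Real.pi * w) ≤ 18 / 25 := by
    intro w hw1 hw2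
    have hcos : Real.cos (2 * Real.pi * w) ≤ Real.cos (Real.pi / 4) := by
      apply Real.cos_le_cos_of_nonneg_of_le_pi <;> nlinarith
    have hsqrt : √2 ≤ 1.44 := by rw [Real.sqrt_le_left (by norm_num)]; norm_num
    rw [Real.cos_pi_div_four] at hcos
    linarith
  rw [← cos_two_pi_mul_sub_int θ n]
  rcases le_total (θ - n) (1 / 2) with h | h
  · exact hhalf _ (by linarith) h
  · have := hhalf (1 - (θ - n)) (by linarith) (by linarith)
    rwa [mul_sub _ 1, mul_one, Real.cos_two_pi_sub] at this

lemma le_cos_two_pi_mul {θ : ℝ} (n : ℤ) (h : |θ - n| ≤ 1 / 16) :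
    4 / 5 ≤ Real.cos (2 * Real.pi * θ) := by
  rw [← cos_two_pi_mul_sub_int θ n]
  refine le_trans ?_ Real.one_sub_sq_div_two_le_cos
  have hθ : (θ - n) ^ 2 ≤ (1 / 16) ^ 2 := sq_le_sq' (by linarith [(abs_le.1 h).1]) (abs_le.1 h).2
  have hpi : Real.pi ^ 2 ≤ 16 := by nlinarith [Real.pi_lt_four, Real.pi_pos]
  nlinarith [mul_le_mul hpi hθ (by positivity) (by norm_num)]

lemma gate_le_exp {θ t : ℝ} (n : ℤ) (h1 : n + 1 / 8 ≤ θ) (h2 : θ ≤ n + 7 / 8) :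
    gate θ t ≤ Real.exp (-t ^ 2) := by
  have hcos := cos_two_pi_mul_le n h1 h2
  calc gate θ t ≤ Real.sigmoid (-t ^ 2) := by
        apply Real.sigmoid_le; nlinarith [sq_nonneg t]
    _ ≤ Real.exp (-t ^ 2) := by
        rw [Real.sigmoid_def, neg_neg, Real.exp_neg]
        exact inv_anti₀ (Real.exp_pos _) (by linarith)

lemma half_le_gate {θ t : ℝ} (n : ℤ) (h1 : n - 1 / 16 ≤ θ) (h2 : θ ≤ n + 1 / 16) :
    1 / 2 ≤ gate θ t := by
  have hcos := le_cos_two_pi_mul (θ := θ) n (abs_le.2 ⟨by linarith, by linarith⟩)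
  calc (1 : ℝ) / 2 = Real.sigmoid 0 := by rw [Real.sigmoid_zero, one_div]
    _ ≤ gate θ t := Real.sigmoid_le (mul_nonneg (by positivity) (by linarith))

lemma hasDerivAt_sq (t : ℝ) : HasDerivAt (fun t : ℝ ↦ t ^ 2) (2 * t) t := by
  simpa using hasDerivAt_pow 2 t

lemma hasDerivAt_cos_two_pi_mul {θ : ℝ → ℝ} {θ' t : ℝ} (hθ : HasDerivAt θ θ' t) :
    HasDerivAt (fun t ↦ Real.cos (2 * Real.pi * θ t))
      (-(2 * Real.pi * θ' * Real.sin (2 * Real.pi * θ t))) t :=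
  (hθ.const_mul (2 * Real.pi)).cos.congr_deriv (by ring)

lemma hasDerivAt_sin_two_pi_mul {θ : ℝ → ℝ} {θ' t : ℝ} (hθ : HasDerivAt θ θ' t) :
    HasDerivAt (fun t ↦ Real.sin (2 * Real.pi * θ t))
      (2 * Real.pi * θ' * Real.cos (2 * Real.pi * θ t)) t :=
  (hθ.const_mul (2 * Real.pi)).sin.congr_deriv (by ring)

lemma hasDerivAt_gate {θ : ℝ → ℝ} {θ' t : ℝ} (hθ : HasDerivAt θ θ' t) :
    HasDerivAt (fun t ↦ gate (θ t) t)
      (gate (θ t) t * (1 - gate (θ t) t) *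
        (32 * t * (Real.cos (2 * Real.pi * θ t) - 4 / 5) -
          32 * Real.pi * t ^ 2 * θ' * Real.sin (2 * Real.pi * θ t))) t :=
  ((Real.hasDerivAt_sigmoid _).comp t (((hasDerivAt_sq t).const_mul 16).mul
    ((hasDerivAt_cos_two_pi_mul hθ).sub_const (4 / 5)))).congr_deriv
      (by simp only [gate, Pi.mul_apply]; ring)

lemma hasDerivAt_scale (t : ℝ) : HasDerivAt scale (scaleDeriv t) t :=
  (((hasDerivAt_id' t).const_mul (1 / 10000)).mul
    (hasDerivAt_sin_two_pi_mul (hasDerivAt_id' t))).congr_deriv (by unfold scaleDeriv; ring)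

lemma hasDerivAt_accuracy (t : ℝ) :
    HasDerivAt accuracy (-(scaleDeriv t * accuracy t * (1 - accuracy t))) t :=
  ((Real.hasDerivAt_sigmoid _).comp t (hasDerivAt_scale t).neg).congr_deriv
    (by simp only [accuracy, Pi.neg_apply]; ring)

lemma accuracy_pos (t : ℝ) : 0 < accuracy t := Real.sigmoid_pos _

lemma accuracy_le_one (t : ℝ) : accuracy t ≤ 1 := Real.sigmoid_le_one _

lemma hasDerivAt_precision (t : ℝ) :
    HasDerivAt precision (scaleDeriv t * (1 - accuracy t)) t :=
  ((hasDerivAt_accuracy t).log (accuracy_pos t).ne').neg.congr_deriv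
    (by have := (accuracy_pos t).ne'; field_simp)

lemma exp_neg_precision (t : ℝ) : Real.exp (-precision t) = accuracy t := by
  rw [precision, neg_neg, Real.exp_log (accuracy_pos t)]

lemma precision_nonneg (t : ℝ) : 0 ≤ precision t :=
  neg_nonneg.2 (Real.log_nonpos (accuracy_pos t).le (accuracy_le_one t))

lemma half_le_accuracy {t : ℝ} (h : scale t ≤ 0) : 1 / 2 ≤ accuracy t := by
  calc (1 : ℝ) / 2 = Real.sigmoid 0 := by rw [Real.sigmoid_zero, one_div]
    _ ≤ accuracy t := Real.sigmoid_le (neg_nonneg.2 h)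

lemma accuracy_le_exp (t : ℝ) : accuracy t ≤ Real.exp (-scale t) := by
  rw [accuracy, Real.sigmoid_def, neg_neg, Real.exp_neg]
  exact inv_anti₀ (Real.exp_pos _) (by linarith)

lemma precision_le {t B : ℝ} (hB : 0 ≤ B) (h : scale t ≤ B) : precision t ≤ 1 + B := by
  have hexp : Real.exp (-(1 + B)) ≤ accuracy t := by
    rw [accuracy, Real.sigmoid_def, neg_neg, Real.exp_neg, Real.exp_add]
    refine inv_anti₀ (by positivity) ?_
    nlinarith [Real.exp_le_exp.2 h, Real.one_le_exp hB, Real.add_one_le_exp (1 : ℝ)]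
  rw [← exp_neg_precision, Real.exp_le_exp] at hexp
  linarith

lemma precision_le_one_add {t : ℝ} (ht : 0 ≤ t) : precision t ≤ 1 + t := by
  refine precision_le ht ?_
  unfold scale
  nlinarith [Real.sin_le_one (2 * Real.pi * t)]

lemma exp_neg_one_add_le_accuracy {t : ℝ} (ht : 0 ≤ t) : Real.exp (-(1 + t)) ≤ accuracy t := by
  rw [← exp_neg_precision, Real.exp_le_exp]
  linarith [precision_le_one_add ht]

lemma abs_scaleDeriv_le {t : ℝ} (ht : 1 ≤ t) : |scaleDeriv t| ≤ 4 / 10000 * (2 * t) := by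
  have hcos : |2 * Real.pi * t * Real.cos (2 * Real.pi * t)| ≤ 2 * Real.pi * t := by
    rw [abs_mul, abs_of_nonneg (by positivity)]
    exact mul_le_of_le_one_right (by positivity) (Real.abs_cos_le_one _)
  have hsin := Real.abs_sin_le_one (2 * Real.pi * t)
  rw [scaleDeriv, abs_mul, abs_of_pos (by norm_num : (0 : ℝ) < 1 / 10000)]
  nlinarith [abs_add_le (Real.sin (2 * Real.pi * t)) (2 * Real.pi * t * Real.cos (2 * Real.pi * t)),
    Real.pi_lt_d2]

lemma abs_precision_sub_le {s t : ℝ} (hs : 1 ≤ s) (hst : s ≤ t) :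
    |precision t - precision s| ≤ 4 / 10000 * (t ^ 2 - s ^ 2) := by
  have hM : IsPrimitiveOn precision _ s t := .of_hasDerivAt fun r _ ↦ hasDerivAt_precision r
  have hsq : IsPrimitiveOn (fun r ↦ 4 / 10000 * r ^ 2) (fun r ↦ 4 / 10000 * (2 * r)) s t :=
    .of_hasDerivAt fun r _ ↦ (hasDerivAt_sq r).const_mul _
  have hbound : ∀ r ∈ Ioo s t, |scaleDeriv r * (1 - accuracy r)| ≤ 4 / 10000 * (2 * r) := by
    intro r hr
    rw [abs_mul, abs_of_nonneg (sub_nonneg.2 (accuracy_le_one r))]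
    exact (mul_le_of_le_one_right (abs_nonneg _) (by linarith [accuracy_pos r])).trans
      (abs_scaleDeriv_le (hs.trans hr.1.le))
  have hupper := hM.sub_le_sub hst hsq fun r hr ↦ (abs_le.1 (hbound r hr)).2
  have hlower := hM.neg.sub_le_sub hst hsq fun r hr ↦ neg_le.1 (abs_le.1 (hbound r hr)).1
  exact abs_le.2 ⟨by linarith, by linarith⟩

lemma scale_nonpos {t : ℝ} (j : ℤ) (ht : 0 ≤ t) (h1 : j - 1 / 2 ≤ t) (h2 : t ≤ j) :
    scale t ≤ 0 := by
  have hsin : Real.sin (2 * Real.pi * t) ≤ 0 := by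
    have := Real.pi_pos
    rw [← sin_two_pi_mul_sub_int t j]
    apply Real.sin_nonpos_of_nonpos_of_neg_pi_le <;> nlinarith
  exact mul_nonpos_of_nonneg_of_nonpos (by positivity) hsin

lemma scale_le {t : ℝ} (j : ℤ) (hj : 0 ≤ (j : ℝ)) (h : j ≤ t) :
    scale t ≤ 1 / 1000 * (t ^ 2 - j ^ 2) := by
  have hsin : Real.sin (2 * Real.pi * t) ≤ 8 * (t - j) := by
    rw [← sin_two_pi_mul_sub_int t j]
    refine (Real.sin_le (by have := sub_nonneg.2 h; positivity)).trans ?_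
    nlinarith [Real.pi_lt_four]
  unfold scale
  nlinarith [mul_le_mul_of_nonneg_left hsin (hj.trans h), mul_nonneg hj (sub_nonneg.2 h)]

lemma le_sin_two_pi_mul {w : ℝ} (h0 : 0 ≤ w) (h1 : w ≤ 3 / 8) :
    w ≤ Real.sin (2 * Real.pi * w) := by
  have hpi := Real.pi_pos
  rcases le_total w (1 / 4) with h | h
  · calc w ≤ 2 / Real.pi * (2 * Real.pi * w) := by field_simp; linarith
      _ ≤ _ := Real.mul_le_sin (by positivity) (by nlinarith)
  · rw [← Real.sin_pi_sub]
    calc w ≤ 2 / Real.pi * (Real.pi - 2 * Real.pi * w) := by field_simp; linarith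
      _ ≤ _ := Real.mul_le_sin (by nlinarith) (by nlinarith)

lemma le_scale {t : ℝ} (j : ℤ) (hj : 0 ≤ (j : ℝ)) (h1 : j ≤ t) (h2 : t ≤ j + 3 / 8) :
    1 / 20000 * (t ^ 2 - j ^ 2) ≤ scale t := by
  have hsin : t - j ≤ Real.sin (2 * Real.pi * t) := by
    rw [← sin_two_pi_mul_sub_int t j]
    exact le_sin_two_pi_mul (by linarith) (by linarith)
  unfold scale
  nlinarith [mul_le_mul_of_nonneg_left hsin (hj.trans h1), mul_nonneg hj (sub_nonneg.2 h1)]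

lemma le_sub_of_half_le_gate {a b w₁ w₂ : ℝ} {g P : ℝ → ℝ} (h0 : 0 ≤ a) (h1 : a ≤ w₁)
    (h2 : w₁ ≤ w₂) (h3 : w₂ ≤ b) (hw : 1 / 16 ≤ w₂ ^ 2 - w₁ ^ 2) (hg : ∀ t, 0 ≤ g t)
    (hon : ∀ t ∈ Icc w₁ w₂, 1 / 2 ≤ g t) (hP : IsPrimitiveOn P (fun t ↦ gain t * g t) a b) :
    100 * (1 + w₁) ≤ P b - P a := by
  have hnonneg : ∀ t, 0 ≤ gain t * g t := fun t ↦ mul_nonneg (gain_nonneg t) (hg t)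
  have hbefore := (hP.mono le_rfl (h2.trans h3)).mul_sub_le_sub h1 fun t _ ↦ hnonneg t
  have hafter := (hP.mono (h1.trans h2) le_rfl).mul_sub_le_sub h3 fun t _ ↦ hnonneg t
  have hsq : IsPrimitiveOn (fun r ↦ 1600 * (1 + w₁) * r ^ 2)
      (fun r ↦ 1600 * (1 + w₁) * (2 * r)) w₁ w₂ :=
    .of_hasDerivAt fun r _ ↦ (hasDerivAt_sq r).const_mul _
  have hon' := hsq.sub_le_sub h2 (hP.mono h1 h3) fun t ht ↦ by
    have hhalf := mul_le_mul_of_nonneg_left (hon t (Ioo_subset_Icc_self ht)) (gain_nonneg t)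
    have hw₁ : 0 ≤ w₁ := h0.trans h1
    unfold gain at hhalf ⊢
    nlinarith [ht.1, mul_nonneg hw₁ (sub_nonneg.2 ht.1.le)]
  have : 0 ≤ 1600 * (1 + w₁) := by linarith
  nlinarith

end Clock

section PolynomialBounds

/-- `g` is bounded by a polynomial in `|b|`. -/
def IsPolyBounded {X : Type*} (b g : X → ℝ) : Prop :=
  ∃ C : ℝ, 0 ≤ C ∧ ∃ r : ℕ, ∀ x, |g x| ≤ C * (1 + |b x|) ^ r

namespace IsPolyBounded

variable {X : Type*} {b g h : X → ℝ}

lemma mono (hg : IsPolyBounded b g) (hle : ∀ x, |h x| ≤ |g x|) : IsPolyBounded b h := by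
  obtain ⟨C, hC, r, hg⟩ := hg
  exact ⟨C, hC, r, fun x ↦ (hle x).trans (hg x)⟩

lemma const (c : ℝ) : IsPolyBounded b fun _ ↦ c :=
  ⟨|c|, abs_nonneg c, 0, fun x ↦ by simp⟩

lemma self : IsPolyBounded b b :=
  ⟨1, zero_le_one, 1, fun x ↦ by simp⟩

lemma abs (hg : IsPolyBounded b g) : IsPolyBounded b fun x ↦ |g x| :=
  hg.mono fun x ↦ (abs_abs (g x)).le

lemma add (hg : IsPolyBounded b g) (hh : IsPolyBounded b h) :
    IsPolyBounded b fun x ↦ g x + h x := by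
  obtain ⟨C₁, hC₁, r₁, hg⟩ := hg
  obtain ⟨C₂, hC₂, r₂, hh⟩ := hh
  refine ⟨C₁ + C₂, add_nonneg hC₁ hC₂, max r₁ r₂, fun x ↦ (abs_add_le _ _).trans ?_⟩
  have hb : 1 ≤ 1 + |b x| := le_add_of_nonneg_right (abs_nonneg _)
  rw [add_mul]
  refine add_le_add ((hg x).trans ?_) ((hh x).trans ?_)
  · gcongr
    exact le_max_left _ _
  · gcongr
    exact le_max_right _ _

lemma neg (hg : IsPolyBounded b g) : IsPolyBounded b fun x ↦ -g x :=
  hg.mono fun x ↦ (abs_neg (g x)).le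

lemma sub (hg : IsPolyBounded b g) (hh : IsPolyBounded b h) :
    IsPolyBounded b fun x ↦ g x - h x := by
  simpa only [sub_eq_add_neg] using hg.add hh.neg

lemma mul (hg : IsPolyBounded b g) (hh : IsPolyBounded b h) :
    IsPolyBounded b fun x ↦ g x * h x := by
  obtain ⟨C₁, hC₁, r₁, hg⟩ := hg
  obtain ⟨C₂, hC₂, r₂, hh⟩ := hh
  refine ⟨C₁ * C₂, mul_nonneg hC₁ hC₂, r₁ + r₂, fun x ↦ ?_⟩
  calc |g x * h x| = |g x| * |h x| := abs_mul _ _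
    _ ≤ (C₁ * (1 + |b x|) ^ r₁) * (C₂ * (1 + |b x|) ^ r₂) := by gcongr; exacts [hg x, hh x]
    _ = C₁ * C₂ * (1 + |b x|) ^ (r₁ + r₂) := by ring

lemma pow (hg : IsPolyBounded b g) (k : ℕ) : IsPolyBounded b fun x ↦ g x ^ k := by
  induction k with
  | zero => simpa only [pow_zero] using const 1
  | succ k ih => simpa only [pow_succ] using ih.mul hg

lemma sum {ι : Type*} (s : Finset ι) {g : ι → X → ℝ} (hg : ∀ i, IsPolyBounded b (g i)) :
    IsPolyBounded b fun x ↦ ∑ i ∈ s, g i x := by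
  classical
  induction s using Finset.induction_on with
  | empty => simpa only [Finset.sum_empty] using const 0
  | insert i s hi ih => simpa only [Finset.sum_insert hi] using (hg i).add ih

lemma norm_pi {ι : Type*} [Fintype ι] {v : X → ι → ℝ} (hv : ∀ i, IsPolyBounded b fun x ↦ v x i) :
    IsPolyBounded b fun x ↦ ‖v x‖ := by
  refine (sum Finset.univ fun i ↦ (hv i).abs).mono fun x ↦ ?_
  rw [abs_norm, abs_of_nonneg (Finset.sum_nonneg fun i _ ↦ abs_nonneg (v x i)),
    pi_norm_le_iff_of_nonneg (Finset.sum_nonneg fun i _ ↦ abs_nonneg (v x i))]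
  exact fun i ↦ Finset.single_le_sum (f := fun i ↦ |v x i|) (fun i _ ↦ abs_nonneg (v x i))
    (Finset.mem_univ i)

end IsPolyBounded

variable {σ ι : Type*}

lemma isPolyBounded_eval {X : Type*} (P : MvPolynomial σ ℝ) {b : X → ℝ} {v : X → σ → ℝ}
    (hv : ∀ i, IsPolyBounded b fun x ↦ v x i) :
    IsPolyBounded b fun x ↦ MvPolynomial.eval (v x) P := by
  induction P using MvPolynomial.induction_on with
  | C a => simpa only [MvPolynomial.eval_C] using IsPolyBounded.const a
  | add p q hp hq => simpa only [map_add] using hp.add hq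
  | mul_X p i hp => simpa only [map_mul, MvPolynomial.eval_X] using hp.mul (hv i)

variable [Fintype σ]

lemma exists_abs_eval_sub_eval_le (P : MvPolynomial σ ℝ) :
    ∃ B : (σ → ℝ) × (σ → ℝ) → ℝ, IsPolyBounded (‖·‖) B ∧
      ∀ v w, |MvPolynomial.eval v P - MvPolynomial.eval w P| ≤ B (v, w) * ‖v - w‖ := by
  induction P using MvPolynomial.induction_on with
  | C a => exact ⟨fun _ ↦ 0, .const 0, fun v w ↦ by simp⟩
  | add p q hp hq =>
    obtain ⟨B₁, hB₁, hp⟩ := hp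
    obtain ⟨B₂, hB₂, hq⟩ := hq
    refine ⟨_, hB₁.add hB₂, fun v w ↦ ?_⟩
    rw [map_add, map_add, add_sub_add_comm, add_mul]
    exact (abs_add_le _ _).trans (add_le_add (hp v w) (hq v w))
  | mul_X p i hp =>
    obtain ⟨B, hB, hp⟩ := hp
    have hcoord : ∀ j, IsPolyBounded (‖·‖) fun x : (σ → ℝ) × (σ → ℝ) ↦ x.2 j := fun j ↦
      IsPolyBounded.self.mono fun x ↦
        (norm_le_pi_norm x.2 j).trans ((norm_snd_le x).trans (le_abs_self _))
    have hfst : IsPolyBounded (‖·‖) fun x : (σ → ℝ) × (σ → ℝ) ↦ x.1 i :=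
      IsPolyBounded.self.mono fun x ↦
        (norm_le_pi_norm x.1 i).trans ((norm_fst_le x).trans (le_abs_self _))
    refine ⟨_, (hB.mul hfst.abs).add (isPolyBounded_eval p hcoord).abs, fun v w ↦ ?_⟩
    calc |MvPolynomial.eval v (p * .X i) - MvPolynomial.eval w (p * .X i)|
        = |(MvPolynomial.eval v p - MvPolynomial.eval w p) * v i
            + MvPolynomial.eval w p * (v - w) i| := by
          simp only [map_mul, MvPolynomial.eval_X, Pi.sub_apply]; ring_nf
      _ ≤ B (v, w) * ‖v - w‖ * |v i| + |MvPolynomial.eval w p| * ‖v - w‖ := by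
          refine (abs_add_le _ _).trans ?_
          rw [abs_mul, abs_mul]
          gcongr
          exacts [hp v w, norm_le_pi_norm (v - w) i]
      _ = (B (v, w) * |v i| + |MvPolynomial.eval w p|) * ‖v - w‖ := by ring

variable [Fintype ι]

lemma exists_norm_eval_le (P : ι → MvPolynomial σ ℝ) :
    ∃ C : ℝ, 0 ≤ C ∧ ∃ r : ℕ, ∀ v : σ → ℝ,
      ‖fun i ↦ MvPolynomial.eval v (P i)‖ ≤ C * (1 + ‖v‖) ^ r := by
  have hcoord : ∀ j, IsPolyBounded (fun v : σ → ℝ ↦ ‖v‖) fun v ↦ v j := fun j ↦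
    IsPolyBounded.self.mono fun v ↦ (norm_le_pi_norm v j).trans (le_abs_self _)
  simpa only [IsPolyBounded, abs_norm] using
    IsPolyBounded.norm_pi fun i ↦ isPolyBounded_eval (P i) hcoord

lemma exists_norm_eval_sub_eval_le (P : ι → MvPolynomial σ ℝ) :
    ∃ C : ℝ, 0 ≤ C ∧ ∃ r : ℕ, ∀ (R : ℝ) (v w : σ → ℝ), ‖v‖ ≤ R → ‖w‖ ≤ R →
      ‖(fun i ↦ MvPolynomial.eval v (P i)) - fun i ↦ MvPolynomial.eval w (P i)‖ ≤
        C * (1 + R) ^ r * ‖v - w‖ := by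
  choose B hB hP using fun i ↦ exists_abs_eval_sub_eval_le (P i)
  obtain ⟨C, hC, r, hbound⟩ := IsPolyBounded.norm_pi (v := fun x i ↦ B i x) hB
  refine ⟨C, hC, r, fun R v w hv hw ↦ ?_⟩
  have hR : 0 ≤ R := (norm_nonneg v).trans hv
  have hvw : ‖fun i ↦ B i (v, w)‖ ≤ C * (1 + R) ^ r := by
    refine (le_abs_self _).trans ((hbound (v, w)).trans ?_)
    rw [abs_norm]
    gcongr
    exact max_le hv hw
  refine (pi_norm_le_iff_of_nonneg (by positivity)).2 fun i ↦ (hP i v w).trans ?_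
  gcongr
  exact (le_abs_self _).trans ((norm_le_pi_norm (fun i ↦ B i (v, w)) i).trans hvw)

lemma eventually_mul_pow_mul_exp_neg_sq_le (C : ℝ) (r : ℕ) :
    ∀ᶠ t : ℝ in atTop, C * (1 + t) ^ r * Real.exp (-t ^ 2) ≤ Real.exp (-(5 * t)) := by
  have hlim := (Real.tendsto_pow_mul_exp_neg_atTop_nhds_zero r).const_mul (|C| * 2 ^ r)
  rw [mul_zero] at hlim
  filter_upwards [hlim.eventually (gt_mem_nhds zero_lt_one), eventually_ge_atTop 6] with t ht ht6
  have hexp : Real.exp (-t ^ 2) ≤ Real.exp (-t) * Real.exp (-(5 * t)) := by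
    rw [← Real.exp_add, Real.exp_le_exp]; nlinarith
  have hpow : C * (1 + t) ^ r ≤ |C| * 2 ^ r * t ^ r := by
    rw [mul_assoc, ← mul_pow]
    gcongr
    exacts [le_abs_self C, by linarith]
  calc C * (1 + t) ^ r * Real.exp (-t ^ 2)
      ≤ |C| * 2 ^ r * t ^ r * (Real.exp (-t) * Real.exp (-(5 * t))) := by gcongr
    _ = |C| * 2 ^ r * (t ^ r * Real.exp (-t)) * Real.exp (-(5 * t)) := by ring
    _ ≤ Real.exp (-(5 * t)) := mul_le_of_le_one_left (Real.exp_pos _).le ht.le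

end PolynomialBounds

section GlobalExistence

open Metric
open scoped NNReal

lemma exists_hasDerivWithinAt_of_lipschitzWith {E : Type*} [NormedAddCommGroup E]
    [NormedSpace ℝ E] [CompleteSpace E] {f : ℝ → E → E} {T L : ℝ} {K : ℝ≥0} (hT : 0 ≤ T)
    (hlip : ∀ t ∈ Icc 0 T, LipschitzWith K (f t)) (hcont : ∀ v, ContinuousOn (f · v) (Icc 0 T))
    (hL : ∀ t ∈ Icc 0 T, ∀ v, ‖f t v‖ ≤ L) :
    ∃ y : ℝ → E, y 0 = 0 ∧ ∀ t ∈ Icc 0 T, HasDerivWithinAt y (f t (y t)) (Icc 0 T) t := by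
  lift T to ℝ≥0 using hT
  lift L to ℝ≥0 using (norm_nonneg _).trans (hL 0 (left_mem_Icc.2 T.2) 0)
  have hpl : IsPicardLindelof f (tmin := 0) (tmax := T) ⟨0, left_mem_Icc.2 T.2⟩ 0 (L * T) 0 L K :=
    { lipschitzOnWith := fun t ht ↦ (hlip t ht).lipschitzOnWith
      continuousOn := fun v _ ↦ hcont v
      norm_le := fun t ht v _ ↦ hL t ht v
      mul_max_le := by simp }
  exact hpl.exists_eq_forall_mem_Icc_hasDerivWithinAt₀

variable {S : Type*} [Fintype S]

/-- Coordinatewise truncation to `[-R, R]`: a nonexpansive retraction onto the closed ball of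
radius `R`, which makes a locally Lipschitz field globally Lipschitz. -/
def clamp (R : ℝ) (v : S → ℝ) : S → ℝ := fun i ↦ max (-R) (min R (v i))

lemma lipschitzWith_clamp (R : ℝ) : LipschitzWith 1 (clamp R : (S → ℝ) → S → ℝ) :=
  LipschitzWith.of_dist_le_mul fun v w ↦ (dist_pi_le_iff (by positivity)).2 fun i ↦
    (((LipschitzWith.eval i).const_min R).const_max (-R)).dist_le_mul v w

lemma norm_clamp_le {R : ℝ} (hR : 0 ≤ R) (v : S → ℝ) : ‖clamp R v‖ ≤ R :=
  (pi_norm_le_iff_of_nonneg hR).2 fun _ ↦ abs_le.2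
    ⟨le_max_left _ _, max_le (by linarith) (min_le_left _ _)⟩

lemma clamp_eq_self {R : ℝ} {v : S → ℝ} (hv : ‖v‖ ≤ R) : clamp R v = v := by
  funext i
  have hi := abs_le.1 ((norm_le_pi_norm v i).trans hv)
  rw [clamp, min_eq_right hi.2, max_eq_right hi.1]

variable {f : ℝ → (S → ℝ) → S → ℝ}

lemma exists_hasDerivWithinAt_clamp {T R : ℝ} (hT : 0 ≤ T) (hR : 0 ≤ R) {K : ℝ≥0}
    (hlip : ∀ t ∈ Icc 0 T, LipschitzOnWith K (f t) (closedBall 0 R))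
    (hcont : ∀ v, ContinuousOn (f · v) (Icc 0 T)) :
    ∃ y : ℝ → S → ℝ, y 0 = 0 ∧
      ∀ t ∈ Icc 0 T, HasDerivWithinAt y (f t (clamp R (y t))) (Icc 0 T) t := by
  have hmem : ∀ v : S → ℝ, clamp R v ∈ closedBall 0 R := fun v ↦
    mem_closedBall_zero_iff.2 (norm_clamp_le hR v)
  obtain ⟨L, hL⟩ := isCompact_Icc.exists_bound_of_continuousOn (hcont 0)
  refine exists_hasDerivWithinAt_of_lipschitzWith (K := K) (L := K * R + L) hT (fun t ht ↦ ?_)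
    (fun v ↦ hcont _) fun t ht v ↦ ?_
  · have hcomp := (hlip t ht).comp ((lipschitzWith_clamp R).lipschitzOnWith (s := univ))
      fun v _ ↦ hmem v
    rwa [mul_one, lipschitzOnWith_univ] at hcomp
  · have hdist := (hlip t ht).norm_sub_le (hmem v) (mem_closedBall_self hR)
    rw [sub_zero] at hdist
    calc ‖f t (clamp R v)‖ ≤ ‖f t (clamp R v) - f t 0‖ + ‖f t 0‖ := norm_le_norm_sub_add _ _
      _ ≤ K * R + L := by
        gcongr
        · exact hdist.trans (by gcongr; exact norm_clamp_le hR v)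
        · exact hL t ht

lemma exists_hasDerivWithinAt_of_forall_norm_le {T : ℝ} (hT : 0 ≤ T)
    (hlip : ∀ R, ∃ K : ℝ≥0, ∀ t ∈ Icc 0 T, LipschitzOnWith K (f t) (closedBall 0 R))
    (hcont : ∀ v, ContinuousOn (f · v) (Icc 0 T))
    (hbound : ∀ s ∈ Icc 0 T, ∀ y : ℝ → S → ℝ, y 0 = 0 →
      IsPrimitiveOn y (fun t ↦ f t (y t)) 0 s → ‖y s‖ ≤ 1 + s) :
    ∃ y : ℝ → S → ℝ, y 0 = 0 ∧ (∀ t ∈ Icc 0 T, ‖y t‖ ≤ 2 + T) ∧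
      ∀ t ∈ Icc 0 T, HasDerivWithinAt y (f t (y t)) (Icc 0 T) t := by
  obtain ⟨K, hK⟩ := hlip (2 + T)
  obtain ⟨y, hy0, hy⟩ := exists_hasDerivWithinAt_clamp hT (by linarith) hK hcont
  have hcy : ContinuousOn y (Icc 0 T) := fun t ht ↦ (hy t ht).continuousWithinAt
  have hlt : ∀ s ∈ Icc 0 T, ‖y s‖ < 2 + T := by
    refine forall_lt_of_forall_Ico_lt hcy.norm fun s hs hlt ↦ ?_
    have hsol : IsPrimitiveOn y (fun t ↦ f t (y t)) 0 s :=
      { continuousOn := hcy.mono (Icc_subset_Icc_right hs.2)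
        hasDerivAt := fun t ht ↦ by
          have hyt := (hy t ⟨ht.1.le, ht.2.le.trans hs.2⟩).hasDerivAt
            (Icc_mem_nhds ht.1 (ht.2.trans_le hs.2))
          rwa [clamp_eq_self (hlt t (Ioo_subset_Ico_self ht)).le] at hyt }
    linarith [hbound s hs y hy0 hsol, hs.2]
  refine ⟨y, hy0, fun t ht ↦ (hlt t ht).le, fun t ht ↦ ?_⟩
  simpa only [clamp_eq_self (hlt t ht).le] using hy t ht

lemma eqOn_of_hasDerivWithinAt {T T' R : ℝ} (hTT' : T ≤ T') {K : ℝ≥0}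
    (hlip : ∀ t ∈ Icc 0 T, LipschitzOnWith K (f t) (closedBall 0 R)) {y z : ℝ → S → ℝ}
    (hyz : y 0 = z 0) (hyR : ∀ t ∈ Icc 0 T, ‖y t‖ ≤ R) (hzR : ∀ t ∈ Icc 0 T, ‖z t‖ ≤ R)
    (hy : ∀ t ∈ Icc 0 T, HasDerivWithinAt y (f t (y t)) (Icc 0 T) t)
    (hz : ∀ t ∈ Icc 0 T', HasDerivWithinAt z (f t (z t)) (Icc 0 T') t) :
    EqOn y z (Icc 0 T) := by
  have hz' : ∀ t ∈ Icc 0 T, HasDerivWithinAt z (f t (z t)) (Icc 0 T) t := fun t ht ↦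
    (hz t ⟨ht.1, ht.2.trans hTT'⟩).mono (Icc_subset_Icc_right hTT')
  have hright : ∀ {w : ℝ → S → ℝ}, (∀ t ∈ Icc 0 T, HasDerivWithinAt w (f t (w t)) (Icc 0 T) t) →
      ∀ t ∈ Ico 0 T, HasDerivWithinAt w (f t (w t)) (Ici t) t := fun hw t ht ↦
    (hw t (Ico_subset_Icc_self ht)).mono_of_mem_nhdsWithin
      (mem_of_superset (Icc_mem_nhdsGE ht.2) (Icc_subset_Icc_left ht.1))
  exact ODE_solution_unique_of_mem_Icc_right (s := fun _ ↦ closedBall 0 R)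
    (fun t ht ↦ hlip t (Ico_subset_Icc_self ht))
    (fun t ht ↦ (hy t ht).continuousWithinAt) (hright hy)
    (fun t ht ↦ mem_closedBall_zero_iff.2 (hyR t (Ico_subset_Icc_self ht)))
    (fun t ht ↦ (hz' t ht).continuousWithinAt) (hright hz')
    (fun t ht ↦ mem_closedBall_zero_iff.2 (hzR t (Ico_subset_Icc_self ht))) hyz

lemma exists_forall_hasDerivAt_of_hasDerivWithinAt_Ici {E : Type*} [NormedAddCommGroup E]
    [NormedSpace ℝ E] {y y' : ℝ → E} (hy : ∀ t, 0 ≤ t → HasDerivWithinAt y (y' t) (Ici 0) t) :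
    ∃ z, EqOn z y (Ici 0) ∧ ∀ t, 0 ≤ t → HasDerivAt z (y' t) t := by
  classical
  set z := (Ici 0).piecewise y fun t ↦ y 0 + t • y' 0
  have hzy : EqOn z y (Ici 0) := (Ici 0).piecewise_eqOn _ _
  have hright : ∀ t, 0 ≤ t → HasDerivWithinAt z (y' t) (Ici 0) t := fun t ht ↦
    (hy t ht).congr_of_mem hzy ht
  refine ⟨z, hzy, fun t ht ↦ ?_⟩
  obtain rfl | hpos := ht.eq_or_lt
  · have hline : HasDerivAt (fun t : ℝ ↦ y 0 + t • y' 0) (y' 0) 0 := by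
      simpa using ((hasDerivAt_id' (0 : ℝ)).smul_const (y' 0)).const_add (y 0)
    have hleft : HasDerivWithinAt z (y' 0) (Iic 0) 0 := by
      refine hline.hasDerivWithinAt.congr_of_mem (fun s hs ↦ ?_) self_mem_Iic
      obtain rfl | hs := (mem_Iic.1 hs).eq_or_lt
      · simpa using hzy self_mem_Ici
      · exact (Ici 0).piecewise_eq_of_notMem _ _ (notMem_Ici.2 hs)
    rw [← hasDerivWithinAt_univ, ← Iic_union_Ici]
    exact hleft.union (hright 0 le_rfl)
  · exact (hright t ht).hasDerivAt (Ici_mem_nhds hpos)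

theorem exists_forall_hasDerivAt_of_norm_le
    (hlip : ∀ T R, ∃ K : ℝ≥0, ∀ t ∈ Icc 0 T, LipschitzOnWith K (f t) (closedBall 0 R))
    (hcont : ∀ v, ContinuousOn (f · v) (Ici 0))
    (hbound : ∀ T, 0 ≤ T → ∀ y : ℝ → S → ℝ, y 0 = 0 →
      IsPrimitiveOn y (fun t ↦ f t (y t)) 0 T → ‖y T‖ ≤ 1 + T) :
    ∃ y : ℝ → S → ℝ, y 0 = 0 ∧ ∀ t, 0 ≤ t → HasDerivAt y (f t (y t)) t := by
  choose Y hY0 hYle hY using fun n : ℕ ↦ exists_hasDerivWithinAt_of_forall_norm_le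
    (f := f) (T := n + 1) (by positivity) (hlip _)
    (fun v ↦ (hcont v).mono Icc_subset_Ici_self) fun s hs ↦ hbound s hs.1
  have hagree : ∀ ⦃k n : ℕ⦄, k ≤ n → EqOn (Y k) (Y n) (Icc 0 (k + 1)) := fun k n hkn ↦ by
    have hkn' : (k : ℝ) + 1 ≤ n + 1 := by exact_mod_cast Nat.succ_le_succ hkn
    obtain ⟨K, hK⟩ := hlip (k + 1) (2 + (n + 1))
    exact eqOn_of_hasDerivWithinAt hkn' hK ((hY0 k).trans (hY0 n).symm)
      (fun t ht ↦ (hYle k t ht).trans (by linarith))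
      (fun t ht ↦ hYle n t ⟨ht.1, ht.2.trans hkn'⟩) (hY k) (hY n)
  set y : ℝ → S → ℝ := fun t ↦ Y ⌊t⌋₊ t with hy
  have hyY : ∀ n : ℕ, EqOn y (Y n) (Ico 0 (n + 1)) := fun n t ht ↦
    hagree (Nat.lt_add_one_iff.1 ((Nat.floor_lt ht.1).2 (by exact_mod_cast ht.2)))
      ⟨ht.1, (Nat.lt_floor_add_one t).le⟩
  have hy' : ∀ t, 0 ≤ t → HasDerivWithinAt y (f t (y t)) (Ici 0) t := fun t ht ↦ by
    have hlt := Nat.lt_floor_add_one t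
    have hIco : HasDerivWithinAt y (f t (y t)) (Ico 0 (⌊t⌋₊ + 1)) t :=
      ((hY ⌊t⌋₊ t ⟨ht, hlt.le⟩).mono Ico_subset_Icc_self).congr_of_mem (hyY _) ⟨ht, hlt⟩
    rw [← Ici_inter_Iio] at hIco
    exact (hasDerivWithinAt_inter (Iio_mem_nhds hlt)).1 hIco
  obtain ⟨z, hzy, hz⟩ := exists_forall_hasDerivAt_of_hasDerivWithinAt_Ici hy'
  refine ⟨z, (hzy self_mem_Ici).trans (by simp [hy, hY0]), fun t ht ↦ ?_⟩
  rw [hzy (mem_Ici.2 ht)]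
  exact hz t ht

lemma exists_lipschitzOnWith_eval {σ : Type*} [Finite σ] (P : S → MvPolynomial (S ⊕ σ) ℝ)
    {c : ℝ → σ → ℝ} {I : Set ℝ} (hI : IsCompact I) (hc : ContinuousOn c I) (R : ℝ) :
    ∃ K : ℝ≥0, ∀ t ∈ I, LipschitzOnWith K
      (fun v i ↦ MvPolynomial.eval (Sum.elim v (c t)) (P i)) (closedBall 0 R) := by
  have := Fintype.ofFinite σ
  obtain ⟨C, -, r, hP⟩ := exists_norm_eval_sub_eval_le P
  obtain ⟨B, hB⟩ := hI.exists_bound_of_continuousOn hc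
  refine ⟨(C * (1 + max R B) ^ r).toNNReal, fun t ht ↦ ?_⟩
  refine (LipschitzOnWith.of_dist_le' (K := C * (1 + max R B) ^ r) fun v hv w hw ↦ ?_)
  have hnorm : ∀ u ∈ closedBall (0 : S → ℝ) R, ‖Sum.elim u (c t)‖ ≤ max R B := fun u hu ↦ by
    have hu' := mem_closedBall_zero_iff.1 hu
    refine (pi_norm_le_iff_of_nonneg (((norm_nonneg u).trans hu').trans (le_max_left _ _))).2 ?_
    exact Sum.rec (fun i ↦ ((norm_le_pi_norm u i).trans hu').trans (le_max_left _ _))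
      fun i ↦ ((norm_le_pi_norm (c t) i).trans (hB t ht)).trans (le_max_right _ _)
  have hsub : ‖Sum.elim v (c t) - Sum.elim w (c t)‖ = ‖v - w‖ := by
    rw [Pi.norm_def, Pi.norm_def, ← Finset.univ_disjSum_univ, Finset.sup_disjSum]
    simp
  rw [dist_eq_norm, dist_eq_norm, ← hsub]
  exact hP _ _ _ (hnorm v hv) (hnorm w hw)

theorem exists_forall_hasDerivAt_eval {σ : Type*} [Finite σ] (P : S → MvPolynomial (S ⊕ σ) ℝ)
    {c : ℝ → σ → ℝ} (hc : ContinuousOn c (Ici 0))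
    (hbound : ∀ T, 0 ≤ T → ∀ y : ℝ → S → ℝ, y 0 = 0 →
      IsPrimitiveOn y (fun t i ↦ MvPolynomial.eval (Sum.elim (y t) (c t)) (P i)) 0 T →
        ‖y T‖ ≤ 1 + T) :
    ∃ y : ℝ → S → ℝ, y 0 = 0 ∧ ∀ t, 0 ≤ t →
      HasDerivAt y (fun i ↦ MvPolynomial.eval (Sum.elim (y t) (c t)) (P i)) t := by
  refine exists_forall_hasDerivAt_of_norm_le
    (f := fun t v i ↦ MvPolynomial.eval (Sum.elim v (c t)) (P i))
    (fun T ↦ exists_lipschitzOnWith_eval P isCompact_Icc (hc.mono Icc_subset_Ici_self))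
    (fun v ↦ continuousOn_pi.2 fun i ↦ ?_) hbound
  refine (MvPolynomial.continuous_eval (P i)).comp_continuousOn (continuousOn_pi.2 ?_)
  exact Sum.rec (fun _ ↦ continuousOn_const) fun j ↦ continuousOn_pi.1 hc j

end GlobalExistence

section Machine

/-- The input-independent signals of the machine: elapsed time, the oscillations and gates that
schedule its phases, and the target accuracy. Each is a component of a polynomial differential
equation, see `clockField`. -/
inductive Clock : Type
  | time
  | invOneAddSq
  | cosSq
  | sinSq
  | reset
  | sim
  | amp
  | sample
  | sin
  | cos
  | accuracy
  | precision
  deriving DecidableEq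

instance : Fintype Clock where
  elems := {.time, .invOneAddSq, .cosSq, .sinSq, .reset, .sim, .amp, .sample, .sin, .cos,
    .accuracy, .precision}
  complete c := by cases c <;> simp

/-- The values of the clock signals at time `t`. -/
def clock (t : ℝ) : Clock → ℝ
  | .time => t
  | .invOneAddSq => (1 + t ^ 2)⁻¹
  | .cosSq => Real.cos (2 * Real.pi * t ^ 2)
  | .sinSq => Real.sin (2 * Real.pi * t ^ 2)
  | .reset => resetGate t
  | .sim => simGate t
  | .amp => ampGate t
  | .sample => sampleGate t
  | .sin => Real.sin (2 * Real.pi * t)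
  | .cos => Real.cos (2 * Real.pi * t)
  | .accuracy => accuracy t
  | .precision => precision t

/-- The state variables of the machine: the output, the memory tracking the value of the function,
the sign of the error of the memory, the simulated state (as an offset from its initial value), the
smoothed input, and the precision used in the current cycle. -/
inductive Var (m n d : ℕ) : Type
  | out (i : Fin m)
  | mem (i : Fin m)
  | sgn (i : Fin m)
  | sim (k : Fin d)
  | inp (j : Fin n)
  | level
  deriving Fintype

/-- The data of a weak computation: the polynomial field `p` and initial condition `q` of the
simulated system, together with the coefficient and exponent of the polynomial bounding the
simulated time needed. -/
structure Machine (m n d : ℕ) where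
  le : m ≤ d
  p : Fin d → MvPolynomial (Fin d) ℝ
  q : Fin d → MvPolynomial (Fin (n + 1)) ℝ
  coeff : ℝ
  exponent : ℕ

namespace Machine

variable {m n d : ℕ} (M : Machine m n d)

section Field

variable {A : Type*} [CommRing A] [Algebra ℝ A]

/-- The initial condition of the simulated system on input `X` and precision `μ`. -/
def initial (X : Fin n → A) (μ : A) : Fin d → A := fun k ↦
  MvPolynomial.aeval (Fin.snoc X μ : Fin (n + 1) → A) (M.q k)

/-- The current state of the simulated system. Storing its offset from the initial value lets every
state variable start at `0`. -/
def estimate (s : Var m n d → A) : Fin d → A := fun k ↦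
  s (.sim k) + M.initial (fun j ↦ s (.inp j)) (s .level) k

/-- The polynomial bound on the simulated time, in terms of the smoothed input and the precision. -/
def speed (s : Var m n d → A) : A :=
  M.coeff • (1 + ∑ j, s (.inp j) ^ 2 + s .level ^ 2) ^ M.exponent

/-- The speed of the simulation. The last factor keeps the simulated offset in the ball
`∑ k, s (.sim k) ^ 2 ≤ 1 + t ^ 2`. -/
def rate (c : Clock → A) (s : Var m n d → A) : A :=
  M.speed s * c .time * c .sim *
    ((1 + c .time ^ 2 - ∑ k, s (.sim k) ^ 2) * c .invOneAddSq)

/-- The polynomial vector field of the machine, with clock signals `c`, input `x` and state `s`. It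
makes sense in any real algebra: in `ℝ` it gives the dynamics, in a polynomial ring its encoding. -/
def field (c : Clock → A) (x : Fin n → A) (s : Var m n d → A) : Var m n d → A
  | .out i => 6400 * (1 + c .time) ^ 2 * c .sample * (s (.mem i) - s (.out i))
  | .mem i => c .accuracy * (c .time * s (.sgn i) - 2000 * s (.mem i))
  | .sgn i =>
    6400 * (1 + c .time) ^ 2 * c .amp *
        (s (.sgn i) + (M.estimate s (Fin.castLE M.le i) - s (.mem i))) * (1 - s (.sgn i) ^ 2) -
      6400 * (1 + c .time) ^ 2 * c .reset * s (.sgn i)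
  | .sim k =>
    M.rate c s * MvPolynomial.aeval (M.estimate s) (M.p k) -
      6400 * (1 + c .time) ^ 2 * c .reset * s (.sim k)
  | .inp j => (x j - s (.inp j)) * (1 + c .time ^ 2 - s (.inp j) ^ 2)
  | .level => 6400 * (1 + c .time) ^ 2 * c .reset * (c .precision - s .level)

end Field

/-- `s` is the trajectory of the machine on the continuous input `x`, up to time `T`. -/
structure IsRun (x : ℝ → Fin n → ℝ) (T : ℝ) (s : ℝ → Var m n d → ℝ) : Prop where
  init : s 0 = 0
  continuousOn_input : ContinuousOn x (Icc 0 T)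
  isPrimitiveOn : IsPrimitiveOn s (fun t ↦ M.field (clock t) (x t) (s t)) 0 T

end Machine

end Machine

section Bounds

lemma continuous_gate {θ : ℝ → ℝ} (hθ : Continuous θ) : Continuous fun t ↦ gate (θ t) t := by
  unfold gate
  exact continuous_sigmoid.comp (by fun_prop)

lemma continuous_gain : Continuous gain := by unfold gain; fun_prop

lemma gain_mul_gate_nonneg (θ t : ℝ) : 0 ≤ gain t * gate θ t :=
  mul_nonneg (gain_nonneg t) (gate_pos θ t).le

lemma continuous_clock (c : Clock) : Continuous fun t ↦ clock t c := by
  cases c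
  case invOneAddSq => exact Continuous.inv₀ (by fun_prop) fun t ↦ by positivity
  case reset | sim | amp | sample => exact continuous_gate (by fun_prop)
  case accuracy => exact continuous_iff_continuousAt.2 fun t ↦ (hasDerivAt_accuracy t).continuousAt
  case precision =>
    exact continuous_iff_continuousAt.2 fun t ↦ (hasDerivAt_precision t).continuousAt
  all_goals simp only [clock]; fun_prop

lemma IsPrimitiveOn.abs_le_of_relaxation {y w k l l' : ℝ → ℝ} {a b : ℝ} (hab : a ≤ b)
    (hy : IsPrimitiveOn y (fun t ↦ k t * (w t - y t)) a b) (hk : ContinuousOn k (Icc a b))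
    (hk0 : ∀ t ∈ Ioo a b, 0 ≤ k t) (hl : IsPrimitiveOn l l' a b) (hl' : ∀ t ∈ Ioo a b, 0 ≤ l' t)
    (hw : ∀ t ∈ Ioo a b, |w t| ≤ l t) (ha : |y a| ≤ l a) : |y b| ≤ l b := by
  have hsub := (hl.sub hy).nonneg_of_mul_le hab (h := fun t ↦ -k t) hk.neg
    (fun t ht ↦ by
      have := mul_nonneg (hk0 t ht) (sub_nonneg.2 ((abs_le.1 (hw t ht)).2))
      linarith [hl' t ht])
    (sub_nonneg.2 (abs_le.1 ha).2)
  have hadd := (hl.add hy).nonneg_of_mul_le hab (h := fun t ↦ -k t) hk.neg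
    (fun t ht ↦ by
      have := mul_nonneg (hk0 t ht) (neg_le_iff_add_nonneg'.1 (abs_le.1 (hw t ht)).1)
      linarith [hl' t ht])
    (neg_le_iff_add_nonneg'.1 (abs_le.1 ha).1)
  exact abs_le.2 ⟨by linarith, by linarith⟩

namespace Machine

variable {m n d : ℕ} {M : Machine m n d}

lemma estimate_apply (s : Var m n d → ℝ) (k : Fin d) :
    M.estimate s k = s (.sim k) + M.initial (fun j ↦ s (.inp j)) (s .level) k := rfl

lemma continuous_estimate : Continuous (M.estimate : (Var m n d → ℝ) → Fin d → ℝ) := by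
  refine continuous_pi fun k ↦ (continuous_apply _).add ?_
  have hsnoc : Continuous fun s : Var m n d → ℝ ↦
      (Fin.snoc (fun j ↦ s (.inp j)) (s .level) : Fin (n + 1) → ℝ) :=
    continuous_pi fun i ↦ by
      refine i.lastCases ?_ fun j ↦ ?_
      · simpa only [Fin.snoc_last] using continuous_apply _
      · simpa only [Fin.snoc_castSucc] using continuous_apply _
  simp only [initial, MvPolynomial.aeval_eq_eval]
  exact (MvPolynomial.continuous_eval (M.q k)).comp hsnoc

lemma continuous_aeval_estimate (P : MvPolynomial (Fin d) ℝ) :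
    Continuous fun s : Var m n d → ℝ ↦ MvPolynomial.aeval (M.estimate s) P := by
  simp only [MvPolynomial.aeval_eq_eval]
  exact (MvPolynomial.continuous_eval P).comp continuous_estimate

lemma continuous_speed : Continuous (M.speed : (Var m n d → ℝ) → ℝ) := by
  unfold speed
  fun_prop

namespace IsRun

variable {x : ℝ → Fin n → ℝ} {T : ℝ} {s : ℝ → Var m n d → ℝ}

lemma mono (h : M.IsRun x T s) {b : ℝ} (hb : b ≤ T) : M.IsRun x b s where
  init := h.init
  continuousOn_input := h.continuousOn_input.mono (Icc_subset_Icc_right hb)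
  isPrimitiveOn := h.isPrimitiveOn.mono le_rfl hb

lemma continuousOn_apply (h : M.IsRun x T s) (v : Var m n d) :
    ContinuousOn (fun t ↦ s t v) (Icc 0 T) := (h.isPrimitiveOn.apply v).continuousOn

lemma continuousOn_comp (h : M.IsRun x T s) {E : Type*} [TopologicalSpace E]
    {g : (Var m n d → ℝ) → E} (hg : Continuous g) : ContinuousOn (fun t ↦ g (s t)) (Icc 0 T) :=
  hg.comp_continuousOn h.isPrimitiveOn.continuousOn

lemma apply_zero (h : M.IsRun x T s) (v : Var m n d) : s 0 v = 0 := congr_fun h.init v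

lemma out (h : M.IsRun x T s) (i : Fin m) : IsPrimitiveOn (fun t ↦ s t (.out i))
    (fun t ↦ gain t * sampleGate t * (s t (.mem i) - s t (.out i))) 0 T :=
  h.isPrimitiveOn.apply (.out i)

lemma mem (h : M.IsRun x T s) (i : Fin m) : IsPrimitiveOn (fun t ↦ s t (.mem i))
    (fun t ↦ accuracy t * (t * s t (.sgn i) - 2000 * s t (.mem i))) 0 T :=
  h.isPrimitiveOn.apply (.mem i)

lemma sgn (h : M.IsRun x T s) (i : Fin m) : IsPrimitiveOn (fun t ↦ s t (.sgn i))
    (fun t ↦ gain t * ampGate t *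
        (s t (.sgn i) + (M.estimate (s t) (Fin.castLE M.le i) - s t (.mem i))) *
        (1 - s t (.sgn i) ^ 2) - gain t * resetGate t * s t (.sgn i)) 0 T :=
  h.isPrimitiveOn.apply (.sgn i)

lemma sim (h : M.IsRun x T s) (k : Fin d) : IsPrimitiveOn (fun t ↦ s t (.sim k))
    (fun t ↦ M.rate (clock t) (s t) * MvPolynomial.aeval (M.estimate (s t)) (M.p k) -
      gain t * resetGate t * s t (.sim k)) 0 T :=
  h.isPrimitiveOn.apply (.sim k)

lemma inp (h : M.IsRun x T s) (j : Fin n) : IsPrimitiveOn (fun t ↦ s t (.inp j))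
    (fun t ↦ (x t j - s t (.inp j)) * (1 + t ^ 2 - s t (.inp j) ^ 2)) 0 T :=
  h.isPrimitiveOn.apply (.inp j)

lemma level (h : M.IsRun x T s) : IsPrimitiveOn (fun t ↦ s t .level)
    (fun t ↦ gain t * resetGate t * (precision t - s t .level)) 0 T :=
  h.isPrimitiveOn.apply .level

lemma abs_sgn_le_one (h : M.IsRun x T s) (hT : 0 ≤ T) (i : Fin m) : |s T (.sgn i)| ≤ 1 := by
  have hcont := h.continuousOn_apply (.sgn i)
  have hone := (IsPrimitiveOn.const 1).sub ((h.sgn i).mul (h.sgn i))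
  have hnonneg := hone.nonneg_of_mul_le hT (h := fun t ↦ -(2 * (gain t * ampGate t) * s t (.sgn i) *
      (s t (.sgn i) + (M.estimate (s t) (Fin.castLE M.le i) - s t (.mem i)))))
    (by
      have hest := h.continuousOn_comp ((continuous_apply (Fin.castLE M.le i)).comp
        (continuous_estimate (M := M)))
      have hmem := h.continuousOn_apply (.mem i)
      have hgain := continuous_gain
      have hamp := continuous_clock .amp
      simp only [Function.comp_def, clock] at hest hamp
      fun_prop)
    (fun t _ ↦ by
      have hreset : 0 ≤ gain t * resetGate t * s t (.sgn i) ^ 2 :=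
        mul_nonneg (gain_mul_gate_nonneg _ t) (sq_nonneg _)
      linarith)
    (by simp [h.apply_zero])
  exact abs_le_one_iff_mul_self_le_one.2 (by linarith)

lemma sq_inp_le (h : M.IsRun x T s) (hT : 0 ≤ T) (j : Fin n) : s T (.inp j) ^ 2 ≤ 1 + T ^ 2 := by
  have hcont := h.continuousOn_apply (.inp j)
  have hx := continuousOn_pi.1 h.continuousOn_input j
  have hone := (IsPrimitiveOn.of_hasDerivAt fun t _ ↦ (hasDerivAt_sq t).const_add 1).sub
    ((h.inp j).mul (h.inp j))
  have hnonneg := hone.nonneg_of_mul_le hT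
    (h := fun t ↦ -(2 * s t (.inp j) * (x t j - s t (.inp j)))) (by fun_prop)
    (fun t ht ↦ by linarith [ht.1]) (by simp [h.apply_zero])
  linarith

lemma sum_sq_sim_le (h : M.IsRun x T s) (hT : 0 ≤ T) : ∑ k, s T (.sim k) ^ 2 ≤ 1 + T ^ 2 := by
  have hcont := h.continuousOn_apply
  have hone := (IsPrimitiveOn.of_hasDerivAt fun t _ ↦ (hasDerivAt_sq t).const_add 1).sub
    (IsPrimitiveOn.sum fun k ↦ (h.sim k).mul (h.sim k))
  set v : ℝ → ℝ := fun t ↦ ∑ k, 2 * s t (.sim k) * MvPolynomial.aeval (M.estimate (s t)) (M.p k)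
  have hnonneg := hone.nonneg_of_mul_le hT
    (h := fun t ↦ -(M.speed (s t) * t * simGate t * (1 + t ^ 2)⁻¹ * v t)) ?_
    (fun t ht ↦ ?_) (by simp [h.apply_zero])
  · simp only [← sq] at hnonneg
    linarith
  · have hpoly := fun k ↦ h.continuousOn_comp (continuous_aeval_estimate (M.p k) (M := M))
    have hv : ContinuousOn v (Icc 0 T) := by fun_prop
    exact ((((h.continuousOn_comp continuous_speed).mul continuousOn_id).mul
      (continuous_clock .sim).continuousOn).mul (continuous_clock .invOneAddSq).continuousOn).mul
        hv |>.neg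
  · have hreset : 0 ≤ gain t * resetGate t * ∑ k, s t (.sim k) ^ 2 :=
      mul_nonneg (gain_mul_gate_nonneg _ t) (Finset.sum_nonneg fun k _ ↦ sq_nonneg _)
    have hsum : ∑ k, ((M.rate (clock t) (s t) * MvPolynomial.aeval (M.estimate (s t)) (M.p k) -
          gain t * resetGate t * s t (.sim k)) * s t (.sim k) +
        s t (.sim k) * (M.rate (clock t) (s t) * MvPolynomial.aeval (M.estimate (s t)) (M.p k) -
          gain t * resetGate t * s t (.sim k))) =
        M.rate (clock t) (s t) * v t - 2 * (gain t * resetGate t * ∑ k, s t (.sim k) ^ 2) := by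
      simp only [v, Finset.mul_sum, ← Finset.sum_sub_distrib]
      exact Finset.sum_congr rfl fun k _ ↦ by ring
    rw [hsum]
    simp only [rate, clock, ← sq]
    linarith [ht.1]

lemma abs_level_le (h : M.IsRun x T s) (hT : 0 ≤ T) : |s T .level| ≤ 1 + T := by
  refine h.level.abs_le_of_relaxation hT (l := fun t ↦ 1 + t)
    (continuous_gain.mul (continuous_clock .reset)).continuousOn
    (fun t _ ↦ gain_mul_gate_nonneg _ t)
    (.of_hasDerivAt fun t _ ↦ (hasDerivAt_id' t).const_add 1) (fun _ _ ↦ zero_le_one)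
    (fun t ht ↦ ?_) (by simp [h.apply_zero])
  rw [abs_of_nonneg (precision_nonneg t)]
  exact precision_le_one_add ht.1.le

lemma abs_mem_le (h : M.IsRun x T s) (hT : 0 ≤ T) (i : Fin m) : |s T (.mem i)| ≤ T / 2000 := by
  have hmem : IsPrimitiveOn (fun t ↦ s t (.mem i))
      (fun t ↦ 2000 * accuracy t * (t * s t (.sgn i) / 2000 - s t (.mem i))) 0 T :=
    (h.mem i).congr_deriv fun t _ ↦ by ring
  refine hmem.abs_le_of_relaxation hT (l := fun t ↦ t / 2000)
    (continuous_const.mul (continuous_clock .accuracy)).continuousOn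
    (fun t _ ↦ mul_nonneg (by norm_num) (accuracy_pos t).le)
    (.of_hasDerivAt fun t _ ↦ (hasDerivAt_id' t).div_const 2000) (fun _ _ ↦ by norm_num)
    (fun t ht ↦ ?_) (by simp [h.apply_zero])
  rw [abs_div, abs_mul, abs_of_pos ht.1, abs_of_pos (by norm_num : (0 : ℝ) < 2000)]
  have hle := mul_le_of_le_one_right ht.1.le ((h.mono ht.2.le).abs_sgn_le_one ht.1.le i)
  linarith

lemma abs_out_le (h : M.IsRun x T s) (hT : 0 ≤ T) (i : Fin m) : |s T (.out i)| ≤ T / 2000 :=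
  (h.out i).abs_le_of_relaxation hT (l := fun t ↦ t / 2000)
    (continuous_gain.mul (continuous_clock .sample)).continuousOn
    (fun t _ ↦ gain_mul_gate_nonneg _ t)
    (.of_hasDerivAt fun t _ ↦ (hasDerivAt_id' t).div_const 2000) (fun _ _ ↦ by norm_num)
    (fun t ht ↦ (h.mono ht.2.le).abs_mem_le ht.1.le i) (by simp [h.apply_zero])

lemma norm_le (h : M.IsRun x T s) (hT : 0 ≤ T) : ‖s T‖ ≤ 1 + T := by
  have hsq : ∀ {r : ℝ}, r ^ 2 ≤ 1 + T ^ 2 → |r| ≤ 1 + T := fun hr ↦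
    abs_le_of_sq_le_sq (by nlinarith) (by linarith)
  refine (pi_norm_le_iff_of_nonneg (by linarith)).2 fun v ↦ ?_
  rw [Real.norm_eq_abs]
  cases v with
  | out i => linarith [h.abs_out_le hT i]
  | mem i => linarith [h.abs_mem_le hT i]
  | sgn i => linarith [h.abs_sgn_le_one hT i]
  | sim k =>
    exact hsq ((Finset.single_le_sum (f := fun k ↦ s T (.sim k) ^ 2) (fun _ _ ↦ sq_nonneg _)
      (Finset.mem_univ k)).trans (h.sum_sq_sim_le hT))
  | inp j => exact hsq (h.sq_inp_le hT j)
  | level => exact h.abs_level_le hT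

end IsRun

end Machine

end Bounds

section InputTracking

variable {X x : ℝ → ℝ} {t : ℝ}

lemma IsPrimitiveOn.le_one_add_sq_sub_sq
    (hX : IsPrimitiveOn X (fun s ↦ (x s - X s) * (1 + s ^ 2 - X s ^ 2)) (t - 1) t) {R : ℝ}
    (hx : ∀ s ∈ Icc (t - 1) t, |x s| ≤ R) (ht : 2 * R + 3 ≤ t)
    (hsq : ∀ s ∈ Icc (t - 1) t, X s ^ 2 ≤ 1 + s ^ 2) : t ≤ 1 + t ^ 2 - X t ^ 2 := by
  have hR : 0 ≤ R := (abs_nonneg _).trans (hx t (right_mem_Icc.2 (by linarith)))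
  have hfence : IsPrimitiveOn (fun s ↦ 1 + s ^ 2 - X s * X s - t * (s - (t - 1)))
      (fun s ↦ 2 * s + 2 * (X s * (X s - x s)) * (1 + s ^ 2 - X s ^ 2) - t) (t - 1) t :=
    (((IsPrimitiveOn.of_hasDerivAt fun s _ ↦ (hasDerivAt_sq s).const_add 1).sub
      (hX.mul hX)).sub (.of_hasDerivAt fun s _ ↦
        ((hasDerivAt_id' s).sub_const (t - 1)).const_mul t)).congr_deriv fun s _ ↦ by ring
  -- Below the fence `X s ^ 2` exceeds the square of the input, so `X` is pushed back.
  have hnonneg := hfence.nonneg_of_deriv_nonneg_of_neg (by linarith)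
    (by linarith [hsq (t - 1) (left_mem_Icc.2 (by linarith))]) fun s hs hneg ↦ by
      have hsq_s := hsq s (Ioo_subset_Icc_self hs)
      have hlow : 1 + s ^ 2 - X s ^ 2 < s := by nlinarith [hs.1, hs.2]
      have habs : |x s| ≤ |X s| := (hx s (Ioo_subset_Icc_self hs)).trans
        ((le_abs_self R).trans (sq_le_sq.1 (by nlinarith [hs.1])))
      have hback : X s * x s ≤ X s * X s := (le_abs_self _).trans <| by
        rw [abs_mul, ← abs_mul_abs_self (X s)]
        exact mul_le_mul_of_nonneg_left habs (abs_nonneg _)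
      have := mul_nonneg (show 0 ≤ X s * (X s - x s) by linarith) (sub_nonneg.2 hsq_s)
      linarith [hs.1]
  linarith

lemma IsPrimitiveOn.sq_sub_le
    (hX : IsPrimitiveOn X (fun s ↦ (x s - X s) * (1 + s ^ 2 - X s ^ 2)) (t - 2) t) {c ε : ℝ}
    (hx : ∀ s ∈ Icc (t - 2) t, |x s - c| ≤ ε) (hε : ε ≤ 1) (ht : 2 * |c| + 6 ≤ t)
    (hsq : ∀ s ∈ Icc (t - 2) t, X s ^ 2 ≤ 1 + s ^ 2) :
    (X t - c) ^ 2 ≤ ε ^ 2 + 4 * t ^ 2 * Real.exp (-(t - 1)) := by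
  have hc := abs_nonneg c
  have hw : ∀ s ∈ Icc (t - 1) t, t - 1 ≤ 1 + s ^ 2 - X s ^ 2 := fun s hs ↦ by
    have hsub : Icc (s - 1) s ⊆ Icc (t - 2) t := Icc_subset_Icc (by linarith [hs.1]) hs.2
    refine hs.1.trans ((hX.mono (by linarith [hs.1]) hs.2).le_one_add_sq_sub_sq (R := |c| + 1)
      (fun r hr ↦ ?_) (by linarith [hs.1]) fun r hr ↦ hsq r (hsub hr))
    linarith [abs_sub_abs_le_abs_sub (x r) c, hx r (hsub hr)]
  have hXt := hX.mono (show t - 2 ≤ t - 1 by linarith) le_rfl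
  obtain ⟨P, hP⟩ : ∃ P, IsPrimitiveOn P (fun s ↦ 1 + s ^ 2 - X s ^ 2) (t - 1) t :=
    have hcont := hXt.continuousOn
    ⟨_, isPrimitiveOn_integral (by linarith) (by fun_prop)⟩
  have hdist := hXt.sub (IsPrimitiveOn.const c)
  have hdecay := ((hdist.mul hdist).sub (IsPrimitiveOn.const (ε ^ 2))).le_mul_exp (by linarith)
    hP.neg fun s hs ↦ by
      have hsq_s := (sq_le_sq₀ (abs_nonneg _) ((abs_nonneg _).trans (hx s ⟨by linarith [hs.1],
        hs.2.le⟩))).2 (hx s ⟨by linarith [hs.1], hs.2.le⟩)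
      rw [sq_abs] at hsq_s
      have := mul_nonneg (show 0 ≤ ε ^ 2 - (X s - c) ^ 2 - 2 * (X s - c) * (x s - X s) by
        nlinarith [sq_nonneg (x s - X s)])
        ((by linarith : 0 ≤ t - 1).trans (hw s (Ioo_subset_Icc_self hs)))
      linarith
  have hexp := Real.exp_le_exp.2 (show -P t - -P (t - 1) ≤ -(t - 1) by
    linarith [hP.mul_sub_le_sub (by linarith) fun s hs ↦ hw s (Ioo_subset_Icc_self hs)])
  have hinit : (X (t - 1) - c) ^ 2 ≤ 4 * t ^ 2 := by
    have := abs_le_of_sq_le_sq' (b := t)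
      ((hsq (t - 1) ⟨by linarith, by linarith⟩).trans (by nlinarith)) (by linarith)
    have := abs_le.1 (show |c| ≤ t by linarith)
    nlinarith
  have hsq_init : (X (t - 1) - c) * (X (t - 1) - c) - ε ^ 2 ≤ 4 * t ^ 2 := by
    nlinarith [sq_nonneg ε]
  have := hdecay.trans <|
    (mul_le_mul_of_nonneg_right hsq_init (Real.exp_pos _).le).trans
      (mul_le_mul_of_nonneg_left hexp (by positivity))
  linarith

end InputTracking

section Simulation

variable {E : Type*} [NormedAddCommGroup E] [NormedSpace ℝ E]

lemma IsPrimitiveOn.norm_le_gronwallBound {y y' : ℝ → E} {a b K ε : ℝ} (hab : a ≤ b)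
    (hy : IsPrimitiveOn y y' a b) (hle : ∀ t ∈ Ioo a b, ‖y' t‖ ≤ K * ‖y t‖ + ε) :
    ‖y b‖ ≤ gronwallBound ‖y a‖ K ε (b - a) := by
  rcases hab.eq_or_lt with rfl | hab
  · simp [gronwallBound_x0]
  have hcont : Continuous fun q : ℝ × ℝ ↦ gronwallBound q.1 K ε q.2 := by
    rcases eq_or_ne K 0 with rfl | hK
    · simp only [gronwallBound_K0]
      fun_prop
    · simp only [gronwallBound_of_K_ne_0 hK]
      fun_prop
  have ha : ContinuousWithinAt y (Ioi a) a :=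
    (hy.continuousOn a (left_mem_Icc.2 hab.le)).mono_of_mem_nhdsWithin (Icc_mem_nhdsGT hab)
  have hlim : Tendsto (fun t ↦ gronwallBound ‖y t‖ K ε (b - t)) (𝓝[>] a)
      (𝓝 (gronwallBound ‖y a‖ K ε (b - a))) :=
    (hcont.tendsto _).comp (ha.norm.tendsto.prodMk_nhds
      ((continuous_const.sub continuous_id).continuousWithinAt.tendsto))
  refine ge_of_tendsto hlim ?_
  filter_upwards [Ioo_mem_nhdsGT hab] with t ht
  exact norm_le_gronwallBound_of_norm_deriv_right_le
    (hy.continuousOn.mono (Icc_subset_Icc_left ht.1.le))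
    (fun r hr ↦ (hy.hasDerivAt r ⟨ht.1.trans_le hr.1, hr.2⟩).hasDerivWithinAt) le_rfl
    (fun r hr ↦ hle r ⟨ht.1.trans_le hr.1, hr.2⟩) b (right_mem_Icc.2 ht.2.le)

lemma IsPrimitiveOn.norm_le_mul_exp {y y' : ℝ → E} {a b K ε : ℝ} (hab : a ≤ b)
    (hy : IsPrimitiveOn y y' a b) (hε : 0 ≤ ε)
    (hle : ∀ t ∈ Ioo a b, ‖y' t‖ ≤ K * (‖y t‖ + ε)) :
    ‖y b‖ ≤ (‖y a‖ + ε) * Real.exp (K * (b - a)) := by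
  have hbound := hy.norm_le_gronwallBound hab (K := K) (ε := K * ε) fun t ht ↦ by
    linarith [hle t ht]
  rcases eq_or_ne K 0 with rfl | hK
  · simp only [gronwallBound_K0, zero_mul, Real.exp_zero] at hbound ⊢
    linarith
  · simp only [gronwallBound_of_K_ne_0 hK, mul_div_cancel_left₀ ε hK] at hbound
    linarith

lemma IsPrimitiveOn.scomp {y y' : ℝ → E} {σ r : ℝ → ℝ} {a b : ℝ} (hσ : IsPrimitiveOn σ r a b)
    (hy : ∀ t ∈ Icc a b, HasDerivAt y (y' (σ t)) (σ t)) :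
    IsPrimitiveOn (fun t ↦ y (σ t)) (fun t ↦ r t • y' (σ t)) a b where
  continuousOn t ht :=
    (hy t ht).continuousAt.comp_continuousWithinAt (hσ.continuousOn t ht)
  hasDerivAt t ht := (hy t (Ioo_subset_Icc_self ht)).scomp t (hσ.hasDerivAt t ht)

lemma integral_mem_Icc_mul {r : ℝ → ℝ} {a b ϱ : ℝ} (hr : ContinuousOn r (Icc a b))
    (hr_mem : ∀ t ∈ Icc a b, r t ∈ Icc 0 ϱ) {t : ℝ} (ht : t ∈ Icc a b) :
    ∫ u in a..t, r u ∈ Icc 0 (ϱ * (b - a)) := by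
  have hσ := isPrimitiveOn_integral ht.1 (hr.mono (Icc_subset_Icc_right ht.2))
  have hlow := hσ.mul_sub_le_sub ht.1 fun u hu ↦ (hr_mem u ⟨hu.1.le, hu.2.le.trans ht.2⟩).1
  have hup := hσ.sub_le_mul_sub ht.1 fun u hu ↦ (hr_mem u ⟨hu.1.le, hu.2.le.trans ht.2⟩).2
  rw [intervalIntegral.integral_same, sub_zero] at hlow hup
  have := mul_le_mul_of_nonneg_left (sub_le_sub_right ht.2 a)
    ((hr_mem t ht).1.trans (hr_mem t ht).2)
  exact ⟨by linarith, by linarith⟩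

lemma norm_sub_smul_le {v p p' : E} {r ϱ c κ : ℝ} (hv : ‖v - r • p‖ ≤ κ) (hr : r ∈ Icc 0 ϱ)
    (hp : ‖p - p'‖ ≤ c) : ‖v - r • p'‖ ≤ κ + ϱ * c :=
  calc ‖v - r • p'‖ ≤ ‖v - r • p‖ + ‖r • p - r • p'‖ := norm_sub_le_norm_sub_add_norm_sub ..
    _ ≤ κ + ϱ * c := by
      rw [← smul_sub, norm_smul, Real.norm_of_nonneg hr.1]
      gcongr
      · exact hr.1.trans hr.2
      · exact hr.2

/-- `V` follows the solution `y` of an autonomous equation along the time change `∫ r`, even when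
the field is evaluated at a perturbation `Z` of `y 0 + V` and is only Lipschitz near `y`. -/
lemma norm_sub_integral_le {P : E → E} {y V V' Z : ℝ → E} {r : ℝ → ℝ} {a b B L κ ρ ϱ : ℝ}
    (hy : ∀ τ, 0 ≤ τ → HasDerivAt y (P (y τ)) τ) (hB : ∀ τ ∈ Icc 0 (ϱ * (b - a)), ‖y τ‖ ≤ B)
    (hL : ∀ z z', ‖z‖ ≤ B + 2 → ‖z'‖ ≤ B + 2 → ‖P z - P z'‖ ≤ L * ‖z - z'‖)
    (hr : ContinuousOn r (Icc a b)) (hr_mem : ∀ t ∈ Icc a b, r t ∈ Icc 0 ϱ)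
    (hV : IsPrimitiveOn V V' a b) (hVa : ‖V a‖ ≤ κ)
    (hV' : ∀ t ∈ Ioo a b, ‖V' t - r t • P (Z t)‖ ≤ κ)
    (hZ : ∀ t ∈ Icc a b, ‖Z t - (y 0 + V t)‖ ≤ κ) (hκ : κ ≤ 1) (hL0 : 0 ≤ L) (hϱL : 1 ≤ ϱ * L)
    (hρ : 3 * κ * Real.exp (ϱ * L * (b - a)) ≤ ρ) (hρ1 : ρ < 1) :
    ∀ t ∈ Icc a b, ‖Z t - y (∫ u in a..t, r u)‖ ≤ ρ + κ := by
  set σ : ℝ → ℝ := fun t ↦ ∫ u in a..t, r u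
  intro t₀ ht₀
  have hab : a ≤ b := ht₀.1.trans ht₀.2
  have hσ : IsPrimitiveOn σ r a b := isPrimitiveOn_integral hab hr
  have hσa : σ a = 0 := intervalIntegral.integral_same
  have hσ_mem : ∀ t ∈ Icc a b, σ t ∈ Icc 0 (ϱ * (b - a)) := fun t ↦ integral_mem_Icc_mul hr hr_mem
  set err : ℝ → E := fun t ↦ y 0 + V t - y (σ t)
  have herr : IsPrimitiveOn err (fun t ↦ V' t - r t • P (y (σ t))) a b :=
    (hV.const_add (y 0)).sub (hσ.scomp (y' := fun τ ↦ P (y τ)) fun t ht ↦ hy _ (hσ_mem t ht).1)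
  have herr_a : ‖err a‖ ≤ κ := by simpa [err, hσa] using hVa
  have hdist : ∀ t ∈ Icc a b, ‖Z t - y (σ t)‖ ≤ ‖err t‖ + κ := fun t ht ↦ by
    have : Z t - y (σ t) = err t + (Z t - (y 0 + V t)) := by simp only [err]; abel
    exact this ▸ norm_add_le_of_le le_rfl (hZ t ht)
  have hκ0 : 0 ≤ κ := (norm_nonneg _).trans hVa
  have herr_lt : ∀ t ∈ Icc a b, (∀ u ∈ Ico a t, ‖err u‖ < 1) → ‖err t‖ ≤ ρ := fun t ht hlt ↦ by
    have hbound := (herr.mono le_rfl ht.2).norm_le_mul_exp ht.1 (K := ϱ * L)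
      (mul_nonneg zero_le_two hκ0) fun u hu ↦ by
        have hu' : u ∈ Icc a b := ⟨hu.1.le, hu.2.le.trans ht.2⟩
        have hyu := hB _ (hσ_mem u hu')
        have hlip := (hL (Z u) (y (σ u)) (by
          linarith [norm_le_norm_add_norm_sub' (Z u) (y (σ u)), hdist u hu', hlt u ⟨hu.1.le, hu.2⟩])
          (by linarith)).trans (mul_le_mul_of_nonneg_left (hdist u hu') hL0)
        linarith [norm_sub_smul_le (hV' u ⟨hu.1, hu.2.trans_le ht.2⟩) (hr_mem u hu') hlip,
          mul_le_mul_of_nonneg_right hϱL hκ0]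
    have hexp : Real.exp (ϱ * L * (t - a)) ≤ Real.exp (ϱ * L * (b - a)) := by gcongr; exact ht.2
    have := mul_le_mul (by linarith : ‖err a‖ + 2 * κ ≤ 3 * κ) hexp (Real.exp_pos _).le
      (by positivity)
    linarith
  linarith [hdist t₀ ht₀, herr_lt t₀ ht₀ fun u hu ↦ forall_lt_of_forall_Ico_lt
    herr.continuousOn.norm (fun t ht h ↦ (herr_lt t ht h).trans_lt hρ1) u
      ⟨hu.1, hu.2.le.trans ht₀.2⟩]

namespace Machine

variable {m n d : ℕ} {M : Machine m n d} {x : ℝ → Fin n → ℝ} {T : ℝ} {s : ℝ → Var m n d → ℝ}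

lemma rate_clock (t : ℝ) (v : Var m n d → ℝ) : M.rate (clock t) v = M.speed v * t * simGate t *
    ((1 + t ^ 2 - ∑ k, v (.sim k) ^ 2) * (1 + t ^ 2)⁻¹) := rfl

namespace IsRun

lemma continuousOn_rate (h : M.IsRun x T s) :
    ContinuousOn (fun t ↦ M.rate (clock t) (s t)) (Icc 0 T) := by
  have hsim := fun k ↦ h.continuousOn_apply (.sim k)
  exact (((h.continuousOn_comp continuous_speed).mul continuousOn_id).mul
    (continuous_clock .sim).continuousOn).mul
      (((continuousOn_const.add (continuousOn_id.pow 2)).sub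
        (continuousOn_finsetSum _ fun k _ ↦ (hsim k).pow 2)).mul
        (continuous_clock .invOneAddSq).continuousOn)

lemma rate_mem_Icc (h : M.IsRun x T s) (hT : 0 ≤ T) {S : ℝ} (hspeed : M.speed (s T) ∈ Icc 0 S) :
    M.rate (clock T) (s T) ∈ Icc 0 (S * T) := by
  have hsum := h.sum_sq_sim_le hT
  have hsum0 : 0 ≤ ∑ k, s T (.sim k) ^ 2 := Finset.sum_nonneg fun _ _ ↦ sq_nonneg _
  have hfactor : (1 + T ^ 2 - ∑ k, s T (.sim k) ^ 2) * (1 + T ^ 2)⁻¹ ∈ Icc (0 : ℝ) 1 := by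
    rw [← div_eq_mul_inv]
    exact ⟨div_nonneg (by linarith) (by positivity),
      div_le_one_of_le₀ (by linarith) (by positivity)⟩
  have hST := mul_nonneg hspeed.1 hT
  rw [rate_clock]
  refine ⟨mul_nonneg (mul_nonneg hST (gate_pos _ T).le) hfactor.1, ?_⟩
  exact (mul_le_of_le_one_right (mul_nonneg hST (gate_pos _ T).le) hfactor.2).trans <|
    (mul_le_of_le_one_right hST (gate_le_one _ T)).trans (mul_le_mul_of_nonneg_right hspeed.2 hT)

end IsRun

lemma le_rate {S t : ℝ} {v : Var m n d → ℝ} (ht : 0 ≤ t) (hS : 0 ≤ S) (hspeed : S ≤ M.speed v)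
    (hgate : 1 / 2 ≤ simGate t) (hsum : ∑ k, v (.sim k) ^ 2 ≤ (1 + t ^ 2) / 2) :
    S * t / 4 ≤ M.rate (clock t) v := by
  have hfactor : 1 / 2 ≤ (1 + t ^ 2 - ∑ k, v (.sim k) ^ 2) * (1 + t ^ 2)⁻¹ := by
    rw [← div_eq_mul_inv, le_div_iff₀ (by positivity)]
    linarith
  calc S * t / 4 = S * t * (1 / 2) * (1 / 2) := by ring
    _ ≤ M.speed v * t * simGate t * ((1 + t ^ 2 - ∑ k, v (.sim k) ^ 2) * (1 + t ^ 2)⁻¹) := by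
      gcongr
      · exact mul_nonneg (mul_nonneg (hS.trans hspeed) ht) (gate_pos _ t).le
      · exact mul_nonneg (hS.trans hspeed) ht

/-- The conditions under which the machine simulates the solution `y` of its differential equation
on the window `[a, b]`: `y` is bounded by `B` for the simulated time available, the field is
`L`-Lipschitz around it, and all perturbations are at most `κ`, leading to an error `ρ`. -/
structure SimulatesOn (M : Machine m n d) (s : ℝ → Var m n d → ℝ) (y : ℝ → Fin d → ℝ)
    (a b B L S κ ρ : ℝ) : Prop where
  hasDerivAt : ∀ τ, 0 ≤ τ → HasDerivAt y (fun k ↦ MvPolynomial.aeval (y τ) (M.p k)) τ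
  norm_le : ∀ τ ∈ Icc 0 S, ‖y τ‖ ≤ B
  lipschitz : ∀ z z' : Fin d → ℝ, ‖z‖ ≤ B + 2 → ‖z'‖ ≤ B + 2 →
    ‖(fun k ↦ MvPolynomial.aeval z (M.p k)) - fun k ↦ MvPolynomial.aeval z' (M.p k)‖ ≤ L * ‖z - z'‖
  one_le_lipschitz : 1 ≤ L
  initial_le : ∀ t ∈ Icc a b,
    ‖M.initial (fun j ↦ s t (.inp j)) (s t .level) - y 0‖ ≤ κ
  sim_le : ‖fun k ↦ s a (.sim k)‖ ≤ κ
  leak_le : ∀ t ∈ Icc a b, gain t * resetGate t * ‖fun k ↦ s t (.sim k)‖ ≤ κ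
  speed_mem : ∀ t ∈ Icc a b, M.speed (s t) ∈ Icc 0 S
  one_le_speed : 1 ≤ S
  one_le_left : 1 ≤ a
  mul_sub_le_one : b * (b - a) ≤ 1
  le_one : κ ≤ 1
  error_le : 3 * κ * Real.exp (S * L) ≤ ρ
  error_lt_one : ρ < 1

namespace SimulatesOn

variable {y : ℝ → Fin d → ℝ} {a b B L S κ ρ : ℝ}

lemma mul_mul_sub_le (hs : M.SimulatesOn s y a b B L S κ ρ) : S * b * (b - a) ≤ S := by
  nlinarith [hs.mul_sub_le_one, hs.one_le_speed]

lemma rate_mem_Icc (hs : M.SimulatesOn s y a b B L S κ ρ) (h : M.IsRun x T s) (hb : b ≤ T) :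
    ∀ t ∈ Icc a b, M.rate (clock t) (s t) ∈ Icc 0 (S * b) := fun t ht ↦ by
  have hrate := (h.mono (ht.2.trans hb)).rate_mem_Icc (by linarith [ht.1, hs.one_le_left])
    (hs.speed_mem t ht)
  exact ⟨hrate.1, hrate.2.trans
    (mul_le_mul_of_nonneg_left ht.2 (zero_le_one.trans hs.one_le_speed))⟩

lemma continuousOn_rate (hs : M.SimulatesOn s y a b B L S κ ρ) (h : M.IsRun x T s) (hb : b ≤ T) :
    ContinuousOn (fun t ↦ M.rate (clock t) (s t)) (Icc a b) :=
  h.continuousOn_rate.mono (Icc_subset_Icc (zero_le_one.trans hs.one_le_left) hb)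

lemma norm_estimate_sub_le (hs : M.SimulatesOn s y a b B L S κ ρ) (h : M.IsRun x T s)
    (hb : b ≤ T) {t : ℝ} (ht : t ∈ Icc a b) :
    ‖M.estimate (s t) - y (∫ u in a..t, M.rate (clock u) (s u))‖ ≤ ρ + κ := by
  have ha := hs.one_le_left
  have hSb : 1 ≤ S * b * L := one_le_mul_of_one_le_of_one_le
    (one_le_mul_of_one_le_of_one_le hs.one_le_speed (ha.trans (ht.1.trans ht.2)))
    hs.one_le_lipschitz
  refine norm_sub_integral_le (P := fun z k ↦ MvPolynomial.aeval z (M.p k))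
    (V := fun t k ↦ s t (.sim k)) (Z := fun t ↦ M.estimate (s t)) (ϱ := S * b)
    (V' := fun t k ↦ M.rate (clock t) (s t) * MvPolynomial.aeval (M.estimate (s t)) (M.p k) -
      gain t * resetGate t * s t (.sim k)) hs.hasDerivAt
    (fun τ hτ ↦ hs.norm_le τ ⟨hτ.1, hτ.2.trans hs.mul_mul_sub_le⟩) hs.lipschitz
    (hs.continuousOn_rate h hb) (hs.rate_mem_Icc h hb)
    ?_ hs.sim_le (fun t ht ↦ ?_) (fun t ht ↦ ?_) hs.le_one
    (zero_le_one.trans hs.one_le_lipschitz) hSb ?_ hs.error_lt_one t ht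
  · exact .pi fun k ↦ (h.sim k).mono (by linarith) hb
  · have hdiff : (fun k ↦ M.rate (clock t) (s t) * MvPolynomial.aeval (M.estimate (s t)) (M.p k) -
          gain t * resetGate t * s t (.sim k)) -
        M.rate (clock t) (s t) • (fun k ↦ MvPolynomial.aeval (M.estimate (s t)) (M.p k)) =
        -((gain t * resetGate t) • fun k ↦ s t (.sim k)) := by
      ext k
      simp only [Pi.sub_apply, Pi.smul_apply, Pi.neg_apply, smul_eq_mul]
      ring
    rw [hdiff, norm_neg, norm_smul,
      Real.norm_of_nonneg (r := gain t * resetGate t) (gain_mul_gate_nonneg _ t)]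
    exact hs.leak_le t (Ioo_subset_Icc_self ht)
  · have hdiff : M.estimate (s t) - (y 0 + fun k ↦ s t (.sim k)) =
        M.initial (fun j ↦ s t (.inp j)) (s t .level) - y 0 := by
      ext k
      simp only [Pi.sub_apply, Pi.add_apply, estimate_apply]
      ring
    exact hdiff ▸ hs.initial_le t ht
  · refine le_trans ?_ hs.error_le
    have hκ : 0 ≤ κ := (norm_nonneg _).trans hs.sim_le
    have hL := zero_le_one.trans hs.one_le_lipschitz
    refine mul_le_mul_of_nonneg_left (Real.exp_le_exp.2 ?_) (by positivity)
    linarith [mul_le_mul_of_nonneg_right hs.mul_mul_sub_le hL]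

lemma norm_sim_le (hs : M.SimulatesOn s y a b B L S κ ρ) (h : M.IsRun x T s) (hb : b ≤ T)
    {t : ℝ} (ht : t ∈ Icc a b) : ‖fun k ↦ s t (.sim k)‖ ≤ 2 * B + 3 := by
  set τ := ∫ u in a..t, M.rate (clock u) (s u)
  have hτ := integral_mem_Icc_mul (hs.continuousOn_rate h hb) (hs.rate_mem_Icc h hb) ht
  have hest := hs.norm_estimate_sub_le h hb ht
  have hinit := hs.initial_le t ht
  have hyτ := hs.norm_le τ ⟨hτ.1, hτ.2.trans hs.mul_mul_sub_le⟩
  have hy0 := hs.norm_le 0 ⟨le_rfl, zero_le_one.trans hs.one_le_speed⟩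
  have hdiff : (fun k ↦ s t (.sim k)) = M.estimate (s t) - y τ -
      (M.initial (fun j ↦ s t (.inp j)) (s t .level) - y 0) + (y τ - y 0) := by
    ext k
    simp only [Pi.sub_apply, Pi.add_apply, estimate_apply]
    ring
  rw [hdiff]
  have := norm_add_le_of_le (norm_sub_le_of_le hest hinit) (norm_sub_le_of_le hyτ hy0)
  linarith [hs.error_lt_one, hs.le_one]

lemma sum_sq_sim_le (hs : M.SimulatesOn s y a b B L S κ ρ) (h : M.IsRun x T s) (hb : b ≤ T)
    (hd : d * (2 * B + 3) ^ 2 ≤ (1 + a ^ 2) / 2) {t : ℝ} (ht : t ∈ Icc a b) :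
    ∑ k, s t (.sim k) ^ 2 ≤ (1 + t ^ 2) / 2 := by
  have hsim := fun k ↦ (norm_le_pi_norm (fun k ↦ s t (.sim k)) k).trans (hs.norm_sim_le h hb ht)
  calc ∑ k, s t (.sim k) ^ 2 ≤ ∑ _k : Fin d, (2 * B + 3) ^ 2 :=
        Finset.sum_le_sum fun k _ ↦ sq_le_sq' (abs_le.1 (hsim k)).1 (abs_le.1 (hsim k)).2
    _ = d * (2 * B + 3) ^ 2 := by simp
    _ ≤ (1 + t ^ 2) / 2 := by nlinarith [ht.1, hs.one_le_left]

lemma exists_norm_estimate_sub_le (hs : M.SimulatesOn s y a b B L S κ ρ) (h : M.IsRun x T s)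
    (hb : b ≤ T) (hd : d * (2 * B + 3) ^ 2 ≤ (1 + a ^ 2) / 2) {w₁ w₂ S₀ : ℝ} (haw : a ≤ w₁)
    (hw : w₁ ≤ w₂) (hwb : w₂ ≤ b) (hww : 1 / 16 ≤ w₂ ^ 2 - w₁ ^ 2)
    (hgate : ∀ t ∈ Icc w₁ w₂, 1 / 2 ≤ simGate t) (hS₀ : 0 ≤ S₀)
    (hspeed : ∀ t ∈ Icc w₁ w₂, S₀ ≤ M.speed (s t)) {t : ℝ} (ht : t ∈ Icc w₂ b) :
    ∃ τ, S₀ / 128 ≤ τ ∧ ‖M.estimate (s t) - y τ‖ ≤ ρ + κ := by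
  have ha := hs.one_le_left
  have htab : t ∈ Icc a b := ⟨haw.trans (hw.trans ht.1), ht.2⟩
  refine ⟨_, ?_, hs.norm_estimate_sub_le h hb htab⟩
  have hσ := isPrimitiveOn_integral htab.1
    ((hs.continuousOn_rate h hb).mono (Icc_subset_Icc_right ht.2))
  have hnonneg := fun u hu ↦ (hs.rate_mem_Icc h hb u hu).1
  have hbefore := (hσ.mono le_rfl (hw.trans ht.1)).mul_sub_le_sub haw (c := 0) fun u hu ↦
    hnonneg u ⟨hu.1.le, by linarith [hu.2, ht.1, ht.2]⟩
  have hafter := (hσ.mono (haw.trans hw) le_rfl).mul_sub_le_sub ht.1 (c := 0) fun u hu ↦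
    hnonneg u ⟨by linarith [hu.1], hu.2.le.trans ht.2⟩
  have hlin : IsPrimitiveOn (fun u ↦ S₀ / 8 * u ^ 2) (fun u ↦ S₀ / 8 * (2 * u)) w₁ w₂ :=
    .of_hasDerivAt fun u _ ↦ (hasDerivAt_sq u).const_mul (S₀ / 8)
  have hduring := hlin.sub_le_sub hw (hσ.mono haw ht.1) fun u hu ↦ by
    have := le_rate (by linarith [hu.1]) hS₀ (hspeed u (Ioo_subset_Icc_self hu))
      (hgate u (Ioo_subset_Icc_self hu))
      (hs.sum_sq_sim_le h hb hd ⟨by linarith [hu.1], by linarith [hu.2]⟩)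
    linarith
  rw [intervalIntegral.integral_same] at hbefore
  nlinarith

end SimulatesOn

end Machine

end Simulation

section Amplifier

lemma IsPrimitiveOn.mul_sq_sub_sq_le {y y' : ℝ → ℝ} {a b c : ℝ} (hab : a ≤ b)
    (hy : IsPrimitiveOn y y' a b) (hle : ∀ t ∈ Ioo a b, c * (2 * t) ≤ y' t) :
    c * (b ^ 2 - a ^ 2) ≤ y b - y a := by
  have hsq : IsPrimitiveOn (fun t ↦ c * t ^ 2) (fun t ↦ c * (2 * t)) a b :=
    .of_hasDerivAt fun t _ ↦ (hasDerivAt_sq t).const_mul c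
  linarith [hsq.sub_le_sub hab hy hle]

section Bistable

variable {D e k c P : ℝ → ℝ} {a b θ : ℝ}

lemma IsPrimitiveOn.neg_le_of_bistable (hab : a ≤ b)
    (hD : IsPrimitiveOn D (fun t ↦ k t * (D t + e t) * (1 - D t ^ 2) - c t * D t) a b)
    (hk : Continuous k) (hk₀ : ∀ t, 0 ≤ k t) (hc : Continuous c) (hc₀ : ∀ t, 0 ≤ c t) (hθ : 0 ≤ θ)
    (he : ∀ t ∈ Ioo a b, θ ≤ e t) (hD₁ : ∀ t ∈ Ioo a b, |D t| ≤ 1) (ha : -θ ≤ D a) :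
    -θ ≤ D b := by
  have hcont := hD.continuousOn
  have hnonneg := (hD.const_add θ).nonneg_of_mul_le hab
    (h := fun t ↦ k t * (1 - D t ^ 2) - c t) (by fun_prop) (fun t ht ↦ by
      have hsq : 0 ≤ 1 - D t ^ 2 := sub_nonneg.2 ((sq_le_one_iff_abs_le_one _).2 (hD₁ t ht))
      have := mul_nonneg (mul_nonneg (hk₀ t) hsq) (sub_nonneg.2 (he t ht))
      linarith [mul_nonneg (hc₀ t) hθ])
    (neg_le_iff_add_nonneg'.1 ha)
  linarith

lemma bistable_ratio_deriv_le {D e k c θ : ℝ} (hk : 0 ≤ k) (hc : 0 ≤ c) (hθ : 0 < θ)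
    (hθ₁ : 2 * θ ≤ 1) (he : 2 * θ ≤ e) (hD : -θ ≤ D) (hD₁ : D ≤ 1) (hcθ : c ≤ θ / 40) :
    -((1 + 2 * θ) / (D + 2 * θ) ^ 2 * (k * (D + e) * (1 - D ^ 2) - c * D)) +
      k * ((1 - D) / (D + 2 * θ)) ≤ 1 / 20 := by
  have hpos : 0 < D + 2 * θ := by linarith
  have hfactor : 1 ≤ (1 + D) * (1 + 2 * θ) := by nlinarith
  have hpush : k * (1 - D) * (D + 2 * θ) ≤
      k * (1 - D) * ((D + e) * ((1 + D) * (1 + 2 * θ))) := by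
    refine mul_le_mul_of_nonneg_left ?_ (mul_nonneg hk (sub_nonneg.2 hD₁))
    exact (by linarith : D + 2 * θ ≤ D + e).trans (le_mul_of_one_le_right (by linarith) hfactor)
  have hcD : c * D ≤ θ / 40 * (D + 2 * θ) :=
    (mul_le_mul_of_nonneg_left (by linarith) hc).trans (mul_le_mul_of_nonneg_right hcθ hpos.le)
  have hleak : (1 + 2 * θ) * (c * D) ≤ 1 / 20 * (D + 2 * θ) ^ 2 :=
    calc (1 + 2 * θ) * (c * D) ≤ (1 + 2 * θ) * (θ / 40 * (D + 2 * θ)) :=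
          mul_le_mul_of_nonneg_left hcD (by linarith)
      _ ≤ 2 * ((D + 2 * θ) / 40 * (D + 2 * θ)) := by gcongr <;> linarith
      _ = 1 / 20 * (D + 2 * θ) ^ 2 := by ring
  calc _ = (k * (1 - D) * (D + 2 * θ) - k * (1 - D) * ((D + e) * ((1 + D) * (1 + 2 * θ))) +
        (1 + 2 * θ) * (c * D)) / (D + 2 * θ) ^ 2 := by field_simp; ring
    _ ≤ 1 / 20 := by
        rw [div_le_iff₀ (by positivity)]
        linarith

/-- A bistable element pushed upwards reaches the upper half within one time unit, provided its
total gain `P b - P a` beats the initial distance `θ` from the threshold. -/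
lemma IsPrimitiveOn.half_le_of_bistable (hab : a ≤ b) (hba : b ≤ a + 1)
    (hD : IsPrimitiveOn D (fun t ↦ k t * (D t + e t) * (1 - D t ^ 2) - c t * D t) a b)
    (hk : Continuous k) (hk₀ : ∀ t, 0 ≤ k t) (hc : Continuous c) (hc₀ : ∀ t, 0 ≤ c t) (hθ : 0 < θ)
    (hθ₁ : 2 * θ ≤ 1) (he : ∀ t ∈ Ioo a b, 2 * θ ≤ e t) (hD₁ : ∀ t ∈ Icc a b, |D t| ≤ 1)
    (hcθ : ∀ t ∈ Ioo a b, c t ≤ θ / 40) (ha : -θ ≤ D a) (hP : IsPrimitiveOn P k a b)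
    (hgain : 2 / θ * Real.exp (-(P b - P a)) ≤ 1 / 4) : 1 / 2 ≤ D b := by
  have hge : ∀ t ∈ Icc a b, -θ ≤ D t := fun t ht ↦
    (hD.mono le_rfl ht.2).neg_le_of_bistable ht.1 hk hk₀ hc hc₀ hθ.le
      (fun s hs ↦ by linarith [he s ⟨hs.1, hs.2.trans_le ht.2⟩])
      (fun s hs ↦ hD₁ s ⟨hs.1.le, hs.2.le.trans ht.2⟩) ha
  have hpos : ∀ t ∈ Icc a b, θ ≤ D t + 2 * θ := fun t ht ↦ by linarith [hge t ht]
  have hne : ∀ t ∈ Icc a b, D t + 2 * θ ≠ 0 := fun t ht ↦ (hθ.trans_le (hpos t ht)).ne'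
  -- In the coordinate `ψ` the equation is linear up to the leak `c`.
  set ψ : ℝ → ℝ := fun t ↦ (1 - D t) / (D t + 2 * θ)
  have hψ : IsPrimitiveOn ψ (fun t ↦ -((1 + 2 * θ) / (D t + 2 * θ) ^ 2 *
      (k t * (D t + e t) * (1 - D t ^ 2) - c t * D t))) a b :=
    ⟨(continuousOn_const.sub hD.continuousOn).div (hD.continuousOn.add continuousOn_const) hne,
      fun t ht ↦ by
        have hne := hne t (Ioo_subset_Icc_self ht)
        refine (((hD.hasDerivAt t ht).const_sub 1).div ((hD.hasDerivAt t ht).add_const _)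
          hne).congr_deriv ?_
        field_simp
        ring⟩
  have hψb := hψ.le_mul_exp_add hab hP (fun t _ ↦ hk₀ t) (l := 1 / 20) (by norm_num)
    fun t ht ↦ bistable_ratio_deriv_le (hk₀ t) (hc₀ t) hθ hθ₁ (he t ht)
      (hge t (Ioo_subset_Icc_self ht)) (abs_le.1 (hD₁ t (Ioo_subset_Icc_self ht))).2 (hcθ t ht)
  have hψa : ψ a ≤ 2 / θ := by
    have := abs_le.1 (hD₁ a (left_mem_Icc.2 hab))
    exact div_le_div₀ (by norm_num) (by linarith) hθ (hpos a (left_mem_Icc.2 hab))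
  have hψb' : (1 - D b) / (D b + 2 * θ) ≤ 3 / 10 := by
    have := mul_le_mul_of_nonneg_right hψa (Real.exp_pos (-(P b - P a))).le
    linarith
  rw [div_le_iff₀ (by linarith [hpos b (right_mem_Icc.2 hab)])] at hψb'
  linarith

end Bistable

lemma abs_accuracy_sub_le {s t : ℝ} (hs : 1 ≤ s) (hst : s ≤ t) (h : t ^ 2 - s ^ 2 ≤ 1) :
    |accuracy t - accuracy s| ≤ accuracy s / 1000 := by
  have hprec := abs_precision_sub_le hs hst
  have hexp := Real.abs_exp_sub_one_le (x := -(precision t - precision s))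
    (by rw [abs_neg]; linarith)
  rw [abs_neg] at hexp
  calc |accuracy t - accuracy s|
      = accuracy s * |Real.exp (-(precision t - precision s)) - 1| := by
        rw [← abs_of_pos (accuracy_pos s), ← abs_mul, abs_of_pos (accuracy_pos s), mul_sub,
          ← exp_neg_precision, ← exp_neg_precision, ← Real.exp_add]
        ring_nf
    _ ≤ accuracy s * (1 / 1000) :=
        mul_le_mul_of_nonneg_left (by linarith) (accuracy_pos s).le
    _ = accuracy s / 1000 := by ring

/-- One cycle of the memory `G` holding the value `f`, known through the estimate `Z`. The bistable
variable `D` is reset before `T₀`, takes the sign of `Z - G` through the amplification in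
`[w₁, w₂]`, keeps it on `[T₁, T₂]`, and is free to decay on `[T₂, T₃]`. Errors are measured in units
of the accuracy at `T₀`. -/
structure MemoryCycle (T₀ w₁ w₂ T₁ T₂ T₃ : ℝ) (D G Z : ℝ → ℝ) (f : ℝ) : Prop where
  one_le : 1 ≤ T₀
  le_amp : T₀ ≤ w₁
  amp_le : w₁ ≤ w₂
  le_hold : w₂ ≤ T₁
  hold_le : T₁ ≤ T₂
  le_end : T₂ ≤ T₃
  sq_amp : 1 / 16 ≤ w₂ ^ 2 - w₁ ^ 2
  sq_hold : T₁ ^ 2 = T₀ ^ 2 + 1 / 4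
  sq_decay : T₂ ^ 2 = T₁ ^ 2 + 1 / 4
  sq_end : T₃ ^ 2 = T₂ ^ 2 + 1 / 2
  sgn : IsPrimitiveOn D (fun t ↦ gain t * ampGate t * (D t + (Z t - G t)) * (1 - D t ^ 2) -
    gain t * resetGate t * D t) T₀ T₃
  mem : IsPrimitiveOn G (fun t ↦ accuracy t * (t * D t - 2000 * G t)) T₀ T₃
  abs_sgn_le : ∀ t ∈ Icc T₀ T₃, |D t| ≤ 1
  abs_mem_le : ∀ t ∈ Icc T₀ T₃, |G t| ≤ t / 2000
  abs_value_le : 200000 * |f| ≤ T₀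
  abs_estimate_sub_le : ∀ t ∈ Icc T₀ T₂, |Z t - f| ≤ 2 * accuracy T₀
  abs_sgn_start_le : |D T₀| ≤ accuracy T₀ / 100
  half_le_amp : ∀ t ∈ Icc w₁ w₂, 1 / 2 ≤ ampGate t
  reset_le : ∀ t ∈ Icc T₀ T₂, gain t * resetGate t ≤ accuracy T₀ / 4000
  abs_amp_le : ∀ t ∈ Icc T₂ T₃,
    |gain t * ampGate t * (D t + (Z t - G t)) * (1 - D t ^ 2)| ≤ 1 / 1000

namespace MemoryCycle

variable {T₀ w₁ w₂ T₁ T₂ T₃ : ℝ} {D G Z : ℝ → ℝ} {f t : ℝ}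

lemma neg (h : MemoryCycle T₀ w₁ w₂ T₁ T₂ T₃ D G Z f) :
    MemoryCycle T₀ w₁ w₂ T₁ T₂ T₃ (fun t ↦ -D t) (fun t ↦ -G t) (fun t ↦ -Z t) (-f) where
  __ := h
  sgn := h.sgn.neg.congr_deriv fun t _ ↦ by ring
  mem := h.mem.neg.congr_deriv fun t _ ↦ by ring
  abs_sgn_le t ht := by simpa only [abs_neg] using h.abs_sgn_le t ht
  abs_mem_le t ht := by simpa only [abs_neg] using h.abs_mem_le t ht
  abs_value_le := by simpa only [abs_neg] using h.abs_value_le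
  abs_estimate_sub_le t ht := by
    rw [neg_sub_neg, abs_sub_comm]
    exact h.abs_estimate_sub_le t ht
  abs_sgn_start_le := by simpa only [abs_neg] using h.abs_sgn_start_le
  abs_amp_le t ht := by
    rw [← abs_neg]
    convert h.abs_amp_le t ht using 2
    ring

lemma le_hold_start (h : MemoryCycle T₀ w₁ w₂ T₁ T₂ T₃ D G Z f) : T₀ ≤ T₁ :=
  h.le_amp.trans (h.amp_le.trans h.le_hold)

lemma le_decay_start (h : MemoryCycle T₀ w₁ w₂ T₁ T₂ T₃ D G Z f) : T₀ ≤ T₂ :=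
  h.le_hold_start.trans h.hold_le

lemma sq_sub_le (h : MemoryCycle T₀ w₁ w₂ T₁ T₂ T₃ D G Z f) (ht : t ∈ Icc T₀ T₃) :
    t ^ 2 - T₀ ^ 2 ≤ 1 := by
  have hsq := pow_le_pow_left₀ (by linarith [h.one_le, ht.1]) ht.2 2
  linarith [h.sq_hold, h.sq_decay, h.sq_end]

lemma abs_accuracy_sub_le (h : MemoryCycle T₀ w₁ w₂ T₁ T₂ T₃ D G Z f) (ht : t ∈ Icc T₀ T₃) :
    |accuracy t - accuracy T₀| ≤ accuracy T₀ / 1000 :=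
  OnlineSimulation.abs_accuracy_sub_le h.one_le ht.1 (h.sq_sub_le ht)

lemma abs_mem_sub_le (h : MemoryCycle T₀ w₁ w₂ T₁ T₂ T₃ D G Z f) (ht : t ∈ Icc T₀ T₃) :
    |G t - G T₀| ≤ 1.01 * accuracy T₀ := by
  have hu := accuracy_pos T₀
  have hbound : ∀ s ∈ Ioo T₀ t,
      |accuracy s * (s * D s - 2000 * G s)| ≤ 1.001 * accuracy T₀ * (2 * s) := by
    intro s hs
    have hs' : s ∈ Icc T₀ T₃ := ⟨hs.1.le, hs.2.le.trans ht.2⟩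
    have hs₀ : 0 ≤ s := by linarith [hs.1, h.one_le]
    have hD := mul_le_mul_of_nonneg_left (h.abs_sgn_le s hs') hs₀
    rw [abs_mul, abs_of_pos (accuracy_pos s)]
    refine mul_le_mul (by linarith [(abs_le.1 (h.abs_accuracy_sub_le hs')).2]) ?_ (abs_nonneg _)
      (by positivity)
    calc |s * D s - 2000 * G s| ≤ |s * D s| + |2000 * G s| := abs_sub _ _
      _ ≤ 2 * s := by
        rw [abs_mul, abs_mul, abs_of_nonneg hs₀, abs_of_pos (by norm_num : (0 : ℝ) < 2000)]
        linarith [h.abs_mem_le s hs']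
  have hmem := h.mem.mono le_rfl ht.2
  have hlower := hmem.mul_sq_sub_sq_le ht.1 (c := -(1.001 * accuracy T₀))
    fun s hs ↦ by linarith [(abs_le.1 (hbound s hs)).1]
  have hupper := hmem.neg.mul_sq_sub_sq_le ht.1 (c := -(1.001 * accuracy T₀))
    fun s hs ↦ by linarith [(abs_le.1 (hbound s hs)).2]
  have hlen := mul_le_mul_of_nonneg_left (h.sq_sub_le ht) hu.le
  exact abs_le.2 ⟨by linarith, by linarith⟩

lemma le_estimate_sub_mem (h : MemoryCycle T₀ w₁ w₂ T₁ T₂ T₃ D G Z f)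
    (hlow : G T₀ - f ≤ -8 * accuracy T₀) (ht : t ∈ Icc T₀ T₂) : accuracy T₀ / 50 ≤ Z t - G t := by
  have hZ := abs_le.1 (h.abs_estimate_sub_le t ht)
  have hG := abs_le.1 (h.abs_mem_sub_le ⟨ht.1, ht.2.trans h.le_end⟩)
  linarith [accuracy_pos T₀]

lemma neg_le_sgn (h : MemoryCycle T₀ w₁ w₂ T₁ T₂ T₃ D G Z f)
    (hlow : G T₀ - f ≤ -8 * accuracy T₀) (ht : t ∈ Icc T₀ T₂) : -(accuracy T₀ / 100) ≤ D t :=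
  IsPrimitiveOn.neg_le_of_bistable (k := fun s ↦ gain s * ampGate s)
    (c := fun s ↦ gain s * resetGate s) (e := fun s ↦ Z s - G s) ht.1
    (h.sgn.mono le_rfl (ht.2.trans h.le_end))
    (continuous_gain.mul (continuous_clock .amp)) (fun s ↦ gain_mul_gate_nonneg _ s)
    (continuous_gain.mul (continuous_clock .reset)) (fun s ↦ gain_mul_gate_nonneg _ s)
    (by linarith [accuracy_pos T₀])
    (fun s hs ↦ by
      linarith [h.le_estimate_sub_mem hlow ⟨hs.1.le, hs.2.le.trans ht.2⟩, accuracy_pos T₀])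
    (fun s hs ↦ h.abs_sgn_le s ⟨hs.1.le, hs.2.le.trans (ht.2.trans h.le_end)⟩)
    (abs_le.1 h.abs_sgn_start_le).1

lemma half_le_sgn (h : MemoryCycle T₀ w₁ w₂ T₁ T₂ T₃ D G Z f)
    (hlow : G T₀ - f ≤ -8 * accuracy T₀) (ht : t ∈ Icc T₁ T₂) : 1 / 2 ≤ D t := by
  have hu := accuracy_pos T₀
  have hT₀ : 0 ≤ T₀ := zero_le_one.trans h.one_le
  have hle : T₀ ≤ t := h.le_hold_start.trans ht.1
  have hend : t ≤ T₃ := ht.2.trans h.le_end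
  obtain ⟨P, hP⟩ : ∃ P, IsPrimitiveOn P (fun s ↦ gain s * ampGate s) T₀ t :=
    ⟨_, isPrimitiveOn_integral hle
      (continuous_gain.mul (continuous_clock .amp)).continuousOn⟩
  have hP_ge := le_sub_of_half_le_gate hT₀ h.le_amp h.amp_le (h.le_hold.trans ht.1) h.sq_amp
    (fun s ↦ (gate_pos _ s).le) h.half_le_amp hP
  refine IsPrimitiveOn.half_le_of_bistable (k := fun s ↦ gain s * ampGate s)
    (c := fun s ↦ gain s * resetGate s) (e := fun s ↦ Z s - G s) hle ?_
    (h.sgn.mono le_rfl hend)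
    (continuous_gain.mul (continuous_clock .amp)) (fun s ↦ gain_mul_gate_nonneg _ s)
    (continuous_gain.mul (continuous_clock .reset)) (fun s ↦ gain_mul_gate_nonneg _ s)
    (θ := accuracy T₀ / 100) (by positivity) (by linarith [accuracy_le_one T₀])
    (fun s hs ↦ by linarith [h.le_estimate_sub_mem hlow ⟨hs.1.le, hs.2.le.trans ht.2⟩])
    (fun s hs ↦ h.abs_sgn_le s ⟨hs.1, hs.2.trans hend⟩)
    (fun s hs ↦ by linarith [h.reset_le s ⟨hs.1.le, hs.2.le.trans ht.2⟩])
    (abs_le.1 h.abs_sgn_start_le).1 hP ?_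
  · nlinarith [h.sq_sub_le ⟨hle, hend⟩, h.one_le]
  · have hexp : (200 : ℝ) * 4 ≤ Real.exp 198 := by
      rw [show (198 : ℝ) = 99 + 99 by norm_num, Real.exp_add]
      nlinarith [Real.add_one_le_exp (99 : ℝ)]
    rw [div_div_eq_mul_div, div_mul_eq_mul_div, div_le_iff₀ hu]
    have hdecay : Real.exp (-(P t - P T₀)) * Real.exp 198 ≤ accuracy T₀ := by
      rw [← Real.exp_add]
      refine le_trans (Real.exp_le_exp.2 ?_) (exp_neg_one_add_le_accuracy hT₀)
      linarith [h.le_amp, h.one_le]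
    nlinarith [Real.exp_pos (-(P t - P T₀))]

lemma neg_le_sgn_of_decay (h : MemoryCycle T₀ w₁ w₂ T₁ T₂ T₃ D G Z f)
    (hlow : G T₀ - f ≤ -8 * accuracy T₀) (ht : t ∈ Icc T₂ T₃) : -(1 / 1000) ≤ D t := by
  have hstart := h.half_le_sgn hlow ⟨h.hold_le, le_rfl⟩
  have hlen : t - T₂ ≤ 1 := by
    nlinarith [h.sq_sub_le ⟨h.le_decay_start.trans ht.1, ht.2⟩, h.one_le, h.le_decay_start, ht.1]
  have hlin : IsPrimitiveOn (fun s ↦ 1 / 1000 * (s - T₂)) (fun _ ↦ 1 / 1000 * 1) T₂ t :=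
    .of_hasDerivAt fun s _ ↦ ((hasDerivAt_id s).sub_const T₂).const_mul (1 / 1000)
  have hnonneg := (hlin.add (h.sgn.mono h.le_decay_start ht.2)).nonneg_of_deriv_nonneg_of_neg ht.1
    (by linarith) fun s hs hneg ↦ by
      have hD : 0 ≤ -D s := by linarith [hs.1]
      have hleak := mul_nonneg (gain_mul_gate_nonneg (s ^ 2) s) hD
      linarith [(abs_le.1 (h.abs_amp_le s ⟨hs.1.le, hs.2.le.trans ht.2⟩)).1,
        show gain s * gate (s ^ 2) s * -D s = -(gain s * resetGate s * D s) from mul_neg _ _]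
  linarith

lemma mul_sq_sub_sq_le_mem_sub (h : MemoryCycle T₀ w₁ w₂ T₁ T₂ T₃ D G Z f)
    (hlow : G T₀ - f ≤ -8 * accuracy T₀) {a b c k : ℝ} (ha : T₀ ≤ a) (hab : a ≤ b) (hb : b ≤ T₃)
    (hD : ∀ t ∈ Ioo a b, c + 1 / 100 ≤ D t) (hk : ∀ t ∈ Ioo a b, k ≤ accuracy t * c) :
    k / 2 * (b ^ 2 - a ^ 2) ≤ G b - G a := by
  refine (h.mem.mono ha hb).mul_sq_sub_sq_le hab fun t ht ↦ ?_
  have ht' : t ∈ Icc T₀ T₃ := ⟨ha.trans ht.1.le, ht.2.le.trans hb⟩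
  have ht₀ : 0 ≤ t := by linarith [ht'.1, h.one_le]
  have hG : G t ≤ t / 200000 := by
    linarith [(abs_le.1 (h.abs_mem_sub_le ht')).2, le_abs_self f, h.abs_value_le, ht'.1,
      accuracy_pos T₀]
  calc k / 2 * (2 * t) = k * t := by ring
    _ ≤ accuracy t * c * t := mul_le_mul_of_nonneg_right (hk t ht) ht₀
    _ = accuracy t * (t * c) := by ring
    _ ≤ accuracy t * (t * D t - 2000 * G t) := by
        refine mul_le_mul_of_nonneg_left ?_ (accuracy_pos t).le
        linarith [mul_le_mul_of_nonneg_left (hD t ht) ht₀]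

lemma mem_add_le (h : MemoryCycle T₀ w₁ w₂ T₁ T₂ T₃ D G Z f)
    (hlow : G T₀ - f ≤ -8 * accuracy T₀) : G T₀ + 0.02 * accuracy T₀ ≤ G T₃ := by
  have hu := accuracy_pos T₀
  have h01 := h.le_hold_start
  have h02 := h.le_decay_start
  have haccuracy : ∀ {t}, T₀ ≤ t → t ≤ T₃ →
      0.999 * accuracy T₀ ≤ accuracy t ∧ accuracy t ≤ 1.001 * accuracy T₀ := fun h₀ h₃ ↦ by
    have := abs_le.1 (h.abs_accuracy_sub_le ⟨h₀, h₃⟩)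
    constructor <;> linarith
  have hamp := h.mul_sq_sub_sq_le_mem_sub hlow (c := -0.02) (k := -0.021 * accuracy T₀) le_rfl h01
    (h.hold_le.trans h.le_end)
    (fun t ht ↦ by
      linarith [h.neg_le_sgn hlow ⟨ht.1.le, ht.2.le.trans h.hold_le⟩, accuracy_le_one T₀])
    (fun t ht ↦ by
      linarith [haccuracy ht.1.le (ht.2.le.trans (h.hold_le.trans h.le_end))])
  have hhold := h.mul_sq_sub_sq_le_mem_sub hlow (c := 0.48) (k := 0.47 * accuracy T₀) h01 h.hold_le
    h.le_end
    (fun t ht ↦ by linarith [h.half_le_sgn hlow ⟨ht.1.le, ht.2.le⟩])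
    (fun t ht ↦ by linarith [haccuracy (h01.trans ht.1.le) (ht.2.le.trans h.le_end)])
  have hdecay := h.mul_sq_sub_sq_le_mem_sub hlow (c := -0.02) (k := -0.021 * accuracy T₀) h02
    h.le_end le_rfl
    (fun t ht ↦ by linarith [h.neg_le_sgn_of_decay hlow ⟨ht.1.le, ht.2.le⟩])
    (fun t ht ↦ by linarith [haccuracy (h02.trans ht.1.le) ht.2.le])
  rw [h.sq_hold] at hamp
  rw [h.sq_decay] at hhold
  rw [h.sq_end] at hdecay
  linarith

lemma abs_mem_end_sub_le (h : MemoryCycle T₀ w₁ w₂ T₁ T₂ T₃ D G Z f) :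
    |G T₃ - f| ≤ max (9.1 * accuracy T₀) (|G T₀ - f| - 0.02 * accuracy T₀) := by
  have hu := accuracy_pos T₀
  have hstep := abs_le.1 (h.abs_mem_sub_le ⟨h.le_decay_start.trans h.le_end, le_rfl⟩)
  rcases le_or_gt (G T₀ - f) (-8 * accuracy T₀) with hlow | hlow
  · have hup := h.mem_add_le hlow
    refine le_max_of_le_right ?_
    rw [abs_of_neg (by linarith : G T₃ - f < 0), abs_of_neg (by linarith : G T₀ - f < 0)]
    linarith
  rcases le_or_gt (8 * accuracy T₀) (G T₀ - f) with hhigh | hhigh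
  · have hdown := h.neg.mem_add_le (by linarith)
    refine le_max_of_le_right ?_
    rw [abs_of_pos (by linarith : 0 < G T₃ - f), abs_of_pos (by linarith : 0 < G T₀ - f)]
    linarith
  · exact le_max_of_le_left (abs_le.2 ⟨by linarith, by linarith⟩)

end MemoryCycle

end Amplifier

section Leaks

namespace Machine

variable {m n d : ℕ}

/-- At time `t` and in state `s`, each term of the vector field whose gate is inactive is at most
`exp (-5 * t)`, despite the gain of the circuits. -/
structure LeaksSmall (M : Machine m n d) (t : ℝ) (s : Var m n d → ℝ) : Prop where
  gain_reset : resetGate t ≤ Real.exp (-t ^ 2) → gain t * resetGate t ≤ Real.exp (-(5 * t))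
  reset_sim : resetGate t ≤ Real.exp (-t ^ 2) →
    gain t * resetGate t * ‖fun k ↦ s (.sim k)‖ ≤ Real.exp (-(5 * t))
  level : resetGate t ≤ Real.exp (-t ^ 2) →
    |gain t * resetGate t * (precision t - s .level)| ≤ Real.exp (-(5 * t))
  sim : simGate t ≤ Real.exp (-t ^ 2) → ∀ k,
    |M.rate (clock t) s * MvPolynomial.aeval (M.estimate s) (M.p k)| ≤ Real.exp (-(5 * t))
  amp : ampGate t ≤ Real.exp (-t ^ 2) → ∀ i,
    |gain t * ampGate t * (s (.sgn i) + (M.estimate s (Fin.castLE M.le i) - s (.mem i))) *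
      (1 - s (.sgn i) ^ 2)| ≤ Real.exp (-(5 * t))
  sample : sampleGate t ≤ Real.exp (-t ^ 2) → ∀ i,
    |gain t * sampleGate t * (s (.mem i) - s (.out i))| ≤ Real.exp (-(5 * t))

/-- The times and states satisfying the a priori bound `Machine.IsRun.norm_le`. -/
def Reachable (m n d : ℕ) : Type := {z : ℝ × (Var m n d → ℝ) // 0 ≤ z.1 ∧ ‖z.2‖ ≤ 1 + z.1}

namespace Reachable

/-- The time of a reachable configuration. -/
def time (z : Reachable m n d) : ℝ := z.1.1

/-- The state of a reachable configuration. -/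
def state (z : Reachable m n d) : Var m n d → ℝ := z.1.2

lemma eventually_gate_mul_le {g : Reachable m n d → ℝ} (hg : IsPolyBounded time g) :
    ∀ᶠ T in atTop, ∀ z : Reachable m n d, T ≤ z.time → ∀ γ, γ ≤ Real.exp (-z.time ^ 2) →
      γ * |g z| ≤ Real.exp (-(5 * z.time)) := by
  obtain ⟨C, -, r, hg⟩ := hg
  filter_upwards [eventually_forall_ge_atTop.2 (eventually_mul_pow_mul_exp_neg_sq_le C r)]
    with T hT z hz γ hle
  calc γ * |g z| ≤ Real.exp (-z.time ^ 2) * (C * (1 + z.time) ^ r) := by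
        gcongr
        exact (hg z).trans_eq (by rw [abs_of_nonneg (a := z.time) z.2.1])
    _ = C * (1 + z.time) ^ r * Real.exp (-z.time ^ 2) := mul_comm _ _
    _ ≤ Real.exp (-(5 * z.time)) := hT _ hz

lemma isPolyBounded_gain : IsPolyBounded time fun z : Reachable m n d ↦ gain z.time :=
  (IsPolyBounded.const 6400).mul (((IsPolyBounded.const 1).add .self).pow 2)

lemma isPolyBounded_state (v : Var m n d) :
    IsPolyBounded time fun z : Reachable m n d ↦ z.state v :=
  ((IsPolyBounded.const 1).add .self).mono fun z ↦
    (norm_le_pi_norm z.state v).trans (z.2.2.trans (le_abs_self _))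

lemma isPolyBounded_precision : IsPolyBounded time fun z : Reachable m n d ↦ precision z.time :=
  ((IsPolyBounded.const 1).add .self).mono fun z ↦ by
    rw [abs_of_nonneg (precision_nonneg _)]
    exact (precision_le_one_add z.2.1).trans (le_abs_self _)

lemma isPolyBounded_estimate (M : Machine m n d) (k : Fin d) :
    IsPolyBounded time fun z : Reachable m n d ↦ M.estimate z.state k := by
  refine (isPolyBounded_state _).add ?_
  simp only [initial, MvPolynomial.aeval_eq_eval]
  refine isPolyBounded_eval (M.q k) fun i ↦ i.lastCases ?_ fun j ↦ ?_
  · simpa only [Fin.snoc_last] using isPolyBounded_state _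
  · simpa only [Fin.snoc_castSucc] using isPolyBounded_state _

lemma isPolyBounded_aeval_estimate (M : Machine m n d) (k : Fin d) :
    IsPolyBounded time fun z : Reachable m n d ↦
      MvPolynomial.aeval (M.estimate z.state) (M.p k) := by
  simp only [MvPolynomial.aeval_eq_eval]
  exact isPolyBounded_eval _ (isPolyBounded_estimate M)

lemma isPolyBounded_rate_factor (M : Machine m n d) :
    IsPolyBounded time fun z : Reachable m n d ↦ M.speed z.state * z.time *
      ((1 + z.time ^ 2 - ∑ k, z.state (.sim k) ^ 2) * (1 + z.time ^ 2)⁻¹) := by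
  have hinv : IsPolyBounded time fun z : Reachable m n d ↦ (1 + z.time ^ 2)⁻¹ :=
    (IsPolyBounded.const 1).mono fun z ↦ by
      rw [abs_one, abs_of_nonneg (by positivity)]
      exact inv_le_one_of_one_le₀ (by nlinarith)
  have hone : IsPolyBounded (time (m := m) (n := n) (d := d)) fun _ ↦ 1 := .const 1
  have hspeed : IsPolyBounded time fun z : Reachable m n d ↦ M.speed z.state :=
    (IsPolyBounded.const _).mul (((hone.add (.sum _ fun j ↦ (isPolyBounded_state _).pow 2)).add
      ((isPolyBounded_state _).pow 2)).pow _)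
  exact (hspeed.mul .self).mul
    (((hone.add (.pow .self 2)).sub (.sum _ fun k ↦ (isPolyBounded_state _).pow 2)).mul hinv)

end Reachable

open Reachable in
lemma eventually_leaksSmall (M : Machine m n d) :
    ∀ᶠ T in atTop, ∀ t, T ≤ t → ∀ s, ‖s‖ ≤ 1 + t → M.LeaksSmall t s := by
  have hstate := isPolyBounded_state (m := m) (n := n) (d := d)
  have hgain := isPolyBounded_gain (m := m) (n := n) (d := d)
  have hsim := eventually_all.2 fun k ↦ eventually_gate_mul_le
    ((isPolyBounded_rate_factor M).mul (isPolyBounded_aeval_estimate M k))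
  have hamp := eventually_all.2 fun i ↦ eventually_gate_mul_le ((hgain.mul
    ((hstate (.sgn i)).add ((isPolyBounded_estimate M (Fin.castLE M.le i)).sub
      (hstate (.mem i))))).mul ((IsPolyBounded.const 1).sub ((hstate (.sgn i)).pow 2)))
  have hsample := eventually_all.2 fun i ↦ eventually_gate_mul_le
    (hgain.mul ((hstate (.mem i)).sub (hstate (.out i))))
  filter_upwards [eventually_ge_atTop 0, eventually_gate_mul_le hgain,
    eventually_gate_mul_le (hgain.mul (.norm_pi fun k ↦ hstate (.sim k))),
    eventually_gate_mul_le (hgain.mul (isPolyBounded_precision.sub (hstate .level))), hsim, hamp,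
    hsample] with T hT hgain hreset hlevel hsim hamp hsample t ht s hs
  let z : Reachable m n d := ⟨(t, s), hT.trans ht, hs⟩
  have hpos := fun θ ↦ (gate_pos θ t).le
  have hcomm : ∀ {γ a b : ℝ}, 0 ≤ γ → γ * |b| ≤ Real.exp (-(5 * t)) → a = γ * b →
      |a| ≤ Real.exp (-(5 * t)) := fun hγ hle heq ↦ by rwa [heq, abs_mul, abs_of_nonneg hγ]
  exact {
    gain_reset := fun h ↦ (le_abs_self _).trans
      (hcomm (hpos _) (hgain z ht _ h) (mul_comm _ _))
    reset_sim := fun h ↦ (le_abs_self _).trans (hcomm (hpos _) (hreset z ht _ h) (by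
      simp only [z, state, time, resetGate]; ring))
    level := fun h ↦ hcomm (hpos _) (hlevel z ht _ h) (by
      simp only [z, state, time, resetGate]; ring)
    sim := fun h k ↦ hcomm (hpos _) (hsim k z ht _ h) (by
      simp only [rate, clock, z, state, time, simGate]; ring)
    amp := fun h i ↦ hcomm (hpos _) (hamp i z ht _ h) (by
      simp only [z, state, time, ampGate]; ring)
    sample := fun h i ↦ hcomm (hpos _) (hsample i z ht _ h) (by
      simp only [z, state, time, sampleGate]; ring) }

end Machine

end Leaks

section Cycle

/-- The time at phase `r` of cycle `i`: the gates of the machine open periodically in `t ^ 2`. -/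
def phaseTime (i : ℤ) (r : ℝ) : ℝ := √(i + r)

lemma phaseTime_le_phaseTime (i : ℤ) {r r' : ℝ} (h : r ≤ r') : phaseTime i r ≤ phaseTime i r' :=
  Real.sqrt_le_sqrt (by linarith)

lemma sq_phaseTime {i : ℤ} {r r' : ℝ} (h : 0 < phaseTime i r) (hr : r ≤ r') :
    phaseTime i r' ^ 2 = i + r' :=
  Real.sq_sqrt (by linarith [Real.sqrt_pos.1 h])

lemma sq_mem_Icc_of_mem_phase {i : ℤ} {r r' t : ℝ} (h : 0 < t)
    (ht : t ∈ Icc (phaseTime i r) (phaseTime i r')) : t ^ 2 ∈ Icc (i + r) (i + r') :=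
  ⟨(Real.sqrt_le_left h.le).1 ht.1, (Real.le_sqrt' h).1 ht.2⟩

lemma phaseTime_sub_le_sub {i : ℤ} {r r' : ℝ} (h : 1 ≤ phaseTime i r) (hr : r ≤ r') :
    phaseTime i r' - phaseTime i r ≤ r' - r := by
  have hsq := sq_phaseTime (zero_lt_one.trans_le h) le_rfl
  have hsq' := sq_phaseTime (zero_lt_one.trans_le h) hr
  nlinarith [phaseTime_le_phaseTime i hr]

lemma IsPrimitiveOn.abs_sub_le_of_relaxation {y w k P : ℝ → ℝ} {a b c ε : ℝ} (hab : a ≤ b)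
    (hy : IsPrimitiveOn y (fun t ↦ k t * (w t - y t)) a b) (hP : IsPrimitiveOn P k a b)
    (hk : ∀ t ∈ Ioo a b, 0 ≤ k t) (hw : ∀ t ∈ Ioo a b, |w t - c| ≤ ε) (hε : 0 ≤ ε) :
    |y b - c| ≤ |y a - c| * Real.exp (-(P b - P a)) + ε := by
  have hupper := (hy.sub (.const (c + ε))).le_mul_exp_add hab hP hk le_rfl fun t ht ↦ by
    nlinarith [hk t ht, abs_le.1 (hw t ht)]
  have hlower := (hy.neg.sub (.const (ε - c))).le_mul_exp_add hab hP hk le_rfl fun t ht ↦ by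
    nlinarith [hk t ht, abs_le.1 (hw t ht)]
  have hexp := (Real.exp_pos (-(P b - P a))).le
  have hupper' := mul_le_mul_of_nonneg_right
    (by linarith [le_abs_self (y a - c)] : y a - (c + ε) ≤ |y a - c|) hexp
  have hlower' := mul_le_mul_of_nonneg_right
    (by linarith [neg_le_abs (y a - c)] : -y a - (ε - c) ≤ |y a - c|) hexp
  exact abs_le.2 ⟨by linarith, by linarith⟩

lemma one_add_mul_exp_neg_le {t w : ℝ} (ht : 0 ≤ t) (hw : t ≤ w) :
    (1 + t) * Real.exp (-(100 * (1 + w))) ≤ Real.exp (-(5 * t)) :=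
  calc (1 + t) * Real.exp (-(100 * (1 + w)))
      ≤ Real.exp t * Real.exp (-(100 * (1 + w))) := by
        gcongr
        linarith [Real.add_one_le_exp t]
    _ ≤ Real.exp (-(5 * t)) := by
        rw [← Real.exp_add]
        gcongr
        linarith

lemma exp_neg_five_mul_le {a t : ℝ} (ha : 10 ≤ a) (ht : 0 ≤ t) (hta : t ≤ a + 1) :
    Real.exp (-(5 * a)) ≤ accuracy t / 40000 := by
  have hpow : (40000 : ℝ) ≤ Real.exp 38 := by
    have hfive : Real.exp 38 = Real.exp (38 / 5) ^ 5 := by rw [← Real.exp_nat_mul]; norm_num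
    rw [hfive]
    calc (40000 : ℝ) ≤ (38 / 5 + 1) ^ 5 := by norm_num
      _ ≤ Real.exp (38 / 5) ^ 5 := by gcongr; exact Real.add_one_le_exp _
  have hacc := exp_neg_one_add_le_accuracy ht
  rw [le_div_iff₀ (by norm_num)]
  calc Real.exp (-(5 * a)) * 40000 ≤ Real.exp (-(5 * a)) * Real.exp 38 := by gcongr
    _ ≤ Real.exp (-(1 + t)) := by
        rw [← Real.exp_add]
        gcongr
        linarith
    _ ≤ accuracy t := hacc

namespace Machine

variable {m n d : ℕ} {M : Machine m n d}

/-- From time `H` on, the inactive gates of the run `s` suppress the terms they control. -/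
structure IsSettled (M : Machine m n d) (x : ℝ → Fin n → ℝ) (T : ℝ) (s : ℝ → Var m n d → ℝ)
    (H : ℝ) : Prop extends M.IsRun x T s where
  ten_le : 10 ≤ H
  leaksSmall : ∀ t ∈ Icc H T, M.LeaksSmall t (s t)

lemma IsRun.level_nonneg {x : ℝ → Fin n → ℝ} {T : ℝ} {s : ℝ → Var m n d → ℝ} (h : M.IsRun x T s)
    (hT : 0 ≤ T) : 0 ≤ s T .level :=
  h.level.nonneg_of_mul_le hT (h := fun t ↦ -(gain t * resetGate t))
    (continuous_gain.mul (continuous_clock .reset)).neg.continuousOn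
    (fun t _ ↦ by
      have := mul_nonneg (gain_mul_gate_nonneg (t ^ 2) t) (precision_nonneg t)
      unfold resetGate
      linarith)
    (by simp [h.apply_zero])

namespace IsSettled

variable {x : ℝ → Fin n → ℝ} {T H : ℝ} {s : ℝ → Var m n d → ℝ} {i : ℤ}

lemma exists_primitive_reset (hi : 10 ≤ phaseTime i (-(1 / 8))) {r : ℝ} (hr : 1 / 16 ≤ r) :
    ∃ P, IsPrimitiveOn P (fun t ↦ gain t * resetGate t) (phaseTime i (-(1 / 8))) (phaseTime i r) ∧
      100 * (1 + phaseTime i 0) ≤ P (phaseTime i r) - P (phaseTime i (-(1 / 8))) := by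
  have hpos : 0 < phaseTime i (-(1 / 8)) := by linarith
  have hP := isPrimitiveOn_integral
    (phaseTime_le_phaseTime i ((by norm_num : -(1 / 8 : ℝ) ≤ 1 / 16).trans hr))
    (continuous_gain.mul (continuous_clock .reset)).continuousOn
  refine ⟨_, hP, le_sub_of_half_le_gate hpos.le (phaseTime_le_phaseTime i (by norm_num))
    (phaseTime_le_phaseTime i (by norm_num : (0 : ℝ) ≤ 1 / 16)) (phaseTime_le_phaseTime i hr)
    ?_ (fun t ↦ (gate_pos _ t).le) (fun t ht ↦ ?_) hP⟩
  · rw [sq_phaseTime hpos (by norm_num), sq_phaseTime hpos (by norm_num)]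
    linarith
  · have hsq := sq_mem_Icc_of_mem_phase
      (hpos.trans_le ((phaseTime_le_phaseTime i (by norm_num)).trans ht.1)) ht
    exact half_le_gate i (by linarith [hsq.1]) hsq.2

lemma abs_le_of_reset (hi : 10 ≤ phaseTime i (-(1 / 8))) {r : ℝ} (hr : 1 / 16 ≤ r) (hr' : r ≤ 3 / 8)
    {y l : ℝ → ℝ} (hy : IsPrimitiveOn y (fun t ↦ l t - gain t * resetGate t * y t)
      (phaseTime i (-(1 / 8))) (phaseTime i r))
    (hl : ∀ t ∈ Ioo (phaseTime i (-(1 / 8))) (phaseTime i r), |l t| ≤ Real.exp (-(5 * t)))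
    (hy₀ : |y (phaseTime i (-(1 / 8)))| ≤ 1 + phaseTime i (-(1 / 8))) :
    |y (phaseTime i r)| ≤ 2 * Real.exp (-(5 * phaseTime i (-(1 / 8)))) := by
  obtain ⟨P, hP, hgain⟩ := exists_primitive_reset hi hr
  have hlen := phaseTime_sub_le_sub (i := i) (by linarith)
    ((by norm_num : -(1 / 8 : ℝ) ≤ 1 / 16).trans hr)
  have hdecay := hy.abs_le_mul_exp_add (phaseTime_le_phaseTime i (by linarith)) hP
    (fun t _ ↦ gain_mul_gate_nonneg _ t) (Real.exp_pos (-(5 * phaseTime i (-(1 / 8))))).le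
    fun t ht ↦ by
      rw [sub_add_cancel]
      exact (hl t ht).trans (Real.exp_le_exp.2 (by linarith [ht.1]))
  have hstart : |y (phaseTime i (-(1 / 8)))| * Real.exp (-(P (phaseTime i r) -
      P (phaseTime i (-(1 / 8))))) ≤ Real.exp (-(5 * phaseTime i (-(1 / 8)))) :=
    (mul_le_mul hy₀ (Real.exp_le_exp.2 (neg_le_neg hgain)) (Real.exp_pos _).le (by linarith)).trans
      (one_add_mul_exp_neg_le (by linarith) (phaseTime_le_phaseTime i (by norm_num)))
  nlinarith [Real.exp_pos (-(5 * phaseTime i (-(1 / 8))))]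

variable (h : M.IsSettled x T s H) (hi : H ≤ phaseTime i (-(1 / 8)))

include h hi

lemma ten_le_phaseTime {r : ℝ} (hr : -(1 / 8) ≤ r) : 10 ≤ phaseTime i r :=
  (h.ten_le.trans hi).trans (phaseTime_le_phaseTime i hr)

lemma sq_phaseTime {r : ℝ} (hr : -(1 / 8) ≤ r) : phaseTime i r ^ 2 = i + r :=
  OnlineSimulation.sq_phaseTime (by linarith [h.ten_le_phaseTime hi le_rfl]) hr

lemma sq_mem_Icc {r r' t : ℝ} (hr : -(1 / 8) ≤ r)
    (ht : t ∈ Icc (phaseTime i r) (phaseTime i r')) : t ^ 2 ∈ Icc (i + r) (i + r') :=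
  sq_mem_Icc_of_mem_phase (by linarith [h.ten_le_phaseTime hi hr, ht.1]) ht

lemma gain_mul_resetGate_le (hT : phaseTime i (7 / 8) ≤ T) {t : ℝ}
    (ht : t ∈ Icc (phaseTime i (3 / 8)) (phaseTime i (7 / 8))) :
    gain t * resetGate t ≤ Real.exp (-(5 * phaseTime i (-(1 / 8)))) := by
  have hle : phaseTime i (-(1 / 8)) ≤ t := (phaseTime_le_phaseTime i (by norm_num)).trans ht.1
  have hsq := h.sq_mem_Icc hi (by norm_num) ht
  have hleak := (h.leaksSmall t ⟨hi.trans hle, ht.2.trans hT⟩).gain_reset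
    (gate_le_exp i (by linarith [hsq.1]) hsq.2)
  exact hleak.trans (by gcongr)

lemma abs_amp_le (hT : phaseTime i (11 / 8) ≤ T) {t : ℝ}
    (ht : t ∈ Icc (phaseTime i (7 / 8)) (phaseTime i (11 / 8))) (l : Fin m) :
    |gain t * ampGate t * (s t (.sgn l) + (M.estimate (s t) (Fin.castLE M.le l) - s t (.mem l))) *
      (1 - s t (.sgn l) ^ 2)| ≤ Real.exp (-(5 * phaseTime i (-(1 / 8)))) := by
  have hle : phaseTime i (-(1 / 8)) ≤ t := (phaseTime_le_phaseTime i (by norm_num)).trans ht.1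
  have hsq := h.sq_mem_Icc hi (by norm_num) ht
  have hleak := (h.leaksSmall t ⟨hi.trans hle, ht.2.trans hT⟩).amp
    (gate_le_exp i (by linarith [hsq.1]) (by linarith [hsq.2])) l
  exact hleak.trans (by gcongr)

lemma abs_sgn_le (hT : phaseTime i (3 / 8) ≤ T) (l : Fin m) :
    |s (phaseTime i (3 / 8)) (.sgn l)| ≤ 2 * Real.exp (-(5 * phaseTime i (-(1 / 8)))) := by
  have hten := h.ten_le_phaseTime hi le_rfl
  have hle : phaseTime i (-(1 / 8)) ≤ phaseTime i (3 / 8) :=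
    phaseTime_le_phaseTime i (by norm_num)
  refine abs_le_of_reset (y := fun t ↦ s t (.sgn l)) hten (by norm_num) le_rfl
    ((h.sgn l).mono (by linarith) hT) (fun t ht ↦ ?_) ?_
  · have hsq := h.sq_mem_Icc hi le_rfl (Ioo_subset_Icc_self ht)
    exact (h.leaksSmall t ⟨hi.trans ht.1.le, ht.2.le.trans hT⟩).amp
      (gate_le_exp (i - 1) (by push_cast; linarith [hsq.1]) (by push_cast; linarith [hsq.2])) l
  · linarith [(h.toIsRun.mono (hle.trans hT)).abs_sgn_le_one (by linarith) l]

lemma norm_sim_le (hT : phaseTime i (1 / 8) ≤ T) :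
    ‖fun k ↦ s (phaseTime i (1 / 8)) (.sim k)‖ ≤ 2 * Real.exp (-(5 * phaseTime i (-(1 / 8)))) := by
  have hten := h.ten_le_phaseTime hi le_rfl
  have hle : phaseTime i (-(1 / 8)) ≤ phaseTime i (1 / 8) :=
    phaseTime_le_phaseTime i (by norm_num)
  refine (pi_norm_le_iff_of_nonneg (by positivity)).2 fun k ↦
    abs_le_of_reset (y := fun t ↦ s t (.sim k)) hten (by norm_num) (by norm_num)
      ((h.sim k).mono (by linarith) hT) (fun t ht ↦ ?_) ?_
  · have hsq := h.sq_mem_Icc hi le_rfl (Ioo_subset_Icc_self ht)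
    exact (h.leaksSmall t ⟨hi.trans ht.1.le, ht.2.le.trans hT⟩).sim
      (gate_le_exp (i - 1) (by push_cast; linarith [hsq.1]) (by push_cast; linarith [hsq.2])) k
  · exact (norm_le_pi_norm (s _) (.sim k)).trans
      ((h.toIsRun.mono (hle.trans hT)).norm_le (by linarith))

lemma abs_level_sub_precision_le (hT : phaseTime i (1 / 8) ≤ T) :
    |s (phaseTime i (1 / 8)) .level - precision (phaseTime i (3 / 8))| ≤ 4 / 10000 := by
  have hten := h.ten_le_phaseTime hi le_rfl
  have hle : phaseTime i (-(1 / 8)) ≤ phaseTime i (1 / 8) :=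
    phaseTime_le_phaseTime i (by norm_num)
  obtain ⟨P, hP, hgain⟩ := exists_primitive_reset (i := i) (by linarith)
    (by norm_num : 1 / 16 ≤ (1 / 8 : ℝ))
  have hdrift : ∀ {r t : ℝ}, t ∈ Icc (phaseTime i (-(1 / 8))) (phaseTime i r) →
      |precision t - precision (phaseTime i (-(1 / 8)))| ≤ 4 / 10000 * (r + 1 / 8) :=
    fun ht ↦ (abs_precision_sub_le (by linarith) ht.1).trans <| by
      have hsq := h.sq_mem_Icc hi le_rfl ht
      rw [h.sq_phaseTime hi le_rfl]
      linarith [hsq.2]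
  have hload := (h.level.mono (by linarith) hT).abs_sub_le_of_relaxation hle hP
    (fun t _ ↦ gain_mul_gate_nonneg _ t)
    (fun t ht ↦ hdrift (Ioo_subset_Icc_self ht)) (by norm_num)
  have hstart : |s (phaseTime i (-(1 / 8))) .level - precision (phaseTime i (-(1 / 8)))| ≤
      1 + phaseTime i (-(1 / 8)) := by
    have hrun := h.toIsRun.mono (hle.trans hT)
    exact abs_sub_le_of_nonneg_of_le (hrun.level_nonneg (by linarith))
      ((le_abs_self _).trans (hrun.abs_level_le (by linarith))) (precision_nonneg _)
      (precision_le_one_add (by linarith))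
  have hexp := (mul_le_mul hstart (Real.exp_le_exp.2 (neg_le_neg hgain)) (Real.exp_pos _).le
    (by linarith)).trans
      (one_add_mul_exp_neg_le (by linarith) (phaseTime_le_phaseTime i (by norm_num)))
  have hsmall := exp_neg_five_mul_le (t := phaseTime i (-(1 / 8))) hten (by linarith) (by linarith)
  have hone := accuracy_le_one (phaseTime i (-(1 / 8)))
  have hmove := hdrift (r := 3 / 8) (right_mem_Icc.2 (phaseTime_le_phaseTime i (by norm_num)))
  rw [abs_le] at hload hmove ⊢
  exact ⟨by linarith, by linarith⟩

lemma abs_level_sub_level_le (hT : phaseTime i (7 / 8) ≤ T) {t : ℝ}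
    (ht : t ∈ Icc (phaseTime i (1 / 8)) (phaseTime i (7 / 8))) :
    |s t .level - s (phaseTime i (1 / 8)) .level| ≤
      Real.exp (-(5 * phaseTime i (-(1 / 8)))) := by
  have hten := h.ten_le_phaseTime hi (by norm_num : -(1 / 8) ≤ (1 / 8 : ℝ))
  have hle : phaseTime i (-(1 / 8)) ≤ phaseTime i (1 / 8) :=
    phaseTime_le_phaseTime i (by norm_num)
  have hlen := phaseTime_sub_le_sub (i := i) (by linarith) (by norm_num : (1 / 8 : ℝ) ≤ 7 / 8)
  have hleak := (h.level.mono (by linarith) (ht.2.trans hT)).abs_sub_le_mul_sub ht.1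
    (c := Real.exp (-(5 * phaseTime i (-(1 / 8))))) fun u hu ↦ by
      have hsq := h.sq_mem_Icc hi (by norm_num) ⟨hu.1.le, hu.2.le.trans ht.2⟩
      exact ((h.leaksSmall u ⟨by linarith [hu.1], by linarith [hu.2, ht.2]⟩).level
        (gate_le_exp i hsq.1 hsq.2)).trans (Real.exp_le_exp.2 (by linarith [hu.1]))
  exact hleak.trans (mul_le_of_le_one_right (Real.exp_pos _).le (by linarith [ht.2]))

end IsSettled

end Machine

end Cycle

section Tracking

lemma exp_neg_div_two_add_exp_neg_le {K μ t : ℝ} (hμ : |μ - precision t| ≤ 4 / 10000)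
    (hK : precision t ≤ K) : Real.exp (-K) / 2 + Real.exp (-μ) ≤ 2 * accuracy t := by
  have hexpK : Real.exp (-K) ≤ accuracy t := by rw [← exp_neg_precision]; gcongr
  have hsplit : Real.exp (-μ) = Real.exp (precision t - μ) * accuracy t := by
    rw [← exp_neg_precision, ← Real.exp_add]
    ring_nf
  have hfactor : Real.exp (precision t - μ) ≤ 1.001 := by
    rw [abs_sub_comm] at hμ
    linarith [(abs_le.1 (Real.abs_exp_sub_one_le (hμ.trans (by norm_num)))).2]
  nlinarith [accuracy_pos t]

namespace Machine

variable {m n d : ℕ} {M : Machine m n d}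

/-- The smoothed input and the precision stored in the state `s` are within `ξ` of `xb` and `μ`. -/
structure IsNear (xb : Fin n → ℝ) (μ ξ : ℝ) (s : Var m n d → ℝ) : Prop where
  abs_inp_sub_le : ∀ j, |s (.inp j) - xb j| ≤ ξ
  abs_level_sub_le : |s .level - μ| ≤ ξ

/-- `y` is a solution of the simulated system whose first coordinates are `exp (-μ)`-close to `z`
after time `S₀`, and to which the machine stays faithful (up to `κ`, with at least `128 * S₀` and at
most `S` units of simulated time per unit of `t ^ 2`) in all states near `xb` and `μ`. -/
structure IsReference (M : Machine m n d) (xb : Fin n → ℝ) (z : Fin m → ℝ) (y : ℝ → Fin d → ℝ)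
    (μ ξ B κ S S₀ : ℝ) : Prop where
  nonneg : 0 ≤ S₀
  hasDerivAt : ∀ τ, 0 ≤ τ → HasDerivAt y (fun k ↦ MvPolynomial.aeval (y τ) (M.p k)) τ
  norm_le : ∀ τ ∈ Icc 0 S, ‖y τ‖ ≤ B
  abs_sub_le : ∀ τ, S₀ ≤ τ → ∀ l, |y τ (Fin.castLE M.le l) - z l| ≤ Real.exp (-μ)
  speed_mem : ∀ s : Var m n d → ℝ, IsNear xb μ ξ s → M.speed s ∈ Icc (128 * S₀) S
  initial_le : ∀ s : Var m n d → ℝ, IsNear xb μ ξ s →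
    ‖M.initial (fun j ↦ s (.inp j)) (s .level) - y 0‖ ≤ κ

/-- For inputs near `xb` and all precisions up to `K`, the simulations of the machine approximate
`z` with an error dominated by `exp (-K)`. -/
structure Approximates (M : Machine m n d) (xb : Fin n → ℝ) (z : Fin m → ℝ)
    (K ξ B κ L S : ℝ) : Prop where
  exists_isReference : ∀ μ ∈ Icc 0 K, ∃ y S₀, M.IsReference xb z y μ ξ B κ S S₀
  lipschitz : ∀ v v' : Fin d → ℝ, ‖v‖ ≤ B + 2 → ‖v'‖ ≤ B + 2 →
    ‖(fun k ↦ MvPolynomial.aeval v (M.p k)) - fun k ↦ MvPolynomial.aeval v' (M.p k)‖ ≤ L * ‖v - v'‖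
  one_le_lipschitz : 1 ≤ L
  one_le_speed : 1 ≤ S
  le_kappa : ξ ≤ κ
  error_le : 3 * κ * Real.exp (S * L) + κ ≤ Real.exp (-K) / 2

/-- From time `H` on, the smoothed input of the settled run `s` is near `xb`, around which the
machine approximates `z`; moreover `H` is large compared with the simulated solutions and `z`. -/
structure IsTracking (M : Machine m n d) (x : ℝ → Fin n → ℝ) (T : ℝ) (s : ℝ → Var m n d → ℝ)
    (H : ℝ) (xb : Fin n → ℝ) (z : Fin m → ℝ) (K ξ B κ L S : ℝ) : Prop
    extends M.IsSettled x T s H, M.Approximates xb z K ξ B κ L S where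
  abs_inp_sub_le : ∀ t ∈ Icc H T, ∀ j, |s t (.inp j) - xb j| ≤ ξ
  exp_le : 2 * Real.exp (-(5 * H)) ≤ ξ
  dim_mul_le : d * (2 * B + 3) ^ 2 ≤ (1 + H ^ 2) / 2
  mul_abs_le : ∀ l, 200000 * |z l| ≤ H

namespace IsTracking

variable {x : ℝ → Fin n → ℝ} {T H : ℝ} {s : ℝ → Var m n d → ℝ} {xb : Fin n → ℝ} {z : Fin m → ℝ}
  {K ξ B κ L S : ℝ} {i : ℤ}

lemma isNear (h : M.IsTracking x T s H xb z K ξ B κ L S) (hi : H ≤ phaseTime i (-(1 / 8)))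
    (hT : phaseTime i (7 / 8) ≤ T) {t : ℝ}
    (ht : t ∈ Icc (phaseTime i (1 / 8)) (phaseTime i (7 / 8))) :
    IsNear xb (s (phaseTime i (1 / 8)) .level) ξ (s t) where
  abs_inp_sub_le := h.abs_inp_sub_le t
    ⟨hi.trans ((phaseTime_le_phaseTime i (by norm_num)).trans ht.1), ht.2.trans hT⟩
  abs_level_sub_le := (h.abs_level_sub_level_le hi hT ht).trans <| by
    have : Real.exp (-(5 * phaseTime i (-(1 / 8)))) ≤ Real.exp (-(5 * H)) := by gcongr
    linarith [h.exp_le, Real.exp_pos (-(5 * H))]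

lemma kappa_nonneg (h : M.IsTracking x T s H xb z K ξ B κ L S) : 0 ≤ κ := by
  linarith [h.exp_le, h.le_kappa, Real.exp_pos (-(5 * H))]

lemma simulatesOn (h : M.IsTracking x T s H xb z K ξ B κ L S) (hi : H ≤ phaseTime i (-(1 / 8)))
    (hT : phaseTime i (7 / 8) ≤ T) (hK : 0 ≤ K) {y : ℝ → Fin d → ℝ} {S₀ : ℝ}
    (hy : M.IsReference xb z y (s (phaseTime i (1 / 8)) .level) ξ B κ S S₀) :
    M.SimulatesOn s y (phaseTime i (1 / 8)) (phaseTime i (7 / 8)) B L S κ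
      (3 * κ * Real.exp (S * L)) := by
  have hten := h.ten_le_phaseTime hi (by norm_num : -(1 / 8) ≤ (1 / 8 : ℝ))
  have hle : phaseTime i (-(1 / 8)) ≤ phaseTime i (1 / 8) := phaseTime_le_phaseTime i (by norm_num)
  have hle' : phaseTime i (1 / 8) ≤ phaseTime i (7 / 8) := phaseTime_le_phaseTime i (by norm_num)
  have hdecay : ∀ t, H ≤ t → Real.exp (-(5 * t)) ≤ Real.exp (-(5 * H)) := fun t ht ↦ by gcongr
  have hκ : 2 * Real.exp (-(5 * H)) ≤ κ := h.exp_le.trans h.le_kappa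
  have hpos := Real.exp_pos (-(5 * H))
  have hκ₀ := h.kappa_nonneg
  have herror := h.error_le
  have hone : Real.exp (-K) ≤ 1 := Real.exp_le_one_iff.2 (by linarith)
  have hprod : 0 ≤ 3 * κ * Real.exp (S * L) := by positivity
  exact {
    hasDerivAt := hy.hasDerivAt
    norm_le := hy.norm_le
    lipschitz := h.lipschitz
    one_le_lipschitz := h.one_le_lipschitz
    initial_le := fun t ht ↦ hy.initial_le _ (h.isNear hi hT ht)
    sim_le := (h.norm_sim_le hi (hle'.trans hT)).trans
      (by linarith [hdecay _ hi])
    leak_le := fun t ht ↦ by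
      have hsq := h.sq_mem_Icc hi (by norm_num) ht
      have hHt : H ≤ t := by linarith [ht.1]
      linarith [hdecay t hHt,
        (h.leaksSmall t ⟨hHt, ht.2.trans hT⟩).reset_sim (gate_le_exp i hsq.1 hsq.2)]
    speed_mem := fun t ht ↦ by
      have hspeed := hy.speed_mem _ (h.isNear hi hT ht)
      exact ⟨by linarith [hy.nonneg, hspeed.1], hspeed.2⟩
    one_le_speed := h.one_le_speed
    one_le_left := by linarith
    mul_sub_le_one := by
      have hsq := h.sq_phaseTime hi (by norm_num : -(1 / 8) ≤ (1 / 8 : ℝ))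
      have hsq' := h.sq_phaseTime hi (by norm_num : -(1 / 8) ≤ (7 / 8 : ℝ))
      nlinarith [mul_le_mul_of_nonneg_right hle' (by linarith : 0 ≤ phaseTime i (1 / 8))]
    le_one := by linarith
    error_le := le_rfl
    error_lt_one := by linarith }

lemma abs_estimate_sub_le (h : M.IsTracking x T s H xb z K ξ B κ L S)
    (hi : H ≤ phaseTime i (-(1 / 8))) (hT : phaseTime i (7 / 8) ≤ T)
    (hlevel : s (phaseTime i (1 / 8)) .level ≤ K) {t : ℝ}
    (ht : t ∈ Icc (phaseTime i (5 / 16)) (phaseTime i (7 / 8))) (l : Fin m) :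
    |M.estimate (s t) (Fin.castLE M.le l) - z l| ≤
      Real.exp (-K) / 2 + Real.exp (-s (phaseTime i (1 / 8)) .level) := by
  have hten := h.ten_le_phaseTime hi (by norm_num : -(1 / 8) ≤ (1 / 8 : ℝ))
  have hend : phaseTime i (1 / 8) ≤ T := (phaseTime_le_phaseTime i (by norm_num)).trans hT
  have hlevel₀ := (h.toIsRun.mono hend).level_nonneg (by linarith)
  obtain ⟨y, S₀, hy⟩ := h.exists_isReference _ ⟨hlevel₀, hlevel⟩
  have hH : H ≤ phaseTime i (1 / 8) := hi.trans (phaseTime_le_phaseTime i (by norm_num))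
  have hsim := h.simulatesOn hi hT (hlevel₀.trans hlevel) hy
  obtain ⟨τ, hτ, hest⟩ := hsim.exists_norm_estimate_sub_le h.toIsRun hT
    (h.dim_mul_le.trans (by nlinarith [h.ten_le]))
    (phaseTime_le_phaseTime i (by norm_num : (1 / 8 : ℝ) ≤ 1 / 4))
    (phaseTime_le_phaseTime i (by norm_num : (1 / 4 : ℝ) ≤ 5 / 16))
    (phaseTime_le_phaseTime i (by norm_num))
    (by rw [h.sq_phaseTime hi (by norm_num), h.sq_phaseTime hi (by norm_num)]; linarith)
    (fun u hu ↦ by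
      have hsq := h.sq_mem_Icc hi (by norm_num) hu
      exact half_le_gate i (by linarith [hsq.1]) (by linarith [hsq.2]))
    (S₀ := 128 * S₀) (by linarith [hy.nonneg])
    (fun u hu ↦ (hy.speed_mem _ (h.isNear hi hT
      ⟨(phaseTime_le_phaseTime i (by norm_num)).trans hu.1,
        hu.2.trans (phaseTime_le_phaseTime i (by norm_num))⟩)).1) ht
  have hcoord := (norm_le_pi_norm (M.estimate (s t) - y τ) (Fin.castLE M.le l)).trans hest
  have hlimit := hy.abs_sub_le τ (by linarith) l
  calc |M.estimate (s t) (Fin.castLE M.le l) - z l|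
      ≤ |M.estimate (s t) (Fin.castLE M.le l) - y τ (Fin.castLE M.le l)| +
        |y τ (Fin.castLE M.le l) - z l| := abs_sub_le _ _ _
    _ ≤ _ := add_le_add (hcoord.trans h.error_le) hlimit

lemma memoryCycle (h : M.IsTracking x T s H xb z K ξ B κ L S) (hi : H ≤ phaseTime i (-(1 / 8)))
    (hT : phaseTime i (11 / 8) ≤ T) (hK : precision (phaseTime i (3 / 8)) + 1 / 1000 ≤ K)
    (l : Fin m) :
    MemoryCycle (phaseTime i (3 / 8)) (phaseTime i (1 / 2)) (phaseTime i (9 / 16))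
      (phaseTime i (5 / 8)) (phaseTime i (7 / 8)) (phaseTime i (11 / 8)) (fun t ↦ s t (.sgn l))
      (fun t ↦ s t (.mem l)) (fun t ↦ M.estimate (s t) (Fin.castLE M.le l)) (z l) := by
  have hle : ∀ {r r' : ℝ}, r ≤ r' → phaseTime i r ≤ phaseTime i r' := phaseTime_le_phaseTime i
  have hten := h.ten_le_phaseTime hi le_rfl
  have hstart : phaseTime i (-(1 / 8)) ≤ phaseTime i (3 / 8) := hle (by norm_num)
  have hhold : phaseTime i (3 / 8) ≤ phaseTime i (7 / 8) := hle (by norm_num)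
  have hend : phaseTime i (7 / 8) ≤ phaseTime i (11 / 8) := hle (by norm_num)
  have hlen := phaseTime_sub_le_sub (i := i) (r := -(1 / 8)) (r' := 3 / 8) (by linarith)
    (by norm_num)
  have hsmall := exp_neg_five_mul_le (t := phaseTime i (3 / 8)) hten (by linarith) (by linarith)
  have hu := accuracy_pos (phaseTime i (3 / 8))
  have hlevel := h.abs_level_sub_precision_le hi
    ((hle (by norm_num : (1 / 8 : ℝ) ≤ 7 / 8)).trans (hend.trans hT))
  have hsq : ∀ {r : ℝ}, -(1 / 8) ≤ r → phaseTime i r ^ 2 = i + r := h.sq_phaseTime hi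
  exact {
    one_le := by linarith
    le_amp := hle (by norm_num)
    amp_le := hle (by norm_num)
    le_hold := hle (by norm_num)
    hold_le := hle (by norm_num)
    le_end := hend
    sq_amp := by rw [hsq (by norm_num), hsq (by norm_num)]; linarith
    sq_hold := by rw [hsq (by norm_num), hsq (by norm_num)]; ring
    sq_decay := by rw [hsq (by norm_num), hsq (by norm_num)]; ring
    sq_end := by rw [hsq (by norm_num), hsq (by norm_num)]; ring
    sgn := (h.sgn l).mono (by linarith) hT
    mem := (h.mem l).mono (by linarith) hT
    abs_sgn_le := fun t ht ↦
      (h.toIsRun.mono (ht.2.trans hT)).abs_sgn_le_one (by linarith [ht.1]) l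
    abs_mem_le := fun t ht ↦ (h.toIsRun.mono (ht.2.trans hT)).abs_mem_le (by linarith [ht.1]) l
    abs_value_le := by linarith [h.mul_abs_le l]
    abs_estimate_sub_le := fun t ht ↦
      (h.abs_estimate_sub_le hi (hend.trans hT) (by linarith [(abs_le.1 hlevel).2])
        ⟨(hle (by norm_num)).trans ht.1, ht.2⟩ l).trans
          (exp_neg_div_two_add_exp_neg_le hlevel (by linarith))
    abs_sgn_start_le := by linarith [h.abs_sgn_le hi (hhold.trans (hend.trans hT)) l]
    half_le_amp := fun t ht ↦ by
      have hmem := h.sq_mem_Icc hi (by norm_num) ht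
      exact half_le_gate i (by linarith [hmem.1]) (by linarith [hmem.2])
    reset_le := fun t ht ↦ by linarith [h.gain_mul_resetGate_le hi (hend.trans hT) ht]
    abs_amp_le := fun t ht ↦ by
      linarith [h.abs_amp_le hi hT ht l, accuracy_le_one (phaseTime i (3 / 8))] }

end IsTracking

end Machine

end Tracking

section Convergence

lemma phaseTime_add_one (i : ℤ) (r : ℝ) : phaseTime (i + 1) r = phaseTime i (1 + r) := by
  simp only [phaseTime, Int.cast_add, Int.cast_one, add_assoc]

lemma sub_half_le_phaseTime {i j : ℤ} {r : ℝ} (hj : 1 ≤ (j : ℝ))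
    (hi : (j : ℝ) ^ 2 - j / 4 ≤ i) (hr : -(1 / 8) ≤ r) : j - 1 / 2 ≤ phaseTime i r :=
  Real.le_sqrt_of_sq_le (by nlinarith)

lemma phaseTime_le_add_eighth {i j : ℤ} {r : ℝ} (hj : 0 ≤ (j : ℝ))
    (hi : i + r ≤ (j : ℝ) ^ 2 + j / 4) : phaseTime i r ≤ j + 1 / 8 :=
  Real.sqrt_le_iff.2 ⟨by linarith, by nlinarith⟩

lemma precision_phaseTime_le {i j : ℤ} {k : ℕ} (hj : 1 ≤ (j : ℝ)) (hi : (j : ℝ) ^ 2 - j / 4 ≤ i)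
    (hik : (i : ℝ) + 1 ≤ j ^ 2 + k) : precision (phaseTime i (3 / 8)) ≤ 1 + (k + 1) / 1000 := by
  have hge := sub_half_le_phaseTime hj hi (by norm_num : -(1 / 8) ≤ (3 / 8 : ℝ))
  refine precision_le (by positivity) ?_
  rcases le_total (phaseTime i (3 / 8)) j with hle | hle
  · exact (scale_nonpos j (by linarith) hge hle).trans (by positivity)
  · have hscale := scale_le j (by linarith) hle
    rw [sq_phaseTime (by linarith) le_rfl] at hscale
    linarith

/-- While `U ≥ 1 / 2` the error `e` drops by a fixed amount per step until it is comparable to `U`;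
it then remains so because `U` varies slowly. -/
lemma le_ten_mul_of_le_max {e U : ℕ → ℝ} {N₀ N : ℕ} (hN : N₀ ≤ N) (hpos : ∀ k, 0 < U k)
    (hslow : ∀ k < N, 0.999 * U k ≤ U (k + 1)) (hhalf : ∀ k < N₀, 1 / 2 ≤ U k)
    (hstep : ∀ k < N, e (k + 1) ≤ max (9.1 * U k) (e k - 0.02 * U k)) (hstart : e 0 ≤ 0.01 * N₀) :
    e N ≤ 10 * U N := by
  have hstay : ∀ k < N, e k ≤ 10 * U k → e (k + 1) ≤ 10 * U (k + 1) := by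
    intro k hk hek
    rcases le_max_iff.1 (hstep k hk) with hmax | hmax <;> linarith [hslow k hk, hpos k]
  have hdecrease : ∀ k ≤ N₀, e k ≤ 10 * U k ∨ e k ≤ 0.01 * N₀ - 0.01 * k := by
    intro k
    induction k with
    | zero => exact fun _ ↦ .inr (by simpa using hstart)
    | succ k ih =>
      intro hk
      rcases ih (by lia) with hek | hek
      · exact .inl (hstay k (by lia) hek)
      · push_cast
        rcases le_max_iff.1 (hstep k (by lia)) with hmax | hmax
        · exact .inl (by linarith [hslow k (by lia), hpos k])
        · exact .inr (by linarith [hhalf k (by lia)])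
  induction N, hN using Nat.le_induction with
  | base => exact (hdecrease N₀ le_rfl).elim id fun hle ↦ by linarith [hpos N₀]
  | succ k _ ih =>
    exact hstay k k.lt_succ_self <| ih (fun l hl ↦ hslow l (by lia)) (fun l hl ↦ hstep l (by lia))
      fun l hl ↦ hstay l (by lia)

namespace Machine

variable {m n d : ℕ} {M : Machine m n d} {x : ℝ → Fin n → ℝ} {T H : ℝ}
  {s : ℝ → Var m n d → ℝ} {xb : Fin n → ℝ} {z : Fin m → ℝ} {K ξ B κ L S : ℝ}

namespace IsTracking

lemma abs_mem_next_sub_le (h : M.IsTracking x T s H xb z K ξ B κ L S) {i j : ℤ} {k : ℕ}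
    (hH : H ≤ j - 1 / 2) (hk : 4 * ((k : ℝ) + 1) ≤ j) (hT : j + 1 / 8 ≤ T)
    (hK : 2 + (k : ℝ) / 1000 ≤ K) (hi : (j : ℝ) ^ 2 - j / 4 ≤ i) (hik : (i : ℝ) + 1 ≤ j ^ 2 + k)
    (l : Fin m) :
    |s (phaseTime (i + 1) (3 / 8)) (.mem l) - z l| ≤
      max (9.1 * accuracy (phaseTime i (3 / 8)))
        (|s (phaseTime i (3 / 8)) (.mem l) - z l| - 0.02 * accuracy (phaseTime i (3 / 8))) := by
  have hj : 1 ≤ (j : ℝ) := by linarith [h.ten_le]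
  rw [phaseTime_add_one, show (1 : ℝ) + 3 / 8 = 11 / 8 by norm_num]
  exact (h.memoryCycle (hH.trans (sub_half_le_phaseTime hj hi le_rfl))
    ((phaseTime_le_add_eighth (by linarith) (by linarith)).trans hT)
    (by linarith [precision_phaseTime_le hj hi hik]) l).abs_mem_end_sub_le

lemma abs_mem_phaseTime_sub_le (h : M.IsTracking x T s H xb z K ξ B κ L S) {j : ℤ} {k : ℕ}
    (hH : H ≤ j - 1 / 2) (hj : 1000 ≤ (j : ℝ)) (hk : 4 * ((k : ℝ) + 1) ≤ j) (hT : j + 1 / 8 ≤ T)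
    (hK : 2 + (k : ℝ) / 1000 ≤ K) (l : Fin m) :
    |s (phaseTime (j ^ 2 + k) (3 / 8)) (.mem l) - z l| ≤
      10 * accuracy (phaseTime (j ^ 2 + k) (3 / 8)) := by
  set N₀ : ℕ := ⌊(j : ℝ) / 4⌋₊
  have hN₀ : (N₀ : ℝ) ≤ j / 4 := Nat.floor_le (by linarith)
  have hN₀' : (j : ℝ) / 4 < N₀ + 1 := Nat.lt_floor_add_one _
  let τ : ℕ → ℝ := fun l ↦ phaseTime (j ^ 2 - N₀ + l) (3 / 8)
  have hlower (l : ℕ) : (j : ℝ) ^ 2 - j / 4 ≤ (j ^ 2 - N₀ + l : ℤ) := by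
    push_cast
    linarith [(Nat.cast_nonneg l : (0 : ℝ) ≤ l)]
  have hτ (l : ℕ) : j - 1 / 2 ≤ τ l :=
    sub_half_le_phaseTime (by linarith) (hlower l) (by norm_num)
  have hτ_sq (l : ℕ) : τ l ^ 2 = (j : ℝ) ^ 2 - N₀ + l + 3 / 8 := by
    rw [sq_phaseTime (lt_of_lt_of_le (by linarith) (hτ l)) le_rfl]
    push_cast
    ring
  have hτ_succ (l : ℕ) : τ (l + 1) = phaseTime (j ^ 2 - N₀ + l + 1) (3 / 8) := by
    simp only [τ, Nat.cast_add, Nat.cast_one, add_assoc]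
  have hτ_zero : τ 0 ≤ j := Real.sqrt_le_iff.2 ⟨by linarith, by push_cast; linarith⟩
  have hconv := le_ten_mul_of_le_max (e := fun l' ↦ |s (τ l') (.mem l) - z l|)
    (U := fun l' ↦ accuracy (τ l')) (N₀.le_add_right k) (fun _ ↦ accuracy_pos _)
    (fun l' _ ↦ ?_) (fun l' hl' ↦ ?_) (fun l' hl' ↦ ?_) ?_
  · simpa [τ, ← add_assoc] using hconv
  · have hsq : τ (l' + 1) ^ 2 = τ l' ^ 2 + 1 := by rw [hτ_sq, hτ_sq]; push_cast; ring
    have hle : τ l' ≤ τ (l' + 1) := by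
      rw [hτ_succ, phaseTime_add_one]
      exact phaseTime_le_phaseTime _ (by norm_num)
    have := abs_accuracy_sub_le (by linarith [hτ l']) hle (by linarith)
    linarith [(abs_le.1 this).1]
  · refine half_le_accuracy (scale_nonpos j (by linarith [hτ l']) (hτ l') ?_)
    have : (l' : ℝ) + 1 ≤ N₀ := by exact_mod_cast hl'
    nlinarith [hτ_sq l', hτ l']
  · have : (l' : ℝ) + 1 ≤ N₀ + k := by exact_mod_cast hl'
    simp only [hτ_succ]
    exact h.abs_mem_next_sub_le hH hk hT hK (hlower l') (by push_cast; linarith) l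
  · have hmem := (h.toIsRun.mono (by linarith : τ 0 ≤ T)).abs_mem_le (by linarith [hτ 0]) l
    linarith [abs_sub (s (τ 0) (.mem l)) (z l), h.mul_abs_le l]

end IsTracking

lemma IsRun.abs_mem_sub_mem_le (h : M.IsRun x T s) {j : ℤ} (hj : 0 ≤ (j : ℝ)) {t₀ t : ℝ}
    (ht₀ : j ≤ t₀) (ht : t₀ ≤ t) (htj : t ≤ j + 3 / 8) (hT : t ≤ T) (l : Fin m) :
    |s t (.mem l) - s t₀ (.mem l)| ≤ 20000 * Real.exp (-((t₀ ^ 2 - j ^ 2) / 20000)) := by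
  let drift (u : ℝ) : ℝ := -20000 * Real.exp (-((u ^ 2 - j ^ 2) / 20000))
  have hdrift : IsPrimitiveOn drift
      (fun u ↦ 2 * u * Real.exp (-((u ^ 2 - j ^ 2) / 20000))) t₀ t :=
    .of_hasDerivAt fun u _ ↦
      ((((hasDerivAt_sq u).sub_const _).div_const 20000).fun_neg.exp.const_mul _).congr_deriv
        (by ring)
  have hmem := (h.mem l).mono (hj.trans ht₀) hT
  have hbound (u : ℝ) (hu : u ∈ Ioo t₀ t) :
      |accuracy u * (u * s u (.sgn l) - 2000 * s u (.mem l))| ≤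
        2 * u * Real.exp (-((u ^ 2 - j ^ 2) / 20000)) := by
    have hu₀ : 0 ≤ u := by linarith [hu.1]
    have hrun := h.mono (hu.2.le.trans hT)
    have hsgn := abs_le.1 (hrun.abs_sgn_le_one hu₀ l)
    have hmem := abs_le.1 (hrun.abs_mem_le hu₀ l)
    have hfactor : |u * s u (.sgn l) - 2000 * s u (.mem l)| ≤ 2 * u :=
      abs_le.2 ⟨by nlinarith, by nlinarith⟩
    have hscale := le_scale (t := u) j hj (by linarith [hu.1]) (by linarith [hu.2])
    have hacc : accuracy u ≤ Real.exp (-((u ^ 2 - j ^ 2) / 20000)) :=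
      (accuracy_le_exp u).trans (Real.exp_le_exp.2 (by linarith))
    rw [abs_mul, abs_of_pos (accuracy_pos u), mul_comm]
    exact mul_le_mul hfactor hacc (accuracy_pos u).le (by linarith)
  have hupper := hmem.sub_le_sub ht hdrift fun u hu ↦ (le_abs_self _).trans (hbound u hu)
  have hlower := hmem.neg.sub_le_sub ht hdrift fun u hu ↦ (neg_le_abs _).trans (hbound u hu)
  have hpos := Real.exp_pos (-((t ^ 2 - (j : ℝ) ^ 2) / 20000))
  simp only [drift] at hupper hlower
  exact abs_le.2 ⟨by linarith, by linarith⟩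

lemma IsTracking.abs_mem_sub_le (h : M.IsTracking x T s H xb z K ξ B κ L S) {j : ℤ} {k : ℕ}
    (hH : H ≤ j - 1 / 2) (hj : 1000 ≤ (j : ℝ)) (hk : 4 * ((k : ℝ) + 1) ≤ j)
    (hK : 2 + (k : ℝ) / 1000 ≤ K) {t : ℝ} (ht : t ∈ Icc (j + 1 / 8 : ℝ) (j + 3 / 8)) (hT : t ≤ T)
    (l : Fin m) : |s t (.mem l) - z l| ≤ 20010 * Real.exp (-(k / 20000)) := by
  set t₀ := phaseTime (j ^ 2 + k) (3 / 8)
  have : (0 : ℝ) ≤ k := k.cast_nonneg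
  have hstart : t₀ ≤ j + 1 / 8 :=
    phaseTime_le_add_eighth (by linarith) (by push_cast; linarith)
  have hjt₀ : j ≤ t₀ := Real.le_sqrt_of_sq_le (by push_cast; linarith)
  have hsq : t₀ ^ 2 = j ^ 2 + k + 3 / 8 := by
    rw [sq_phaseTime (lt_of_lt_of_le (by linarith) hjt₀) le_rfl]
    push_cast
    ring
  have hexp : Real.exp (-((t₀ ^ 2 - j ^ 2) / 20000)) ≤ Real.exp (-(k / 20000)) :=
    Real.exp_le_exp.2 (by linarith)
  have hscale := le_scale j (by linarith) hjt₀ (by linarith)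
  have hacc : accuracy t₀ ≤ Real.exp (-((t₀ ^ 2 - j ^ 2) / 20000)) :=
    (accuracy_le_exp t₀).trans (Real.exp_le_exp.2 (by linarith))
  have hdrift := h.abs_mem_sub_mem_le (by linarith) hjt₀ (hstart.trans ht.1) ht.2 hT l
  have hmem := h.abs_mem_phaseTime_sub_le hH hj hk (ht.1.trans hT) hK l
  linarith [abs_sub_le (s t (.mem l)) (s t₀ (.mem l)) (z l)]

namespace IsSettled

lemma abs_out_sub_le_of_sample (h : M.IsSettled x T s H) {j : ℤ} (hH : H ≤ j)
    (hT : j + 3 / 8 ≤ T) {l : Fin m} {c η : ℝ} (hc : |c| ≤ 1 / 2 * (1 + j)) (hη : 0 ≤ η)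
    (hmem : ∀ t ∈ Icc (j + 1 / 8 : ℝ) (j + 3 / 8), |s t (.mem l) - c| ≤ η) :
    |s (j + 3 / 8) (.out l) - c| ≤ Real.exp (-(5 * (j + 1 / 8))) + η := by
  have hten := h.ten_le
  have hP := isPrimitiveOn_integral (by linarith : (j + 1 / 8 : ℝ) ≤ j + 3 / 8)
    (continuous_gain.mul (continuous_clock .sample)).continuousOn
  have hgain := le_sub_of_half_le_gate (w₁ := j + 1 / 4) (w₂ := j + 5 / 16) (g := sampleGate)
    (by linarith) (by linarith) (by linarith) (by linarith) (by nlinarith)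
    (fun t ↦ (gate_pos _ t).le)
    (fun t ht ↦ half_le_gate j (by linarith [ht.1]) (by linarith [ht.2])) hP
  refine (IsPrimitiveOn.abs_sub_le_of_relaxation (by linarith)
    ((h.out l).mono (by linarith) hT) hP (fun t _ ↦ gain_mul_gate_nonneg _ t)
    (fun t ht ↦ hmem t (Ioo_subset_Icc_self ht)) hη).trans ?_
  gcongr
  have hout := (h.toIsRun.mono (by linarith : j + 1 / 8 ≤ T)).abs_out_le (by linarith) l
  calc _ ≤ (1 + (j + 1 / 8)) * Real.exp (-(100 * (1 + (j + 1 / 4) : ℝ))) :=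
        mul_le_mul (by linarith [abs_sub (s (j + 1 / 8) (.out l)) c])
          (Real.exp_le_exp.2 (neg_le_neg hgain)) (Real.exp_pos _).le (by linarith)
    _ ≤ _ := one_add_mul_exp_neg_le (by linarith) (by linarith)

lemma abs_out_sub_out_le (h : M.IsSettled x T s H) {j : ℤ} (hH : H ≤ j) {t : ℝ}
    (ht : t ∈ Icc (j + 3 / 8 : ℝ) (j + 9 / 8)) (hT : t ≤ T) (l : Fin m) :
    |s t (.out l) - s (j + 3 / 8) (.out l)| ≤ Real.exp (-(5 * (j + 1 / 8))) := by
  have hten := h.ten_le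
  refine (((h.out l).mono (by linarith) hT).abs_sub_le_mul_sub ht.1
    (c := Real.exp (-(5 * (j + 1 / 8)))) fun u hu ↦ ?_).trans
    (mul_le_of_le_one_right (Real.exp_pos _).le (by linarith [ht.2]))
  refine ((h.leaksSmall u ⟨by linarith [hu.1], hu.2.le.trans hT⟩).sample
    (gate_le_exp j (by linarith [hu.1]) (by linarith [hu.2, ht.2])) l).trans ?_
  exact Real.exp_le_exp.2 (by linarith [hu.1])

lemma abs_out_sub_le_of_mem (h : M.IsSettled x T s H) {a b : ℝ} (ha : 0 ≤ a) (hab : a ≤ b)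
    (hT : b ≤ T) {l : Fin m} {c η : ℝ} (hη : 0 ≤ η)
    (hmem : ∀ t ∈ Icc a b, |s t (.mem l) - c| ≤ η) :
    |s b (.out l) - c| ≤ |s a (.out l) - c| + η := by
  have hP := isPrimitiveOn_integral hab
    (continuous_gain.mul (continuous_clock .sample)).continuousOn
  have hgain := hP.mul_sub_le_sub hab (c := 0) fun t _ ↦ gain_mul_gate_nonneg _ t
  refine (IsPrimitiveOn.abs_sub_le_of_relaxation hab ((h.out l).mono ha hT) hP
    (fun t _ ↦ gain_mul_gate_nonneg _ t) (fun t ht ↦ hmem t (Ioo_subset_Icc_self ht)) hη).trans ?_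
  gcongr
  exact mul_le_of_le_one_right (abs_nonneg _) (Real.exp_le_one_iff.2 (by linarith))

end IsSettled

namespace IsTracking

lemma abs_mem_sub_le_exp (h : M.IsTracking x T s H xb z K ξ B κ L S) {μ : ℝ} (hμ : 0 ≤ μ)
    (hH : 80000 * (μ + 13) ≤ H) (hK : 243 + 20 * μ ≤ K) {j : ℤ} (hj : H ≤ j - 1 / 2) {t : ℝ}
    (ht : t ∈ Icc (j + 1 / 8 : ℝ) (j + 3 / 8)) (hT : t ≤ T) (l : Fin m) :
    |s t (.mem l) - z l| ≤ Real.exp (-μ) / 4 := by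
  have hk := Nat.le_ceil (20000 * (μ + 12))
  have hk' := Nat.ceil_lt_add_one (by linarith : 0 ≤ 20000 * (μ + 12))
  set k : ℕ := ⌈20000 * (μ + 12)⌉₊
  have hpow : (80040 : ℝ) ≤ Real.exp 12 := by
    have hsplit : Real.exp 12 = Real.exp 1 ^ 12 := by rw [← Real.exp_nat_mul]; norm_num
    rw [hsplit]
    calc (80040 : ℝ) ≤ 2.7 ^ 12 := by norm_num
      _ ≤ Real.exp 1 ^ 12 := by gcongr; linarith [Real.exp_one_gt_d9]
  have hexp : Real.exp (-(k / 20000)) * Real.exp 12 ≤ Real.exp (-μ) := by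
    rw [← Real.exp_add]
    exact Real.exp_le_exp.2 (by linarith)
  have hmem := h.abs_mem_sub_le (k := k) hj (by linarith) (by linarith) (by linarith) ht hT l
  nlinarith [Real.exp_pos (-(k / 20000 : ℝ))]

theorem abs_out_sub_le (h : M.IsTracking x T s H xb z K ξ B κ L S) {μ : ℝ} (hμ : 0 ≤ μ)
    (hH : 80000 * (μ + 13) ≤ H) (hK : 243 + 20 * μ ≤ K) {u : ℝ} (hu : H + 2 ≤ u) (hT : u ≤ T)
    (l : Fin m) : |s u (.out l) - z l| ≤ Real.exp (-μ) := by
  set j : ℤ := ⌊u - 3 / 8⌋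
  have hj : (j : ℝ) ≤ u - 3 / 8 := Int.floor_le _
  have hj' : u - 3 / 8 < j + 1 := Int.lt_floor_add_one _
  have hη := Real.exp_pos (-μ)
  have hexp : Real.exp (-(5 * ((j : ℝ) + 1 / 8))) ≤ Real.exp (-μ) / 4 := by
    have hfour : 4 ≤ Real.exp 3 := by linarith [Real.add_one_le_exp (3 : ℝ)]
    have hsplit : Real.exp (-(5 * ((j : ℝ) + 1 / 8))) * Real.exp 3 ≤ Real.exp (-μ) := by
      rw [← Real.exp_add]
      exact Real.exp_le_exp.2 (by linarith)
    nlinarith [Real.exp_pos (-(5 * ((j : ℝ) + 1 / 8)))]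
  have hsample := h.abs_out_sub_le_of_sample (j := j) (c := z l) (by linarith) (by linarith)
    (by linarith [h.mul_abs_le l]) (by linarith) fun t ht ↦
      h.abs_mem_sub_le_exp hμ hH hK (by linarith) ht (by linarith [ht.2]) l
  have hhold (t : ℝ) (ht : t ∈ Icc (j + 3 / 8 : ℝ) (j + 9 / 8)) (htu : t ≤ u) :
      |s t (.out l) - z l| ≤ 3 * (Real.exp (-μ) / 4) := by
    have hleak := h.abs_out_sub_out_le (by linarith) ht (htu.trans hT) l
    linarith [abs_sub_le (s t (.out l)) (s (j + 3 / 8) (.out l)) (z l)]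
  rcases le_total u (j + 9 / 8) with hle | hle
  · linarith [hhold u ⟨by linarith, hle⟩ le_rfl]
  · have hresample := h.abs_out_sub_le_of_mem (c := z l) (by linarith) hle hT
      (by linarith : 0 ≤ Real.exp (-μ) / 4) fun t ht ↦
        h.abs_mem_sub_le_exp hμ hH hK (j := j + 1) (by push_cast; linarith)
          ⟨by push_cast; linarith [ht.1], by push_cast; linarith [ht.2]⟩ (ht.2.trans hT) l
    linarith [hhold (j + 9 / 8) ⟨by linarith, le_rfl⟩ hle]

end IsTracking

end Machine

end Convergence

section Parameters

lemma three_mul_mul_exp_add_le {A Q K N : ℝ} (hA : 0 ≤ A) (hQ : 0 ≤ Q) (hN : A + Q + K + 10 ≤ N) :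
    3 * (Q * Real.exp (-N)) * Real.exp A + Q * Real.exp (-N) ≤ Real.exp (-K) / 2 := by
  have hsplit : Real.exp Q * Real.exp 10 * (Real.exp (-N) * Real.exp A) ≤ Real.exp (-K) := by
    simp only [← Real.exp_add]
    exact Real.exp_le_exp.2 (by linarith)
  calc 3 * (Q * Real.exp (-N)) * Real.exp A + Q * Real.exp (-N)
      ≤ 3 * (Q * Real.exp (-N)) * Real.exp A + Q * (Real.exp (-N) * Real.exp A) := by
        gcongr
        exact le_mul_of_one_le_right (Real.exp_pos _).le (Real.one_le_exp hA)
    _ = Q * 8 * (Real.exp (-N) * Real.exp A) / 2 := by ring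
    _ ≤ Real.exp Q * Real.exp 10 * (Real.exp (-N) * Real.exp A) / 2 := by
        gcongr
        exacts [by linarith [Real.add_one_le_exp Q], by linarith [Real.add_one_le_exp (10 : ℝ)]]
    _ ≤ Real.exp (-K) / 2 := by gcongr

lemma four_mul_sq_mul_exp_le {t N : ℝ} (hN : 0 ≤ N) (ht : 4 * N + 20 ≤ t) :
    4 * t ^ 2 * Real.exp (-(t - 1)) ≤ Real.exp (-N) ^ 2 / 2 := by
  have hsq : t ^ 2 ≤ 16 * Real.exp (t / 2) := by
    have hlin : t ≤ 4 * Real.exp (t / 4) := by linarith [Real.add_one_le_exp (t / 4)]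
    have hexp : Real.exp (t / 2) = Real.exp (t / 4) ^ 2 := by
      rw [← Real.exp_nat_mul]; congr 1; push_cast; ring
    rw [hexp]
    nlinarith
  have hnine : (128 : ℝ) ≤ Real.exp 9 := by
    rw [show (9 : ℝ) = (9 : ℕ) * 1 by norm_num, Real.exp_nat_mul]
    calc (128 : ℝ) ≤ 2.7 ^ 9 := by norm_num
      _ ≤ Real.exp 1 ^ 9 := by gcongr; linarith [Real.exp_one_gt_d9]
  calc 4 * t ^ 2 * Real.exp (-(t - 1)) ≤ 4 * (16 * Real.exp (t / 2)) * Real.exp (-(t - 1)) := by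
        gcongr
    _ = 128 * (Real.exp (t / 2) * Real.exp (-(t - 1))) / 2 := by ring
    _ ≤ Real.exp 9 * (Real.exp (t / 2) * Real.exp (-(t - 1))) / 2 := by gcongr
    _ ≤ Real.exp (-N) ^ 2 / 2 := by
        rw [← Real.exp_nat_mul, ← Real.exp_add, ← Real.exp_add]
        gcongr
        push_cast
        linarith

lemma norm_snoc_le {n : ℕ} {X : Fin n → ℝ} {a R : ℝ} (hR : 0 ≤ R) (hX : ∀ i, |X i| ≤ R)
    (ha : |a| ≤ R) : ‖(Fin.snoc X a : Fin (n + 1) → ℝ)‖ ≤ R := by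
  refine (pi_norm_le_iff_of_nonneg hR).2 (Fin.lastCases ?_ fun i ↦ ?_)
  · simpa using ha
  · simpa using hX i

lemma exp_neg_add_one_le_div_two (N : ℝ) : Real.exp (-(N + 1)) ≤ Real.exp (-N) / 2 := by
  have hsplit : Real.exp (-(N + 1)) * Real.exp 1 = Real.exp (-N) := by
    rw [← Real.exp_add]; ring_nf
  nlinarith [Real.add_one_le_exp (1 : ℝ), Real.exp_pos (-(N + 1))]

namespace Machine

variable {m n d : ℕ} {M : Machine m n d}

/-- `y` is the solution that a weak computation of `z` provides on input `xb` and precision `μ`: it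
has polynomial growth, and is accurate after time `S₀`, which the machine overestimates. -/
structure Solves (M : Machine m n d) (xb : Fin n → ℝ) (z : Fin m → ℝ) (C : ℝ) (r : ℕ) (μ : ℝ)
    (y : ℝ → Fin d → ℝ) (S₀ : ℝ) : Prop where
  nonneg : 0 ≤ S₀
  apply_zero : y 0 = M.initial xb μ
  hasDerivAt : ∀ τ, 0 ≤ τ → HasDerivAt y (fun k ↦ MvPolynomial.aeval (y τ) (M.p k)) τ
  norm_le : ∀ τ, 0 ≤ τ → ‖y τ‖ ≤ C * (1 + (‖xb‖ + μ + τ)) ^ r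
  abs_sub_le : ∀ τ, S₀ ≤ τ → ∀ l, |y τ (Fin.castLE M.le l) - z l| ≤ Real.exp (-μ)
  time_le : 128 * S₀ * 4 ^ M.exponent ≤ M.coeff * (1 + (‖xb‖ + μ)) ^ M.exponent

variable {xb : Fin n → ℝ} {μ ξ : ℝ}

namespace IsNear

variable {s : Var m n d → ℝ}

lemma abs_inp_le (h : IsNear xb μ ξ s) (hξ : ξ ≤ 1) (j : Fin n) : |s (.inp j)| ≤ 1 + ‖xb‖ := by
  have hj := norm_le_pi_norm xb j
  rw [Real.norm_eq_abs] at hj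
  linarith [abs_sub_abs_le_abs_sub (s (.inp j)) (xb j), h.abs_inp_sub_le j]

lemma abs_level_le (h : IsNear xb μ ξ s) (hξ : ξ ≤ 1) (hμ : 0 ≤ μ) : |s .level| ≤ 1 + μ := by
  linarith [abs_sub_abs_le_abs_sub (s .level) μ, h.abs_level_sub_le, abs_of_nonneg hμ]

lemma speed_le (h : IsNear xb μ ξ s) (hξ : ξ ≤ 1) (hμ : 0 ≤ μ) (hcoeff : 0 ≤ M.coeff) {R : ℝ}
    (hR : 1 + ‖xb‖ + μ ≤ R) : M.speed s ≤ M.coeff * (1 + n * R ^ 2 + R ^ 2) ^ M.exponent := by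
  have hxb := norm_nonneg xb
  have hinp (j : Fin n) : s (.inp j) ^ 2 ≤ R ^ 2 :=
    sq_le_sq' (by linarith [abs_le.1 (h.abs_inp_le hξ j)])
      (by linarith [abs_le.1 (h.abs_inp_le hξ j)])
  have hsum : ∑ j, s (.inp j) ^ 2 ≤ n * R ^ 2 :=
    (Finset.sum_le_card_nsmul Finset.univ _ _ fun j _ ↦ hinp j).trans (by simp)
  have hlevel : s .level ^ 2 ≤ R ^ 2 :=
    sq_le_sq' (by linarith [abs_le.1 (h.abs_level_le hξ hμ)])
      (by linarith [abs_le.1 (h.abs_level_le hξ hμ)])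
  rw [speed, smul_eq_mul]
  have := Finset.sum_nonneg fun (j : Fin n) (_ : j ∈ Finset.univ) ↦ sq_nonneg (s (.inp j))
  gcongr

lemma le_speed (h : IsNear xb μ ξ s) (hξ : ξ ≤ 1) (hμ : 0 ≤ μ) (hcoeff : 0 ≤ M.coeff) :
    M.coeff * (1 + (‖xb‖ + μ)) ^ M.exponent ≤ M.speed s * 4 ^ M.exponent := by
  have hsum : 0 ≤ ∑ j, s (.inp j) ^ 2 := Finset.sum_nonneg fun j _ ↦ sq_nonneg _
  have hxb : ‖xb‖ ≤ 3 / 2 + (∑ j, s (.inp j) ^ 2) / 2 := by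
    refine (pi_norm_le_iff_of_nonneg (by linarith)).2 fun j ↦ ?_
    have hj := Finset.single_le_sum (f := fun j ↦ s (.inp j) ^ 2) (fun j _ ↦ sq_nonneg _)
      (Finset.mem_univ j)
    rw [Real.norm_eq_abs]
    linarith [abs_sub_abs_le_abs_sub (xb j) (s (.inp j)), abs_sub_comm (xb j) (s (.inp j)),
      h.abs_inp_sub_le j, sq_nonneg (|s (.inp j)| - 1), sq_abs (s (.inp j))]
  have hlevel : μ ≤ 1 + |s .level| := by
    linarith [abs_sub_abs_le_abs_sub μ (s .level), abs_sub_comm μ (s .level), h.abs_level_sub_le,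
      le_abs_self μ]
  have hbase : 1 + (‖xb‖ + μ) ≤ (1 + ∑ j, s (.inp j) ^ 2 + s .level ^ 2) * 4 := by
    nlinarith [sq_nonneg (|s .level| - 1), sq_abs (s .level)]
  rw [speed, smul_eq_mul, mul_assoc, ← mul_pow]
  gcongr

end IsNear

lemma exists_norm_initial_sub_initial_le (M : Machine m n d) :
    ∃ C : ℝ, 0 ≤ C ∧ ∃ r : ℕ, ∀ xb μ ξ R (s : Var m n d → ℝ), IsNear xb μ ξ s → 0 ≤ μ → 0 ≤ ξ →
      ξ ≤ 1 → 1 + ‖xb‖ + μ ≤ R →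
      ‖M.initial (fun j ↦ s (.inp j)) (s .level) - M.initial xb μ‖ ≤ C * (1 + R) ^ r * ξ := by
  obtain ⟨C, hC, r, hlip⟩ := exists_norm_eval_sub_eval_le M.q
  refine ⟨C, hC, r, fun xb μ ξ R s h hμ hξ₀ hξ hR ↦ ?_⟩
  have hxb := norm_nonneg xb
  have hR₀ : 0 ≤ R := by linarith
  have hdist : ‖(Fin.snoc (fun j ↦ s (.inp j)) (s .level) : Fin (n + 1) → ℝ) -
      (Fin.snoc xb μ : Fin (n + 1) → ℝ)‖ ≤ ξ := by
    refine (pi_norm_le_iff_of_nonneg hξ₀).2 (Fin.lastCases ?_ fun j ↦ ?_)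
    · simpa using h.abs_level_sub_le
    · simpa using h.abs_inp_sub_le j
  refine (hlip R _ _ (norm_snoc_le (by linarith) (fun j ↦ ?_) ?_)
    (norm_snoc_le (by linarith) (fun j ↦ ?_) ?_)).trans (by gcongr)
  · linarith [h.abs_inp_le hξ j]
  · linarith [h.abs_level_le hξ hμ]
  · linarith [norm_le_pi_norm xb j, Real.norm_eq_abs (xb j)]
  · linarith [abs_of_nonneg hμ]

lemma Solves.isReference {z : Fin m → ℝ} {C : ℝ} {r : ℕ} {y : ℝ → Fin d → ℝ} {S₀ : ℝ}
    (h : M.Solves xb z C r μ y S₀) (hcoeff : 0 ≤ M.coeff) (hC : 0 ≤ C) (hμ : 0 ≤ μ) (hξ : ξ ≤ 1)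
    {R S κ : ℝ} (hR : 1 + ‖xb‖ + μ ≤ R)
    (hS : M.coeff * (1 + n * R ^ 2 + R ^ 2) ^ M.exponent ≤ S)
    (hκ : ∀ s : Var m n d → ℝ, IsNear xb μ ξ s →
      ‖M.initial (fun j ↦ s (.inp j)) (s .level) - M.initial xb μ‖ ≤ κ) :
    M.IsReference xb z y μ ξ (C * (R + S) ^ r) κ S S₀ where
  nonneg := h.nonneg
  hasDerivAt := h.hasDerivAt
  norm_le τ hτ := (h.norm_le τ hτ.1).trans <| by
    have := norm_nonneg xb
    have := hτ.1
    gcongr C * ?_ ^ r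
    linarith [hτ.2]
  abs_sub_le := h.abs_sub_le
  speed_mem s hs := by
    refine ⟨?_, (hs.speed_le hξ hμ hcoeff hR).trans hS⟩
    exact le_of_mul_le_mul_right (h.time_le.trans (hs.le_speed hξ hμ hcoeff)) (by positivity)
  initial_le s hs := h.apply_zero ▸ hκ s hs

lemma approximates_of_solves {z : Fin m → ℝ} (hcoeff : 0 ≤ M.coeff) {C : ℝ} (hC : 0 ≤ C) {r : ℕ}
    {K R S L Q N : ℝ} (hK : 0 ≤ K) (hR : 1 + ‖xb‖ + K ≤ R) (hS₁ : 1 ≤ S)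
    (hS : M.coeff * (1 + n * R ^ 2 + R ^ 2) ^ M.exponent ≤ S) (hL₁ : 1 ≤ L)
    (hL : ∀ v v' : Fin d → ℝ, ‖v‖ ≤ C * (R + S) ^ r + 2 → ‖v'‖ ≤ C * (R + S) ^ r + 2 →
      ‖(fun k ↦ MvPolynomial.aeval v (M.p k)) - fun k ↦ MvPolynomial.aeval v' (M.p k)‖ ≤
        L * ‖v - v'‖)
    (hQ₁ : 1 ≤ Q)
    (hQ : ∀ μ ∈ Icc 0 K, ∀ s : Var m n d → ℝ, IsNear xb μ (Real.exp (-N)) s →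
      ‖M.initial (fun j ↦ s (.inp j)) (s .level) - M.initial xb μ‖ ≤ Q * Real.exp (-N))
    (hN : S * L + Q + R + 10 ≤ N) (hsolves : ∀ μ ∈ Icc 0 K, ∃ y S₀, M.Solves xb z C r μ y S₀) :
    M.Approximates xb z K (Real.exp (-N)) (C * (R + S) ^ r) (Q * Real.exp (-N)) L S := by
  have hxb := norm_nonneg xb
  have hSL : 0 ≤ S * L := by positivity
  exact {
    exists_isReference := fun μ hμ ↦ by
      obtain ⟨y, S₀, hy⟩ := hsolves μ hμ
      exact ⟨y, S₀, hy.isReference hcoeff hC hμ.1 (Real.exp_le_one_iff.2 (by linarith))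
        (by linarith [hμ.2]) hS (hQ μ hμ)⟩
    lipschitz := hL
    one_le_lipschitz := hL₁
    one_le_speed := hS₁
    le_kappa := le_mul_of_one_le_left (Real.exp_pos _).le hQ₁
    error_le := three_mul_mul_exp_add_le hSL (by linarith) (by linarith) }

lemma exists_approximates (M : Machine m n d) (hcoeff : 0 ≤ M.coeff) {C : ℝ} (hC : 0 ≤ C) (r : ℕ) :
    ∃ B N : ℝ → ℝ, IsPolyBounded (fun R ↦ R) B ∧ IsPolyBounded (fun R ↦ R) N ∧
      ∀ R, 1 ≤ R → 0 ≤ B R ∧ 0 ≤ N R ∧ ∀ xb z K, 0 ≤ K → 1 + ‖xb‖ + K ≤ R →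
        (∀ μ ∈ Icc 0 K, ∃ y S₀, M.Solves xb z C r μ y S₀) →
        ∃ κ L S, M.Approximates xb z K (Real.exp (-N R)) (B R) κ L S := by
  obtain ⟨Cp, hCp, rp, hp⟩ := exists_norm_eval_sub_eval_le M.p
  obtain ⟨Cq, hCq, rq, hq⟩ := M.exists_norm_initial_sub_initial_le
  let S (R : ℝ) := 1 + M.coeff * (1 + n * R ^ 2 + R ^ 2) ^ M.exponent
  let B (R : ℝ) := C * (R + S R) ^ r
  let L (R : ℝ) := 1 + Cp * (1 + (B R + 2)) ^ rp
  let Q (R : ℝ) := 1 + Cq * (1 + R) ^ rq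
  let N (R : ℝ) := S R * L R + Q R + R + 10
  have hid : IsPolyBounded (fun R : ℝ ↦ R) fun R ↦ R := .self
  have hconst (c : ℝ) : IsPolyBounded (fun R : ℝ ↦ R) fun _ ↦ c := .const c
  have hSpoly : IsPolyBounded (fun R ↦ R) S := (hconst 1).add <| (hconst _).mul
    ((((hconst 1).add ((hconst n).mul (hid.pow 2))).add (hid.pow 2)).pow M.exponent)
  have hBpoly : IsPolyBounded (fun R ↦ R) B := (hconst C).mul ((hid.add hSpoly).pow r)
  have hLpoly : IsPolyBounded (fun R ↦ R) L :=
    (hconst 1).add ((hconst Cp).mul (((hconst 1).add (hBpoly.add (hconst 2))).pow rp))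
  have hQpoly : IsPolyBounded (fun R ↦ R) Q :=
    (hconst 1).add ((hconst Cq).mul (((hconst 1).add hid).pow rq))
  refine ⟨B, N, hBpoly, (((hSpoly.mul hLpoly).add hQpoly).add hid).add (hconst 10), fun R hR ↦ ?_⟩
  have hS : 1 ≤ S R := le_add_of_nonneg_right (by positivity)
  have hB : 0 ≤ B R := by positivity
  have hL : 1 ≤ L R := le_add_of_nonneg_right (by positivity)
  have hQ : 1 ≤ Q R := le_add_of_nonneg_right (by positivity)
  have hN : 0 ≤ N R := by positivity
  refine ⟨hB, hN, fun xb z K hK hKR hsolves ↦ ⟨_, L R, S R, approximates_of_solves hcoeff hC hK hKR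
    hS (by simp [S]) hL (fun v v' hv hv' ↦ (hp _ v v' hv hv').trans (by gcongr; simp [L, B])) hQ
    (fun μ hμ s hs ↦ ?_) le_rfl hsolves⟩⟩
  exact (hq xb μ _ R s hs hμ.1 (Real.exp_pos _).le (Real.exp_le_one_iff.2 (neg_nonpos.2 hN))
    (by linarith [hμ.2])).trans (by gcongr; simp [Q])

lemma Approximates.abs_le {z : Fin m → ℝ} {K B κ L S : ℝ} (h : M.Approximates xb z K ξ B κ L S)
    (hK : 0 ≤ K) (hξ : 0 ≤ ξ) (l : Fin m) : |z l| ≤ B + 1 := by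
  obtain ⟨y, S₀, hy⟩ := h.exists_isReference 0 ⟨le_rfl, hK⟩
  have hspeed := hy.speed_mem (fun | .inp j => xb j | _ => 0)
    ⟨fun j ↦ by simpa using hξ, by simpa using hξ⟩
  have hdist := hy.abs_sub_le S₀ le_rfl l
  have hy₀ := (norm_le_pi_norm (y S₀) (Fin.castLE M.le l)).trans
    (hy.norm_le S₀ ⟨hy.nonneg, by linarith [hy.nonneg, hspeed.1, hspeed.2]⟩)
  rw [neg_zero, Real.exp_zero, abs_sub_comm] at hdist
  rw [Real.norm_eq_abs] at hy₀
  linarith [abs_sub_abs_le_abs_sub (z l) (y S₀ (Fin.castLE M.le l))]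

lemma IsRun.isTracking {x : ℝ → Fin n → ℝ} {T : ℝ} {s : ℝ → Var m n d → ℝ} (h : M.IsRun x T s)
    {z : Fin m → ℝ} {K N B κ L S : ℝ} (happrox : M.Approximates xb z K (Real.exp (-N)) B κ L S)
    (hK : 0 ≤ K) (hN : 0 ≤ N) (hB : 0 ≤ B) {T₀ : ℝ} (hT₀ : 0 ≤ T₀)
    (hleaks : ∀ t, T₀ ≤ t → ∀ s, ‖s‖ ≤ 1 + t → M.LeaksSmall t s) {a H : ℝ} (ha : 0 ≤ a)
    (hx : ∀ t ∈ Icc a T, ‖x t - xb‖ ≤ Real.exp (-N) / 2)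
    (hH : a + (T₀ + 200000 * (B + 1) + 2 * d * (2 * B + 3) ^ 2 + 4 * N + 2 * ‖xb‖ + 20) ≤ H) :
    M.IsTracking x T s H xb z K (Real.exp (-N)) B κ L S := by
  have hxb := norm_nonneg xb
  have hd : 0 ≤ 2 * d * (2 * B + 3) ^ 2 := by positivity
  have hξ := Real.exp_pos (-N)
  have hinp (t : ℝ) (ht : t ∈ Icc H T) (j : Fin n) : |s t (.inp j) - xb j| ≤ Real.exp (-N) := by
    have hsub (u : ℝ) (hu : u ∈ Icc (t - 2) t) : 0 ≤ u ∧ u ∈ Icc a T :=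
      ⟨by linarith [hu.1, ht.1], by linarith [hu.1, ht.1], hu.2.trans ht.2⟩
    have hsq := IsPrimitiveOn.sq_sub_le (x := fun u ↦ x u j) (c := xb j)
      ((h.inp j).mono (by linarith [ht.1]) ht.2)
      (fun u hu ↦ (norm_le_pi_norm (x u - xb) j).trans (hx u (hsub u hu).2))
      (by linarith [Real.exp_le_one_iff.2 (neg_nonpos.2 hN)])
      (by linarith [norm_le_pi_norm xb j, Real.norm_eq_abs (xb j), ht.1])
      fun u hu ↦ (h.mono (hsub u hu).2.2).sq_inp_le (hsub u hu).1 j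
    have hsmall := four_mul_sq_mul_exp_le (t := t) hN (by linarith [ht.1])
    exact abs_le_of_sq_le_sq (by nlinarith) hξ.le
  exact {
    toIsRun := h
    ten_le := by linarith
    leaksSmall := fun t ht ↦ hleaks t (by linarith [ht.1]) _
      ((h.mono ht.2).norm_le (by linarith [ht.1]))
    toApproximates := happrox
    abs_inp_sub_le := hinp
    exp_le := by
      have hle : Real.exp (-(5 * H)) ≤ Real.exp (-(N + 1)) := Real.exp_le_exp.2 (by linarith)
      linarith [exp_neg_add_one_le_div_two N]
    dim_mul_le := by nlinarith
    mul_abs_le := fun l ↦ by linarith [happrox.abs_le hK hξ.le l] }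

theorem exists_abs_out_sub_le (M : Machine m n d) (hcoeff : 0 ≤ M.coeff) {C : ℝ} (hC : 0 ≤ C)
    (r : ℕ) : ∃ C' : ℝ, 0 ≤ C' ∧ ∃ r' : ℕ, ∀ xb z, (∀ μ, 0 ≤ μ → ∃ y S₀, M.Solves xb z C r μ y S₀) →
      ∀ x T s, M.IsRun x T s → ∀ a μ W, 0 ≤ a → 0 ≤ μ → W = C' * (245 + ‖xb‖ + 20 * μ) ^ r' →
        (∀ t ∈ Icc a T, ‖x t - xb‖ ≤ Real.exp (-W)) → ∀ u, a + W ≤ u → u ≤ T →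
          ∀ l, |s u (.out l) - z l| ≤ Real.exp (-μ) := by
  obtain ⟨B, N, hB, hN, happrox⟩ := M.exists_approximates hcoeff hC r
  obtain ⟨T₀, hT₀, hleaks⟩ := ((eventually_ge_atTop 0).and M.eventually_leaksSmall).exists
  have hconst (c : ℝ) : IsPolyBounded (fun R : ℝ ↦ R) fun _ ↦ c := .const c
  obtain ⟨C', hC', r', hdelay⟩ : IsPolyBounded (fun R ↦ R) fun R ↦ T₀ + 200000 * (B R + 1) +
      2 * d * (2 * B R + 3) ^ 2 + 4 * N R + 80002 * R + 22 :=
    (((((hconst T₀).add ((hconst _).mul (hB.add (hconst 1)))).add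
      ((hconst _).mul ((((hconst 2).mul hB).add (hconst 3)).pow 2))).add
      ((hconst 4).mul hN)).add ((hconst 80002).mul .self)).add (hconst 22)
  refine ⟨C', hC', r', fun xb z hsolves x T s h a μ W ha hμ hW hx u hu huT ↦ ?_⟩
  have hxb := norm_nonneg xb
  set R := 1 + ‖xb‖ + (243 + 20 * μ) with hR
  obtain ⟨hBR, hNR, happrox⟩ := happrox R (by linarith)
  obtain ⟨κ, L, S, happrox⟩ := happrox xb z _ (by linarith) hR.ge fun μ hμ ↦ hsolves μ hμ.1
  have hRW := (le_abs_self _).trans (hdelay R)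
  rw [abs_of_nonneg (by linarith : 0 ≤ R), show 1 + R = 245 + ‖xb‖ + 20 * μ by rw [hR]; ring,
    ← hW] at hRW
  have hd : 0 ≤ 2 * d * (2 * B R + 3) ^ 2 := by positivity
  have hexp : Real.exp (-W) ≤ Real.exp (-N R) / 2 :=
    (Real.exp_le_exp.2 (by linarith)).trans (exp_neg_add_one_le_div_two (N R))
  exact (h.isTracking happrox (by linarith) hNR hBR hT₀ hleaks ha
    (fun t ht ↦ (hx t ht).trans hexp) (H := a + W - 2) (by linarith)).abs_out_sub_le hμ
    (by linarith) le_rfl (by linarith) huT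

end Machine

end Parameters

section Encoding

section ClockField

variable {A B : Type*} [CommRing A] [Algebra ℝ A] [CommRing B] [Algebra ℝ B]

/-- The polynomial vector field of the clock signals. Like `Machine.field`, it makes sense in any
real algebra. -/
def clockField (c : Clock → A) : Clock → A
  | .time => 1
  | .invOneAddSq => -2 * c .time * c .invOneAddSq ^ 2
  | .cosSq => -((4 * Real.pi) • (c .time * c .sinSq))
  | .sinSq => (4 * Real.pi) • (c .time * c .cosSq)
  | .reset => gateField (c .reset) (c .cosSq) (2 * c .time * c .sinSq)
  | .sim => gateField (c .sim) (c .sinSq) (-(2 * c .time * c .cosSq))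
  | .amp => gateField (c .amp) (-c .cosSq) (-(2 * c .time * c .sinSq))
  | .sample => gateField (c .sample) (c .sin) (-c .cos)
  | .sin => (2 * Real.pi) • c .cos
  | .cos => -((2 * Real.pi) • c .sin)
  | .accuracy => -(scaleField * c .accuracy * (1 - c .accuracy))
  | .precision => scaleField * (1 - c .accuracy)
where
  /-- The derivative of `gate (θ t) t` when `g` is its value, `C = cos (2πθ)` and
  `S = θ' sin (2πθ)`. -/
  gateField (g C S : A) : A :=
    g * (1 - g) * (32 * c .time * (C - algebraMap ℝ A (4 / 5)) -
      (32 * Real.pi) • (c .time ^ 2 * S))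
  /-- The value of `scaleDeriv`. -/
  scaleField : A :=
    (1 / 10000 : ℝ) • (c .sin + (2 * Real.pi) • (c .time * c .cos))

lemma map_clockField (φ : A →ₐ[ℝ] B) (c : Clock → A) (i : Clock) :
    φ (clockField c i) = clockField (fun j ↦ φ (c j)) i := by
  cases i <;> simp [clockField, clockField.gateField, clockField.scaleField, map_ofNat]

lemma Machine.map_field {m n d : ℕ} (M : Machine m n d) (φ : A →ₐ[ℝ] B) (c : Clock → A)
    (x : Fin n → A) (s : Var m n d → A) (v : Var m n d) :
    φ (M.field c x s v) = M.field (fun i ↦ φ (c i)) (fun j ↦ φ (x j)) (fun w ↦ φ (s w)) v := by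
  have haeval {σ : Type} (g : σ → A) (P : MvPolynomial σ ℝ) :
      φ (MvPolynomial.aeval g P) = MvPolynomial.aeval (fun i ↦ φ (g i)) P :=
    MvPolynomial.comp_aeval_apply g φ P
  have hinitial (k : Fin d) : φ (M.initial (fun j ↦ s (.inp j)) (s .level) k) =
      M.initial (fun j ↦ φ (s (.inp j))) (φ (s .level)) k := by
    rw [initial, haeval, initial]
    congr 2
    exact Fin.comp_snoc φ _ _
  have hestimate (k : Fin d) : φ (M.estimate s k) = M.estimate (fun w ↦ φ (s w)) k := by
    simp only [estimate, map_add, hinitial]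
  cases v <;> simp [field, rate, speed, haeval, hestimate, map_ofNat]

end ClockField

lemma two_pi_mul_sub_quarter (θ : ℝ) :
    2 * Real.pi * (θ - 1 / 4) = 2 * Real.pi * θ - Real.pi / 2 := by ring

lemma two_pi_mul_sub_half (θ : ℝ) : 2 * Real.pi * (θ - 1 / 2) = 2 * Real.pi * θ - Real.pi := by
  ring

lemma hasDerivAt_gate_gateField {θ : ℝ → ℝ} {θ' t C S : ℝ} (hθ : HasDerivAt θ θ' t)
    (hC : Real.cos (2 * Real.pi * θ t) = C) (hS : θ' * Real.sin (2 * Real.pi * θ t) = S) :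
    HasDerivAt (fun t ↦ gate (θ t) t)
      (clockField.gateField (clock t) (gate (θ t) t) C S) t := by
  subst hC hS
  refine (hasDerivAt_gate hθ).congr_deriv ?_
  simp only [clockField.gateField, clock, Algebra.algebraMap_self, RingHom.id_apply, smul_eq_mul]
  ring

lemma scaleField_clock (t : ℝ) : clockField.scaleField (clock t) = scaleDeriv t := by
  simp only [clockField.scaleField, clock, scaleDeriv, smul_eq_mul, mul_assoc]

lemma eval_clockField {σ : Type*} (a : σ → ℝ) (c : Clock → MvPolynomial σ ℝ) (i : Clock) :
    MvPolynomial.eval a (clockField c i) =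
      clockField (fun j ↦ MvPolynomial.eval a (c j)) i := by
  simpa only [MvPolynomial.aeval_eq_eval] using map_clockField (MvPolynomial.aeval a) c i

lemma hasDerivAt_clock (t : ℝ) : HasDerivAt clock (clockField (clock t)) t := by
  refine hasDerivAt_pi.2 fun c ↦ ?_
  cases c
  case time => exact hasDerivAt_id' t
  case invOneAddSq =>
    exact (((hasDerivAt_sq t).const_add 1).inv (by positivity)).congr_deriv
      (by simp only [clockField, clock]; field_simp)
  case cosSq =>
    exact (hasDerivAt_cos_two_pi_mul (hasDerivAt_sq t)).congr_deriv
      (by simp only [clockField, clock, smul_eq_mul]; ring)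
  case sinSq =>
    exact (hasDerivAt_sin_two_pi_mul (hasDerivAt_sq t)).congr_deriv
      (by simp only [clockField, clock, smul_eq_mul]; ring)
  case reset => exact hasDerivAt_gate_gateField (hasDerivAt_sq t) rfl rfl
  case sim =>
    refine hasDerivAt_gate_gateField ((hasDerivAt_sq t).sub_const (1 / 4)) ?_ ?_ <;>
      rw [two_pi_mul_sub_quarter]
    · exact Real.cos_sub_pi_div_two _
    · rw [Real.sin_sub_pi_div_two, mul_neg]; rfl
  case amp =>
    refine hasDerivAt_gate_gateField ((hasDerivAt_sq t).sub_const (1 / 2)) ?_ ?_ <;>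
      rw [two_pi_mul_sub_half]
    · exact Real.cos_sub_pi _
    · rw [Real.sin_sub_pi, mul_neg]; rfl
  case sample =>
    refine hasDerivAt_gate_gateField ((hasDerivAt_id' t).sub_const (1 / 4)) ?_ ?_ <;>
      rw [two_pi_mul_sub_quarter]
    · exact Real.cos_sub_pi_div_two _
    · rw [Real.sin_sub_pi_div_two, one_mul]; rfl
  case sin =>
    exact (hasDerivAt_sin_two_pi_mul (hasDerivAt_id' t)).congr_deriv
      (by simp only [clockField, clock, smul_eq_mul, mul_one])
  case cos =>
    exact (hasDerivAt_cos_two_pi_mul (hasDerivAt_id' t)).congr_deriv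
      (by simp only [clockField, clock, smul_eq_mul, mul_one])
  case accuracy =>
    exact (hasDerivAt_accuracy t).congr_deriv (by rw [← scaleField_clock]; rfl)
  case precision =>
    exact (hasDerivAt_precision t).congr_deriv (by rw [← scaleField_clock]; rfl)

lemma abs_clock_le {t : ℝ} (ht : 0 ≤ t) (c : Clock) : |clock t c| ≤ 1 + t := by
  suffices |clock t c| ≤ 1 ∨ |clock t c| ≤ 1 + t from this.elim (fun h ↦ by linarith) id
  have hgate (θ : ℝ) : |gate θ t| ≤ 1 := (abs_of_pos (gate_pos θ t)).trans_le (gate_le_one θ t)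
  cases c
  case time => exact .inr (by rw [clock, abs_of_nonneg ht]; linarith)
  case invOneAddSq =>
    rw [clock, abs_of_pos (by positivity)]
    exact .inl (inv_le_one_of_one_le₀ (le_add_of_nonneg_right (sq_nonneg t)))
  case cosSq | cos => exact .inl (Real.abs_cos_le_one _)
  case sinSq | sin => exact .inl (Real.abs_sin_le_one _)
  case reset | sim | amp | sample => exact .inl (hgate _)
  case accuracy => exact .inl ((abs_of_pos (accuracy_pos t)).trans_le (accuracy_le_one t))
  case precision =>
    exact .inr ((abs_of_nonneg (precision_nonneg t)).trans_le (precision_le_one_add ht))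

namespace Machine

variable {m n d : ℕ} (M : Machine m n d)

lemma IsRun.of_hasDerivAt {M : Machine m n d} {x : ℝ → Fin n → ℝ} {T : ℝ}
    {s : ℝ → Var m n d → ℝ} (hx : ContinuousOn x (Ici 0)) (init : s 0 = 0)
    (hs : ∀ t, 0 ≤ t → HasDerivAt s (M.field (clock t) (x t) (s t)) t) : M.IsRun x T s where
  init := init
  continuousOn_input := hx.mono Icc_subset_Ici_self
  isPrimitiveOn := .of_hasDerivAt fun t ht ↦ hs t ht.1

lemma eval_field {σ : Type*} (a : σ → ℝ) (c : Clock → MvPolynomial σ ℝ)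
    (x : Fin n → MvPolynomial σ ℝ) (s : Var m n d → MvPolynomial σ ℝ) (v : Var m n d) :
    MvPolynomial.eval a (M.field c x s v) =
      M.field (fun i ↦ MvPolynomial.eval a (c i)) (fun j ↦ MvPolynomial.eval a (x j))
        (fun w ↦ MvPolynomial.eval a (s w)) v := by
  simpa only [MvPolynomial.aeval_eq_eval] using M.map_field (MvPolynomial.aeval a) c x s v

lemma exists_forall_hasDerivAt_field {x : ℝ → Fin n → ℝ} (hx : ContinuousOn x (Ici 0)) :
    ∃ s : ℝ → Var m n d → ℝ, s 0 = 0 ∧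
      ∀ t, 0 ≤ t → HasDerivAt s (M.field (clock t) (x t) (s t)) t := by
  let P (v : Var m n d) : MvPolynomial (Var m n d ⊕ (Clock ⊕ Fin n)) ℝ :=
    M.field (fun c ↦ .X (.inr (.inl c))) (fun j ↦ .X (.inr (.inr j))) (fun w ↦ .X (.inl w)) v
  have heval (t : ℝ) (s : Var m n d → ℝ) (v : Var m n d) :
      MvPolynomial.eval (Sum.elim s (Sum.elim (clock t) (x t))) (P v) =
        M.field (clock t) (x t) s v := by
    simp [P, eval_field]
  have hcont : ContinuousOn (fun t ↦ Sum.elim (clock t) (x t)) (Ici 0) :=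
    continuousOn_pi.2 <| Sum.rec (fun c ↦ (continuous_clock c).continuousOn)
      fun j ↦ continuousOn_pi.1 hx j
  simpa only [heval] using exists_forall_hasDerivAt_eval P hcont fun T hT s init hs ↦
    IsRun.norm_le (M := M) (x := x)
      ⟨init, hx.mono Icc_subset_Ici_self, by simpa only [heval] using hs⟩ hT

end Machine

end Encoding

section Classes

variable {m n : ℕ} {dom : Set (Fin n → ℝ)} {f : (Fin n → ℝ) → Fin m → ℝ}

lemma exists_eval_le_mul_sum_pow {σ : Type*} [Fintype σ] (P : MvPolynomial σ ℝ) :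
    ∃ C : ℝ, 0 ≤ C ∧ ∃ r : ℕ, ∀ v : σ → ℝ, (∀ i, 0 ≤ v i) →
      MvPolynomial.eval v P ≤ C * (1 + ∑ i, v i) ^ r := by
  obtain ⟨C, hC, r, hP⟩ := exists_norm_eval_le fun _ : Unit ↦ P
  refine ⟨C, hC, r, fun v hv ↦ ?_⟩
  have hnorm : ‖v‖ ≤ ∑ i, v i :=
    (pi_norm_le_iff_of_nonneg (Finset.sum_nonneg fun i _ ↦ hv i)).2 fun i ↦
      (Real.norm_of_nonneg (hv i)).trans_le
        (Finset.single_le_sum (fun j _ ↦ hv j) (Finset.mem_univ i))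
  calc MvPolynomial.eval v P ≤ ‖fun _ : Unit ↦ MvPolynomial.eval v P‖ :=
        (le_abs_self _).trans (norm_le_pi_norm (fun _ : Unit ↦ MvPolynomial.eval v P) ())
    _ ≤ C * (1 + ‖v‖) ^ r := hP v
    _ ≤ C * (1 + ∑ i, v i) ^ r := by gcongr

lemma exists_machine_of_awp (hf : AWP dom f) :
    ∃ (d : ℕ) (M : Machine m n d) (C : ℝ) (r : ℕ), 0 ≤ M.coeff ∧ 0 ≤ C ∧
      ∀ xb ∈ dom, ∀ μ, 0 ≤ μ → ∃ y S₀, M.Solves xb (f xb) C r μ y S₀ := by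
  obtain ⟨Ω, Υ, ⟨⟨PΩ, hPΩ⟩, hΩ⟩, ⟨⟨PΥ, hPΥ⟩, -⟩, d, hd, p, q, hy⟩ := hf
  obtain ⟨CΩ, hCΩ, rΩ, hle_Ω⟩ := exists_eval_le_mul_sum_pow PΩ
  obtain ⟨C, hC, r, hle_Υ⟩ := exists_eval_le_mul_sum_pow PΥ
  refine ⟨d, ⟨hd, p, q, 128 * CΩ * 4 ^ rΩ, rΩ⟩, C, r, by positivity, hC, fun xb hxb μ hμ ↦ ?_⟩
  obtain ⟨y, hy0, hy', hlim, hbound⟩ := hy xb hxb μ hμ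
  have hnonneg := norm_nonneg xb
  refine ⟨y, Ω ‖xb‖ μ, hΩ _ _ hnonneg hμ, ?_, fun τ hτ ↦ ?_, fun τ hτ ↦ ?_, fun τ hτ l ↦ ?_, ?_⟩
  · exact hy0.trans (funext fun k ↦ by rw [Machine.initial, MvPolynomial.aeval_eq_eval])
  · simp only [MvPolynomial.aeval_eq_eval]
    exact hy' τ hτ
  · refine (hbound τ hτ).trans ?_
    have hle := hle_Υ ![‖xb‖, μ, τ] (by simp [Fin.forall_fin_succ, hnonneg, hμ, hτ])
    simpa [hPΥ, Fin.sum_univ_three] using hle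
  · exact (norm_le_pi_norm _ l).trans (hlim τ ((hΩ _ _ hnonneg hμ).trans hτ) hτ)
  · have hle := hle_Ω ![‖xb‖, μ] (by simp [Fin.forall_fin_succ, hnonneg, hμ])
    rw [← hPΩ, Fin.sum_univ_two] at hle
    simp only [Matrix.cons_val_zero, Matrix.cons_val_one] at hle
    nlinarith [mul_le_mul_of_nonneg_left hle (by positivity : (0 : ℝ) ≤ 128 * 4 ^ rΩ)]

lemma isPolyFun2_one_add : IsPolyFun2 fun _ t ↦ 1 + t :=
  ⟨⟨1 + .X 1, by simp⟩, fun _ _ _ ht ↦ add_nonneg zero_le_one ht⟩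

lemma isPolyFun2_mul_pow {C α γ : ℝ} (hC : 0 ≤ C) (hα : 0 ≤ α) (hγ : 0 ≤ γ) (r : ℕ) :
    IsPolyFun2 fun a b ↦ C * (α + a + γ * b) ^ r :=
  ⟨⟨.C C * (.C α + .X 0 + .C γ * .X 1) ^ r, by simp⟩, fun a b ha hb ↦ by positivity⟩

lemma exists_equiv_fin_extending {S : Type*} [Finite S] {out : Fin m → S}
    (hout : Function.Injective out) :
    ∃ (N : ℕ) (hN : m ≤ N) (e : S ≃ Fin N), ∀ i, e.symm (Fin.castLE hN i) = out i := by
  classical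
  have := Fintype.ofFinite S
  let e : S ≃ Fin (m + Fintype.card ↑(Set.range out)ᶜ) :=
    (Equiv.Set.sumCompl (Set.range out)).symm.trans
      (((Equiv.ofInjective out hout).symm.sumCongr (Fintype.equivFin _)).trans finSumFinEquiv)
  refine ⟨_, Nat.le_add_right _ _, e, fun i ↦ ?_⟩
  change e.symm (Fin.castAdd _ i) = out i
  simp [e]

lemma aop_of_fintype {S : Type*} [Fintype S] {out : Fin m → S} (hout : Function.Injective out)
    (P : S → MvPolynomial (S ⊕ Fin n) ℝ) (w₀ : S → ℝ) {Υ Ω Λ : ℝ → ℝ → ℝ} (hΥ : IsPolyFun2 Υ)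
    (hΩ : IsPolyFun2 Ω) (hΛ : IsPolyFun2 Λ) {δ : ℝ} (hδ : 0 ≤ δ)
    (hw : ∀ x : ℝ → Fin n → ℝ, ContinuousOn x (Ici 0) → ∃ w : ℝ → S → ℝ, w 0 = w₀ ∧
      (∀ t, 0 ≤ t → HasDerivAt w (fun v ↦ MvPolynomial.eval (Sum.elim (w t) (x t)) (P v)) t) ∧
      (∀ t, 0 ≤ t → ‖w t‖ ≤ Υ (sSup ((fun u ↦ ‖x u‖) '' Icc (max 0 (t - δ)) t)) t) ∧
      ∀ a b, 0 ≤ a → a ≤ b → ∀ xb ∈ dom, ∀ μ, 0 ≤ μ →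
        (∀ t ∈ Icc a b, ‖x t - xb‖ ≤ Real.exp (-Λ ‖xb‖ μ)) →
          ∀ u, a + Ω ‖xb‖ μ ≤ u → u ≤ b → ‖(fun i ↦ w u (out i)) - f xb‖ ≤ Real.exp (-μ)) :
    AOP dom f := by
  obtain ⟨N, hN, e, he⟩ := exists_equiv_fin_extending hout
  let ι : S ⊕ Fin n → Fin (N + n) := Sum.elim (Fin.castAdd n ∘ e) (Fin.natAdd N)
  refine ⟨Υ, Ω, Λ, hΥ, hΩ, hΛ, δ, hδ, N, hN, fun j ↦ MvPolynomial.rename ι (P (e.symm j)),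
    w₀ ∘ e.symm, fun x hx ↦ ?_⟩
  obtain ⟨w, hw0, hw', hbound, hlim⟩ := hw x hx
  refine ⟨fun t ↦ w t ∘ e.symm, congrArg (· ∘ e.symm) hw0, fun t ht ↦ ?_, fun t ht ↦ ?_, ?_⟩
  · have happend : Fin.append (w t ∘ e.symm) (x t) ∘ ι = Sum.elim (w t) (x t) := by
      ext (v | j) <;> simp [ι]
    simp only [MvPolynomial.eval_rename, happend]
    exact hasDerivAt_pi.2 fun j ↦ hasDerivAt_pi.1 (hw' t ht) (e.symm j)
  · exact ((pi_norm_le_iff_of_nonneg (norm_nonneg _)).2 fun j ↦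
      norm_le_pi_norm (w t) (e.symm j)).trans (hbound t ht)
  · simpa only [Function.comp_apply, he] using hlim

namespace Machine

variable {d : ℕ} (M : Machine m n d)

/-- The autonomous polynomial system combining the clock and the machine; the last summand of the
variables is the input. -/
def system : Clock ⊕ Var m n d → MvPolynomial ((Clock ⊕ Var m n d) ⊕ Fin n) ℝ :=
  Sum.elim (clockField fun c ↦ .X (.inl (.inl c)))
    (M.field (fun c ↦ .X (.inl (.inl c))) (fun j ↦ .X (.inr j)) fun v ↦ .X (.inl (.inr v)))

lemma hasDerivAt_system {x : ℝ → Fin n → ℝ} {s : ℝ → Var m n d → ℝ} {t : ℝ}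
    (hs : HasDerivAt s (M.field (clock t) (x t) (s t)) t) :
    HasDerivAt (fun t ↦ Sum.elim (clock t) (s t)) (fun v ↦
      MvPolynomial.eval (Sum.elim (Sum.elim (clock t) (s t)) (x t)) (M.system v)) t := by
  refine hasDerivAt_pi.2 (Sum.rec (fun c ↦ ?_) fun v ↦ ?_)
  · simpa [system, eval_clockField] using hasDerivAt_pi.1 (hasDerivAt_clock t) c
  · simpa [system, eval_field] using hasDerivAt_pi.1 hs v

lemma norm_sumElim_clock_le {x : ℝ → Fin n → ℝ} {s : ℝ → Var m n d → ℝ} {t : ℝ}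
    (h : M.IsRun x t s) (ht : 0 ≤ t) : ‖Sum.elim (clock t) (s t)‖ ≤ 1 + t :=
  (pi_norm_le_iff_of_nonneg (by positivity)).2 <|
    Sum.rec (abs_clock_le ht) fun v ↦ (norm_le_pi_norm (s t) v).trans (h.norm_le ht)

end Machine

end Classes

end OnlineSimulation

open OnlineSimulation

/-- **Weak computability implies online computability: `AWP ⊆ AOP`.** -/
theorem awp_subset_aop {n m : ℕ} (dom : Set (Fin n → ℝ))
    (f : (Fin n → ℝ) → (Fin m → ℝ)) (hf : AWP dom f) : AOP dom f := by
  obtain ⟨d, M, C, r, hcoeff, hC, hsolves⟩ := exists_machine_of_awp hf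
  obtain ⟨C', hC', r', hconv⟩ := M.exists_abs_out_sub_le hcoeff hC r
  have hpoly : IsPolyFun2 fun a b ↦ C' * (245 + a + 20 * b) ^ r' :=
    isPolyFun2_mul_pow hC' (by norm_num) (by norm_num) r'
  refine aop_of_fintype (Sum.inr_injective.comp fun _ _ ↦ Var.out.inj) M.system
    (Sum.elim (clock 0) 0) isPolyFun2_one_add hpoly hpoly le_rfl fun x hx ↦ ?_
  obtain ⟨s, hs0, hs⟩ := M.exists_forall_hasDerivAt_field hx
  have hrun (T : ℝ) : M.IsRun x T s := .of_hasDerivAt hx hs0 hs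
  refine ⟨fun t ↦ Sum.elim (clock t) (s t), congrArg (Sum.elim (clock 0)) hs0,
    fun t ht ↦ M.hasDerivAt_system (hs t ht), fun t ht ↦ M.norm_sumElim_clock_le (hrun t) ht, ?_⟩
  intro a b ha _ xb hxb μ hμ hclose u hu hub
  exact (pi_norm_le_iff_of_nonneg (Real.exp_pos _).le).2 fun i ↦
    hconv xb (f xb) (hsolves xb hxb) x b s (hrun b) a μ _ ha hμ rfl hclose u hu hub i
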